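/- For every f ∈ 𝒮 with logarithmic coefficients γ_n, the sharp inequality ∑_{n=1}^∞ (1/(n+1)) |γ_n|² ≤ π²/6 − 1 holds; the inequality is strict unless f(z) = z/(1−e^{iθ}z)² for some θ ∈ ℝ. -/

import Mathlib

/-!
For `f ∈ 𝒮` and the Koebe function `k(z) = z / (1 - z)²`, whose logarithmic coefficients are `1 / n`,
the proof compares the second moments of `log |f(z) / z|` and `log |k(z) / z|` on every circle
`|z| = s < 1`.

*Star functions.* Let `u` be the Green function of the image domain with pole at `0`, extended by
`0`, and `v` that of the slit plane `k(𝔻)`. In logarithmic coordinates `(x, φ) ↦ e^{x + iφ}`,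
Baernstein's star function `u*(x, θ) = sup_{|E| = 2θ} ∫_E u(x, φ) dφ` is subharmonic, whereas
`∫_{-θ}^{θ} v(x, φ) dφ` is harmonic. The maximum principle gives `u* ≤ ∫_{-θ}^{θ} v`
(`starFun_le_symmInt`), hence domination of the integrals of `(u - c)⁺` over circles by those of
`(v - c)⁺` (`integral_posPart_le`). Here `f` is first replaced by `f(ρ z) / ρ` with `ρ < 1`,
which is univalent on a larger disk. Since `(u - log (1 / s))⁺` is the counting function of the
disk of radius `s`, Cartan's identity (`IsUnivalent.cartan`), which is Jensen's formula averaged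
over a circle of values, translates this into domination of the means of `(log |f| - t)⁺` by those
of `(log |k| - t)⁺` on `|z| = s` (`IsUnivalent.baernstein`). By Jensen's formula the means of
`log |f|` and `log |k|` agree, so their second moments are ordered
(`IsUnivalent.integral_log_sq_le`).

*The inequality.* By Parseval's formula this says `∑ |γ_n|² s^{2n} ≤ ∑ s^{2n} / n²` for all `s < 1`
(`sum_le_radialSum`). Integration against `2 s ds` produces the weights `1 / (n + 1)` and the
constant `∑ 1 / (n² (n + 1)) = π² / 6 - 1` (`tsum_le_of_radialSum_le`).

*Equality.* Equality forces the two radial sums to coincide, hence `|γ_1| = 1`. The counting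
function grows by at most `log (1 / s)` between the radii `s` and `1`; with Cartan's and Jensen's
formulas this shows that the mean of `1 / |f|` over circles decreases with the radius
(`IsUnivalent.integral_inv_norm_le`). In terms of `(z / f(z))^{1/2} = ∑ β_n zⁿ`, the sum
`∑ |β_n|² r^{2n - 1}` does not increase (`area_le`). As `|β_0| = |β_1| = 1`, all further `β_n`
vanish, and `f` is a rotation of the Koebe function (`eqOn_of_norm_eq_one`).
-/

open Complex Metric Real

/-- The class `𝒮` of normalized univalent (analytic and injective) functions
on the unit disk. -/
def InClassS (f : ℂ → ℂ) : Prop :=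
  AnalyticOnNhd ℂ f (ball (0 : ℂ) 1) ∧ Set.InjOn f (ball (0 : ℂ) 1) ∧
    f 0 = 0 ∧ deriv f 0 = 1

/-- `γ` are the logarithmic coefficients of `f`: there is an analytic branch `g`
of `log (f z / z)` on the unit disk with `g 0 = 0` whose Taylor coefficients at `0`
are `2 * γ n` for `n ≥ 1`. -/
def IsLogCoeffs (f : ℂ → ℂ) (γ : ℕ → ℂ) : Prop :=
  ∃ g : ℂ → ℂ, AnalyticOnNhd ℂ g (ball (0 : ℂ) 1) ∧ g 0 = 0 ∧
    (∀ z ∈ ball (0 : ℂ) 1, z ≠ 0 → Complex.exp (g z) = f z / z) ∧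
    ∀ n : ℕ, 1 ≤ n → iteratedDeriv n g 0 = (n.factorial : ℂ) * (2 * γ n)

/-- `f` coincides on the unit disk with a rotation `z / (1 - e^{iθ} z)^2`
of the Koebe function. -/
def IsKoebeRotation (f : ℂ → ℂ) : Prop :=
  ∃ θ : ℝ, Set.EqOn f
    (fun z => z / (1 - Complex.exp (θ * Complex.I) * z) ^ 2) (ball (0 : ℂ) 1)

section

open MeasureTheory Set Filter Topology

/-! ### The star function -/

/-- An upper bound, for every level `c ≥ 0`, of the integral of `w` over a set of angles of measure at
most `2θ`. -/
noncomputable def levelBound (w : ℝ → ℝ) (θ c : ℝ) : ℝ :=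
  (∫ φ in (-π)..π, max (w φ - c) 0) + 2 * θ * c

/-- Baernstein's star function, the supremum of the integrals of `w ≥ 0` over sets of angles of measure
`2θ`. It is encoded by the dual formula, as the infimum of `levelBound` over the levels `c ≥ 0`. -/
noncomputable def starFun (w : ℝ → ℝ) (θ : ℝ) : ℝ :=
  ⨅ c : Set.Ici (0 : ℝ), levelBound w θ c

lemma levelBound_nonneg (w : ℝ → ℝ) {θ c : ℝ} (hθ : 0 ≤ θ) (hc : 0 ≤ c) :
    0 ≤ levelBound w θ c := by
  unfold levelBound
  have : 0 ≤ ∫ φ in (-π)..π, max (w φ - c) 0 :=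
    intervalIntegral.integral_nonneg (by linarith [Real.pi_pos]) (fun _ _ => le_max_right _ _)
  positivity

lemma bddBelow_levelBound (w : ℝ → ℝ) {θ : ℝ} (hθ : 0 ≤ θ) :
    BddBelow (range fun c : Set.Ici (0 : ℝ) => levelBound w θ c) :=
  ⟨0, by rintro _ ⟨c, rfl⟩; exact levelBound_nonneg w hθ c.2⟩

lemma starFun_le (w : ℝ → ℝ) {θ c : ℝ} (hθ : 0 ≤ θ) (hc : 0 ≤ c) :
    starFun w θ ≤ levelBound w θ c :=
  ciInf_le (bddBelow_levelBound w hθ) (⟨c, hc⟩ : Set.Ici (0 : ℝ))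

lemma le_starFun (w : ℝ → ℝ) {θ a : ℝ} (h : ∀ c, 0 ≤ c → a ≤ levelBound w θ c) :
    a ≤ starFun w θ :=
  le_ciInf fun c => h c c.2

lemma intervalIntegrable_unit {χ : ℝ → ℝ} (hm : Measurable χ) (h0 : ∀ φ, 0 ≤ χ φ)
    (h1 : ∀ φ, χ φ ≤ 1) (a b : ℝ) : IntervalIntegrable χ volume a b := by
  refine (intervalIntegrable_const (c := (1:ℝ))).mono_fun hm.aestronglyMeasurable ?_
  filter_upwards with φ
  rw [Real.norm_of_nonneg (h0 φ)]; simpa using h1 φ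

lemma intervalIntegrable_unit_mul {χ w : ℝ → ℝ} (hm : Measurable χ) (h0 : ∀ φ, 0 ≤ χ φ)
    (h1 : ∀ φ, χ φ ≤ 1) (hw : Continuous w) (a b : ℝ) :
    IntervalIntegrable (fun φ => χ φ * w φ) volume a b := by
  refine (hw.intervalIntegrable a b).mono_fun (hm.mul hw.measurable).aestronglyMeasurable ?_
  filter_upwards with φ
  rw [norm_mul, Real.norm_of_nonneg (h0 φ)]
  exact mul_le_of_le_one_left (norm_nonneg _) (h1 φ)

lemma integral_unit_mul_le {χ w : ℝ → ℝ} (hm : Measurable χ) (h0 : ∀ φ, 0 ≤ χ φ)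
    (h1 : ∀ φ, χ φ ≤ 1) (hw : Continuous w) (c : ℝ) :
    ∫ φ in (-π)..π, χ φ * w φ ≤
      (∫ φ in (-π)..π, max (w φ - c) 0) + (∫ φ in (-π)..π, χ φ) * c := by
  have hi := intervalIntegrable_unit hm h0 h1 (-π) π
  have hc : Continuous fun φ => max (w φ - c) 0 := by fun_prop
  rw [← intervalIntegral.integral_mul_const, ← intervalIntegral.integral_add
    (hc.intervalIntegrable _ _) (hi.mul_const c)]
  refine intervalIntegral.integral_mono_on (by linarith [Real.pi_pos])
    (intervalIntegrable_unit_mul hm h0 h1 hw _ _)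
    ((hc.intervalIntegrable _ _).add (hi.mul_const c)) fun φ _ => ?_
  have a0 := h0 φ
  have a1 := h1 φ
  rcases le_total (w φ - c) 0 with h | h
  · rw [max_eq_right h]; nlinarith
  · rw [max_eq_left h]; nlinarith

lemma integral_unit_mul_le_starFun {χ w : ℝ → ℝ} (hm : Measurable χ) (h0 : ∀ φ, 0 ≤ χ φ)
    (h1 : ∀ φ, χ φ ≤ 1) (hw : Continuous w) {θ : ℝ} (hθ : ∫ φ in (-π)..π, χ φ ≤ 2 * θ) :
    ∫ φ in (-π)..π, χ φ * w φ ≤ starFun w θ := by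
  refine le_starFun w fun c hc => ?_
  have := integral_unit_mul_le hm h0 h1 hw c
  unfold levelBound
  nlinarith

/-- A measurable, `2π`-periodic set of angles, encoded by its indicator function. -/
structure IsAngleSet (χ : ℝ → ℝ) : Prop where
  meas : Measurable χ
  zero_or_one : ∀ φ, χ φ = 0 ∨ χ φ = 1
  periodic : Function.Periodic χ (2 * π)

lemma IsAngleSet.nonneg {χ : ℝ → ℝ} (h : IsAngleSet χ) (φ : ℝ) : 0 ≤ χ φ := by
  rcases h.zero_or_one φ with h | h <;> rw [h]; norm_num

lemma IsAngleSet.le_one {χ : ℝ → ℝ} (h : IsAngleSet χ) (φ : ℝ) : χ φ ≤ 1 := by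
  rcases h.zero_or_one φ with h | h <;> rw [h]; norm_num

lemma integral_period_shift {g : ℝ → ℝ} (hg : Function.Periodic g (2 * π)) (h : ℝ) :
    ∫ φ in (-π)..π, g (φ + h) = ∫ φ in (-π)..π, g φ := by
  rw [intervalIntegral.integral_comp_add_right]
  have := hg.intervalIntegral_add_eq (-π + h) (-π)
  rw [show -π + h + 2 * π = π + h by ring, show -π + 2 * π = π by ring] at this
  exact this

/-- The pair inequality behind the subharmonicity of the star function. Suppose the set `χ` of measure
`2θ` ends at `b`: it contains an interval to the left of `b` and misses one to the right. Then the
translates of `χ` by `±h` differ on `(b - h, b + h)`, so that their union has measure at least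
`2(θ + h)` and their intersection at most `2(θ - h)`. -/
lemma star_pair_le {χ w : ℝ → ℝ} (hχ : IsAngleSet χ) (hw : Continuous w)
    (hwp : Function.Periodic w (2 * π)) {θ h b δ : ℝ}
    (hθ : ∫ φ in (-π)..π, χ φ = 2 * θ) (h0 : 0 ≤ h) (hδ : 2 * h < δ) (hπ : h ≤ π)
    (hl : ∀ φ ∈ Ioo (b - δ) b, χ φ = 1) (hr : ∀ φ ∈ Ioo b (b + δ), χ φ = 0) :
    ∫ φ in (-π)..π, χ φ * (w (φ + h) + w (φ - h)) ≤
      starFun w (θ + h) + starFun w (θ - h) := by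
  have hpi := Real.pi_pos
  have hneg : ∀ t : ℝ, Function.Periodic (fun φ => χ (φ + t)) (2 * π) := fun t φ => by
    simp only; rw [show φ + 2 * π + t = φ + t + 2 * π by ring]; exact hχ.periodic _
  have hmt : ∀ t : ℝ, Measurable fun φ => χ (φ + t) := fun t =>
    hχ.meas.comp (measurable_id.add_const t)
  -- union and intersection of the two translates
  set m : ℝ → ℝ := fun φ => max (χ (φ + h)) (χ (φ + -h)) with hm
  set n : ℝ → ℝ := fun φ => min (χ (φ + h)) (χ (φ + -h)) with hn
  have m_meas : Measurable m := (hmt h).max (hmt (-h))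
  have n_meas : Measurable n := (hmt h).min (hmt (-h))
  have m0 : ∀ φ, 0 ≤ m φ := fun φ => (hχ.nonneg _).trans (le_max_left _ _)
  have m1 : ∀ φ, m φ ≤ 1 := fun φ => max_le (hχ.le_one _) (hχ.le_one _)
  have n0 : ∀ φ, 0 ≤ n φ := fun φ => le_min (hχ.nonneg _) (hχ.nonneg _)
  have n1 : ∀ φ, n φ ≤ 1 := fun φ => (min_le_left _ _).trans (hχ.le_one _)
  have mn : ∀ φ, m φ + n φ = χ (φ + h) + χ (φ + -h) := fun φ => max_add_min _ _
  have iI : ∀ t, IntervalIntegrable (fun φ => χ (φ + t)) volume (-π) π := fun t =>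
    intervalIntegrable_unit (hmt t) (fun _ => hχ.nonneg _) (fun _ => hχ.le_one _) _ _
  have iW : ∀ t s, IntervalIntegrable (fun φ => χ (φ + t) * w (φ + s)) volume (-π) π :=
    fun t s => intervalIntegrable_unit_mul (w := fun φ => w (φ + s)) (hmt t)
      (fun _ => hχ.nonneg _) (fun _ => hχ.le_one _) (by fun_prop) _ _
  have hshift : ∀ t, ∫ φ in (-π)..π, χ (φ + t) = 2 * θ := fun t => by
    rw [integral_period_shift hχ.periodic, hθ]
  have hMN : (∫ φ in (-π)..π, m φ) + ∫ φ in (-π)..π, n φ = 4 * θ := by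
    rw [← intervalIntegral.integral_add (intervalIntegrable_unit m_meas m0 m1 _ _)
      (intervalIntegrable_unit n_meas n0 n1 _ _)]
    simp_rw [mn]
    rw [intervalIntegral.integral_add (iI h) (iI (-h)), hshift, hshift]; ring
  have hLHS : ∫ φ in (-π)..π, χ φ * (w (φ + h) + w (φ - h)) =
      (∫ φ in (-π)..π, m φ * w φ) + ∫ φ in (-π)..π, n φ * w φ := by
    rw [← intervalIntegral.integral_add (intervalIntegrable_unit_mul m_meas m0 m1 hw _ _)
      (intervalIntegrable_unit_mul n_meas n0 n1 hw _ _)]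
    have e1 : ∀ φ, m φ * w φ + n φ * w φ = χ (φ + h) * w φ + χ (φ + -h) * w φ := fun φ => by
      rw [← add_mul, mn, add_mul]
    simp_rw [e1, mul_add]
    have j := fun t => iW t 0
    have j' := fun t => iW 0 t
    simp only [add_zero] at j j'
    rw [intervalIntegral.integral_add (j h) (j (-h))]
    simp_rw [sub_eq_add_neg]
    rw [intervalIntegral.integral_add (j' h) (j' (-h)), add_comm]
    have key : ∀ t, ∫ φ in (-π)..π, χ φ * w (φ + -t) = ∫ φ in (-π)..π, χ (φ + t) * w φ := by
      intro t
      have hp : Function.Periodic (fun φ => χ φ * w (φ + -t)) (2 * π) := fun φ => by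
        simp only
        rw [hχ.periodic, show φ + 2 * π + -t = φ + -t + 2 * π by ring, hwp]
      rw [← integral_period_shift hp t]
      simp
    rw [key h]
    have := key (-h)
    rw [neg_neg] at this
    rw [this]
  have hM : 2 * θ + 2 * h ≤ ∫ φ in (-π)..π, m φ := by
    have mper : Function.Periodic m (2 * π) := fun φ => by
      have e1 := hneg h φ
      have e2 := hneg (-h) φ
      simp only at e1 e2
      simp only [hm, e1, e2]
    have hP := mper.intervalIntegral_add_eq (-π) (b - π)
    have hQ := (hneg h).intervalIntegral_add_eq (-π) (b - π)
    rw [show -π + 2 * π = π by ring, show b - π + 2 * π = b + π by ring] at hP hQ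
    rw [hshift] at hQ
    rw [hP, hQ]
    have hind : ∫ φ in (b - π)..(b + π), (Ioc (b - h) (b + h)).indicator (fun _ => (1 : ℝ)) φ
        = 2 * h := by
      rw [intervalIntegral.integral_of_le (by linarith),
        integral_indicator measurableSet_Ioc, Measure.restrict_restrict measurableSet_Ioc,
        inter_eq_left.2 (Ioc_subset_Ioc (by linarith) (by linarith))]
      simp [Measure.real]
      rw [ENNReal.toReal_ofReal (by linarith)]; ring
    rw [← hind]
    have ii : IntervalIntegrable ((Ioc (b - h) (b + h)).indicator (fun _ => (1 : ℝ)))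
        volume (b - π) (b + π) :=
      intervalIntegrable_unit (measurable_const.indicator measurableSet_Ioc)
        (fun φ => indicator_nonneg (fun _ _ => zero_le_one) φ)
        (fun φ => indicator_le_self' (fun _ _ => zero_le_one) φ) _ _
    have ij : IntervalIntegrable (fun φ => χ (φ + h)) volume (b - π) (b + π) :=
      intervalIntegrable_unit (hmt h) (fun _ => hχ.nonneg _) (fun _ => hχ.le_one _) _ _
    rw [← intervalIntegral.integral_add ij ii]
    refine intervalIntegral.integral_mono_ae (by linarith) (ij.add ii)
      (intervalIntegrable_unit m_meas m0 m1 _ _) ?_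
    have hnull : ∀ᵐ φ : ℝ, φ ≠ b + h := by
      simp [ae_iff, measure_singleton]
    filter_upwards [hnull] with φ hφ
    by_cases hmem : φ ∈ Ioc (b - h) (b + h)
    · rw [indicator_of_mem hmem]
      have hlt : φ < b + h := lt_of_le_of_ne hmem.2 hφ
      have e1 : χ (φ + h) = 0 := hr _ ⟨by linarith [hmem.1], by linarith⟩
      have e2 : χ (φ + -h) = 1 := hl _ ⟨by linarith [hmem.1], by linarith⟩
      simp [hm, e1, e2]
    · rw [indicator_of_notMem hmem, add_zero]
      exact le_max_left _ _
  rw [hLHS]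
  set M := ∫ φ in (-π)..π, m φ
  set N := ∫ φ in (-π)..π, n φ
  have key : ∀ c₁, 0 ≤ c₁ → ∀ c₂, 0 ≤ c₂ → (∫ φ in (-π)..π, m φ * w φ) +
      ∫ φ in (-π)..π, n φ * w φ ≤ levelBound w (θ + h) c₁ + levelBound w (θ - h) c₂ := by
    intro c₁ hc₁ c₂ hc₂
    have a1 := integral_unit_mul_le m_meas m0 m1 hw c₁
    have a2 := integral_unit_mul_le n_meas n0 n1 hw c₂
    unfold levelBound
    rcases le_total c₁ c₂ with hc | hc
    · have e : N = 4 * θ - M := by linarith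
      rw [show (∫ φ in (-π)..π, n φ) = 4 * θ - M from e] at a2
      have : 0 ≤ (M - (2 * θ + 2 * h)) * (c₂ - c₁) :=
        mul_nonneg (by linarith) (by linarith)
      nlinarith
    · -- here the levels are in the wrong order, and the two translates are estimated separately
      have b1 := integral_unit_mul_le (χ := fun φ => χ (φ + h)) (hmt h) (fun _ => hχ.nonneg _)
        (fun _ => hχ.le_one _) hw c₁
      have b2 := integral_unit_mul_le (χ := fun φ => χ (φ + -h)) (hmt (-h)) (fun _ => hχ.nonneg _)
        (fun _ => hχ.le_one _) hw c₂
      have j := fun t => iW t 0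
      simp only [add_zero] at j
      have e : (∫ φ in (-π)..π, m φ * w φ) + ∫ φ in (-π)..π, n φ * w φ =
          (∫ φ in (-π)..π, χ (φ + h) * w φ) + ∫ φ in (-π)..π, χ (φ + -h) * w φ := by
        rw [← intervalIntegral.integral_add (intervalIntegrable_unit_mul m_meas m0 m1 hw _ _)
          (intervalIntegrable_unit_mul n_meas n0 n1 hw _ _),
          ← intervalIntegral.integral_add (j h) (j (-h))]
        refine intervalIntegral.integral_congr fun φ _ => ?_
        rw [← add_mul, mn, add_mul]
      rw [e]
      rw [hshift] at b1 b2
      nlinarith [mul_nonneg h0 (sub_nonneg.2 hc)]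
  rw [← sub_le_iff_le_add]
  refine le_starFun w fun c₁ hc₁ => ?_
  rw [sub_le_iff_le_add, ← sub_le_iff_le_add']
  refine le_starFun w fun c₂ hc₂ => ?_
  rw [sub_le_iff_le_add']
  exact key c₁ hc₁ c₂ hc₂

/-! ### Extremal sets -/

/-- A real-analytic function has a constant sign on each side of a point. -/
lemma AnalyticAt.sign_right {g : ℝ → ℝ} {b : ℝ} (hg : AnalyticAt ℝ g b) :
    ((∀ᶠ t in 𝓝[>] b, 0 < g t) ∨ ∀ᶠ t in 𝓝[>] b, g t ≤ 0) ∧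
    ((∀ᶠ t in 𝓝[<] b, 0 < g t) ∨ ∀ᶠ t in 𝓝[<] b, g t ≤ 0) := by
  by_cases hz : ∀ᶠ t in 𝓝 b, g t = 0
  · have : ∀ᶠ t in 𝓝 b, g t ≤ 0 := hz.mono fun t h => h.le
    exact ⟨Or.inr (nhdsWithin_le_nhds this), Or.inr (nhdsWithin_le_nhds this)⟩
  obtain ⟨n, h, hh, hb, he⟩ := hg.exists_eventuallyEq_pow_smul_nonzero_iff.2 hz
  simp only [smul_eq_mul] at he
  rcases lt_or_gt_of_ne hb with hb | hb
  · have hs : ∀ᶠ t in 𝓝 b, h t < 0 := hh.continuousAt.eventually_lt continuousAt_const hb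
    constructor
    · right
      filter_upwards [nhdsWithin_le_nhds he, nhdsWithin_le_nhds hs, self_mem_nhdsWithin]
        with t h1 h2 h3
      have : 0 < t - b := sub_pos.2 h3
      rw [h1]; exact (mul_neg_of_pos_of_neg (by positivity) h2).le
    · rcases Nat.even_or_odd n with hn | hn
      · right
        filter_upwards [nhdsWithin_le_nhds he, nhdsWithin_le_nhds hs] with t h1 h2
        rw [h1]; exact mul_nonpos_of_nonneg_of_nonpos (hn.pow_nonneg _) h2.le
      · left
        filter_upwards [nhdsWithin_le_nhds he, nhdsWithin_le_nhds hs, self_mem_nhdsWithin]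
          with t h1 h2 h3
        rw [h1]; exact mul_pos_of_neg_of_neg (hn.pow_neg (sub_neg.2 h3)) h2
  · have hs : ∀ᶠ t in 𝓝 b, 0 < h t := continuousAt_const.eventually_lt hh.continuousAt hb
    constructor
    · left
      filter_upwards [nhdsWithin_le_nhds he, nhdsWithin_le_nhds hs, self_mem_nhdsWithin]
        with t h1 h2 h3
      have : 0 < t - b := sub_pos.2 h3
      rw [h1]; positivity
    · rcases Nat.even_or_odd n with hn | hn
      · left
        filter_upwards [nhdsWithin_le_nhds he, nhdsWithin_le_nhds hs, self_mem_nhdsWithin]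
          with t h1 h2 h3
        rw [h1]; exact mul_pos (hn.pow_pos (sub_neg.2 h3).ne) h2
      · right
        filter_upwards [nhdsWithin_le_nhds he, nhdsWithin_le_nhds hs, self_mem_nhdsWithin]
          with t h1 h2 h3
        rw [h1]; exact (mul_neg_of_neg_of_pos (hn.pow_neg (sub_neg.2 h3)) h2).le

/-- `w` is, near each point of the closure of its positivity set, the positive part of a
real-analytic function. -/
def IsPosPartAnalytic (w : ℝ → ℝ) : Prop :=
  ∀ φ₀, (∃ᶠ φ in 𝓝 φ₀, 0 < w φ) →
    ∃ a : ℝ → ℝ, AnalyticAt ℝ a φ₀ ∧ ∀ᶠ φ in 𝓝 φ₀, w φ = max (a φ) 0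

/-- On each side of a point, `w` lies either above the level `c` or below it. -/
lemma IsPosPartAnalytic.side {w : ℝ → ℝ} (hw : IsPosPartAnalytic w) {c : ℝ} (hc : 0 ≤ c) (b : ℝ) :
    ((∀ᶠ t in 𝓝[>] b, c < w t) ∨ ∀ᶠ t in 𝓝[>] b, w t ≤ c) ∧
    ((∀ᶠ t in 𝓝[<] b, c < w t) ∨ ∀ᶠ t in 𝓝[<] b, w t ≤ c) := by
  by_cases hf : ∃ᶠ φ in 𝓝 b, 0 < w φ
  · obtain ⟨a, ha, he⟩ := hw b hf
    obtain ⟨h1, h2⟩ := AnalyticAt.sign_right (ha.sub (analyticAt_const (v := c)))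
    have hgt : ∀ t, w t = max (a t) 0 → 0 < a t - c → c < w t := by
      intro t h3 h4
      rw [h3]; exact lt_max_of_lt_left (by simpa using h4)
    have hle : ∀ t, w t = max (a t) 0 → a t - c ≤ 0 → w t ≤ c := by
      intro t h3 h4
      rw [h3]; exact max_le (by simpa using h4) hc
    refine ⟨h1.imp ?_ ?_, h2.imp ?_ ?_⟩ <;> intro h <;>
      filter_upwards [nhdsWithin_le_nhds he, h] with t h3 h4
    exacts [hgt t h3 h4, hle t h3 h4, hgt t h3 h4, hle t h3 h4]
  · rw [not_frequently] at hf
    have : ∀ᶠ t in 𝓝 b, w t ≤ c := hf.mono fun t ht => (not_lt.1 ht).trans hc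
    exact ⟨Or.inr (nhdsWithin_le_nhds this), Or.inr (nhdsWithin_le_nhds this)⟩

lemma volume_null_of_isolated {S : Set ℝ} (h : ∀ x ∈ S, ∀ᶠ y in 𝓝[≠] x, y ∉ S) :
    volume S = 0 := by
  refine measure_null_of_locally_null S fun x hx => ⟨{x}, ?_, measure_singleton x⟩
  have := h x hx
  rw [eventually_nhdsWithin_iff] at this
  rw [mem_nhdsWithin_iff_eventually]
  filter_upwards [this] with y hy hyS
  by_contra hne
  exact hy hne hyS

lemma level_null_or_const {w : ℝ → ℝ} (hw : IsPosPartAnalytic w) (hc : Continuous w) {c : ℝ}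
    (hpos : 0 < c) : volume {φ | w φ = c} = 0 ∨ ∀ φ, w φ = c := by
  have hloc : ∀ φ, w φ = c → (∀ᶠ t in 𝓝 φ, w t = c) ∨ ∀ᶠ t in 𝓝[≠] φ, w t ≠ c := by
    intro φ hφ
    have h0 : ∀ᶠ t in 𝓝 φ, 0 < w t :=
      continuousAt_const.eventually_lt hc.continuousAt (by rw [hφ]; exact hpos)
    obtain ⟨a, ha, he⟩ := hw φ h0.frequently
    have hwa : AnalyticAt ℝ w φ := by
      refine ha.congr ?_
      filter_upwards [h0, he] with t h1 h2
      rcases le_total (a t) 0 with h3 | h3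
      · rw [max_eq_right h3] at h2; linarith
      · rw [max_eq_left h3] at h2; exact h2.symm
    exact hwa.eventually_eq_or_eventually_ne analyticAt_const
  set E := {φ | ∀ᶠ t in 𝓝 φ, w t = c}
  have hEo : IsOpen E := isOpen_setOfPred_eventually_nhds
  have hEc : IsClosed E := by
    rw [← closure_subset_iff_isClosed]
    intro φ hφ
    have hEs : E ⊆ {t | w t = c} := fun t ht => ht.self_of_nhds
    have hφc : w φ = c :=
      (closure_minimal hEs (isClosed_eq hc continuous_const)) hφ
    rcases hloc φ hφc with h | h
    · exact h
    · by_contra hn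
      rw [eventually_nhdsWithin_iff] at h
      obtain ⟨t, ht1, ht2⟩ := mem_closure_iff_frequently.1 hφ |>.and_eventually h |>.exists
      exact ht2 (fun e => hn (by rw [← show t = φ from e]; exact ht1)) (hEs ht1)
  rcases isClopen_iff.1 ⟨hEc, hEo⟩ with h | h
  · left
    refine volume_null_of_isolated fun φ hφ => ?_
    rcases hloc φ hφ with h1 | h1
    · have : φ ∈ E := h1
      rw [h] at this; exact this.elim
    · exact h1
  · right
    intro φ
    have : φ ∈ E := by rw [h]; trivial
    exact this.self_of_nhds

/-- A superlevel set whose complement is not null has a right end point. -/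
lemma exists_boundary_point {w : ℝ → ℝ} (hw : IsPosPartAnalytic w) (hcont : Continuous w)
    (hper : Function.Periodic w (2 * π)) {c : ℝ} (hc : 0 ≤ c) (h1 : ∃ p, c < w p)
    (h2 : volume {φ | w φ ≤ c} ≠ 0) :
    ∃ b δ, 0 < δ ∧ (∀ t ∈ Ioo (b - δ) b, c < w t) ∧ ∀ t ∈ Ioo b (b + δ), w t ≤ c := by
  suffices h : ∃ b, (∀ᶠ t in 𝓝[<] b, c < w t) ∧ ∀ᶠ t in 𝓝[>] b, w t ≤ c by
    obtain ⟨b, hl, hr⟩ := h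
    obtain ⟨l, hl0, hl⟩ := mem_nhdsLT_iff_exists_Ioo_subset.1 hl
    obtain ⟨r, hr0, hr⟩ := mem_nhdsGT_iff_exists_Ioo_subset.1 hr
    simp only [mem_Iio, mem_Ioi] at hl0 hr0
    refine ⟨b, min (b - l) (r - b), lt_min (by linarith) (by linarith), fun t ht => hl ?_,
      fun t ht => hr ?_⟩
    · exact ⟨by linarith [ht.1, min_le_left (b - l) (r - b)], ht.2⟩
    · exact ⟨ht.1, by linarith [ht.2, min_le_right (b - l) (r - b)]⟩
  obtain ⟨q, hq, hqr⟩ : ∃ q, w q ≤ c ∧ ∀ᶠ t in 𝓝[>] q, w t ≤ c := by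
    by_contra hno'
    have hno : ∀ q, w q ≤ c → ¬ ∀ᶠ t in 𝓝[>] q, w t ≤ c := fun q h1 h2 => hno' ⟨q, h1, h2⟩
    refine h2 (volume_null_of_isolated fun q hq => ?_)
    have hr : ∀ᶠ t in 𝓝[>] q, c < w t :=
      ((hw.side hc q).1).resolve_right (fun h => hno q hq h)
    have hl : ∀ᶠ t in 𝓝[<] q, c < w t := by
      refine ((hw.side hc q).2).resolve_right fun h => ?_
      obtain ⟨l, hl0, hl⟩ := mem_nhdsLT_iff_exists_Ioo_subset.1 h
      simp only [mem_Iio] at hl0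
      have hm : (l + q) / 2 ∈ Ioo l q := ⟨by linarith, by linarith⟩
      exact hno _ (hl hm) (nhdsWithin_le_nhds (mem_of_superset (Ioo_mem_nhds hm.1 hm.2) hl))
    rw [← Iio_union_Ioi, nhdsWithin_union, eventually_sup]
    exact ⟨hl.mono fun t ht => not_le.2 ht, hr.mono fun t ht => not_le.2 ht⟩
  obtain ⟨p, hpq, hp⟩ : ∃ p < q, c < w p := by
    obtain ⟨p, hp⟩ := h1
    obtain ⟨n, hn⟩ := exists_nat_gt ((p - q) / (2 * π))
    refine ⟨p - n * (2 * π), ?_, by rwa [hper.sub_nat_mul_eq]⟩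
    rw [div_lt_iff₀ (by positivity)] at hn
    linarith
  set S := {t ∈ Icc p q | c < w t} with hS
  have hpS : p ∈ S := ⟨⟨le_rfl, hpq.le⟩, hp⟩
  have hbdd : BddAbove S := ⟨q, fun t ht => ht.1.2⟩
  set b := sSup S with hb
  have hbq : b ≤ q := csSup_le ⟨p, hpS⟩ fun t ht => ht.1.2
  have hpb : p ≤ b := le_csSup hbdd hpS
  have hafter : ∀ t, b < t → t ≤ q → w t ≤ c := by
    intro t h1 h2
    by_contra hcon
    exact absurd (le_csSup hbdd (show t ∈ S from ⟨⟨by linarith, h2⟩, not_le.1 hcon⟩)) (not_le.2 h1)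
  have hwb : w b ≤ c := by
    by_contra hcon
    have hlt : b < q := lt_of_le_of_ne hbq (fun e => hcon (by rw [e]; exact hq))
    have : ∀ᶠ t in 𝓝 b, c < w t :=
      continuousAt_const.eventually_lt hcont.continuousAt (not_le.1 hcon)
    have h3 : ∀ᶠ t in 𝓝[>] b, c < w t := nhdsWithin_le_nhds this
    obtain ⟨t, ht1, ht2⟩ := (h3.and (eventually_mem_set.2 (Ioo_mem_nhdsGT hlt))).exists
    exact absurd (hafter t ht2.1 ht2.2.le) (not_le.2 ht1)
  refine ⟨b, ((hw.side hc b).2).resolve_right fun h => ?_, ?_⟩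
  · obtain ⟨l, hl0, hl⟩ := mem_nhdsLT_iff_exists_Ioo_subset.1 h
    obtain ⟨t, ht, hlt⟩ := exists_lt_of_lt_csSup ⟨p, hpS⟩ hl0
    have htb : t ≤ b := le_csSup hbdd ht
    rcases htb.lt_or_eq with h5 | h5
    · exact absurd (hl ⟨hlt, h5⟩) (not_le.2 ht.2)
    · exact absurd hwb (not_le.2 (h5 ▸ ht.2))
  · rcases hbq.lt_or_eq with h | h
    · filter_upwards [Ioo_mem_nhdsGT h] with t ht using hafter t ht.1 ht.2.le
    · rw [h]; exact hqr

/-- Indicator of a superlevel set. -/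
noncomputable def superInd (w : ℝ → ℝ) (c φ : ℝ) : ℝ := if c < w φ then 1 else 0

lemma isAngleSet_superInd {w : ℝ → ℝ} (hcont : Continuous w)
    (hper : Function.Periodic w (2 * π)) (c : ℝ) : IsAngleSet (superInd w c) where
  meas := Measurable.ite (measurableSet_lt measurable_const hcont.measurable)
    measurable_const measurable_const
  zero_or_one φ := by unfold superInd; split_ifs <;> simp
  periodic φ := by unfold superInd; rw [hper]

lemma integral_superInd {w : ℝ → ℝ} (hcont : Continuous w) (c : ℝ) :
    ∫ φ in (-π)..π, superInd w c φ = (volume.restrict (Ioc (-π) π)).real {φ | c < w φ} := by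
  rw [intervalIntegral.integral_of_le (by linarith [Real.pi_pos])]
  have : superInd w c = {φ | c < w φ}.indicator (fun _ => 1) := by
    ext φ; simp [superInd, indicator]
  rw [this, integral_indicator (measurableSet_lt measurable_const hcont.measurable)]
  simp [Measure.real]

lemma integral_superInd_mul {w : ℝ → ℝ} (hcont : Continuous w)
    (hper : Function.Periodic w (2 * π)) (c : ℝ) :
    ∫ φ in (-π)..π, superInd w c φ * w φ =
      (∫ φ in (-π)..π, max (w φ - c) 0) + (∫ φ in (-π)..π, superInd w c φ) * c := by
  have hA := isAngleSet_superInd hcont hper c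
  have hi := intervalIntegrable_unit hA.meas hA.nonneg hA.le_one (-π) π
  have hc : Continuous fun φ => max (w φ - c) 0 := by fun_prop
  rw [← intervalIntegral.integral_mul_const, ← intervalIntegral.integral_add
    (hc.intervalIntegrable _ _) (hi.mul_const c)]
  refine intervalIntegral.integral_congr fun φ _ => ?_
  simp only [superInd]
  split_ifs with h
  · rw [max_eq_left (by linarith)]; ring
  · rw [max_eq_right (by linarith)]; ring

/-- Either a smaller angle already gives the value of the star function at `θ`, or that value is
attained by a set of measure `2θ` with a right end point. The first alternative occurs when `w > 0`
only on a set of measure less than `2θ`; otherwise a superlevel set is extremal, unless `w` is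
constant, when an arc will do. -/
lemma exists_extremal_set {w : ℝ → ℝ} (hw : IsPosPartAnalytic w) (hcont : Continuous w)
    (hper : Function.Periodic w (2 * π)) {θ : ℝ} (hθ : 0 < θ) (hθπ : θ < π) :
    (∃ θ', 0 ≤ θ' ∧ θ' < θ ∧ starFun w θ ≤ starFun w θ') ∨
    ∃ χ b δ, IsAngleSet χ ∧ ∫ φ in (-π)..π, χ φ = 2 * θ ∧ 0 < δ ∧
      (∀ t ∈ Ioo (b - δ) b, χ t = 1) ∧ (∀ t ∈ Ioo b (b + δ), χ t = 0) ∧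
      starFun w θ ≤ ∫ φ in (-π)..π, χ φ * w φ := by
  have hpi := Real.pi_pos
  set μ := (volume : Measure ℝ).restrict (Ioc (-π) π) with hμ
  have hμt : μ.real univ = 2 * π := by
    simp [hμ, Measure.real]; rw [ENNReal.toReal_ofReal (by linarith)]; ring
  -- a level whose superlevel set has exactly the right size yields the second alternative
  have finish : ∀ c, 0 ≤ c → μ.real {φ | c < w φ} = 2 * θ →
      ∃ χ b δ, IsAngleSet χ ∧ ∫ φ in (-π)..π, χ φ = 2 * θ ∧ 0 < δ ∧
      (∀ t ∈ Ioo (b - δ) b, χ t = 1) ∧ (∀ t ∈ Ioo b (b + δ), χ t = 0) ∧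
      starFun w θ ≤ ∫ φ in (-π)..π, χ φ * w φ := by
    intro c hc hm
    have hex : ∃ p, c < w p := by
      by_contra! h
      have : {φ | c < w φ} = ∅ := by ext φ; simpa using h φ
      rw [this] at hm; simp at hm; linarith
    have hnull : volume {φ | w φ ≤ c} ≠ 0 := by
      intro h
      have h' : μ {φ | w φ ≤ c} = 0 := le_antisymm ((Measure.restrict_le_self _).trans h.le) bot_le
      have h3 : ∀ᵐ φ ∂μ, c < w φ := by rw [ae_iff]; simpa using h'
      have h4 : μ {φ | c < w φ} = μ univ :=
        measure_congr (eventuallyEq_set.2 (h3.mono fun φ h => by simpa using h))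
      rw [Measure.real, h4, ← Measure.real, hμt] at hm
      linarith
    obtain ⟨b, δ, hδ, hl, hr⟩ := exists_boundary_point hw hcont hper hc hex hnull
    refine ⟨superInd w c, b, δ, isAngleSet_superInd hcont hper c, ?_, hδ, fun t ht => ?_,
      fun t ht => ?_, ?_⟩
    · rw [integral_superInd hcont, hm]
    · simp [superInd, hl t ht]
    · simp [superInd, hr t ht]
    · rw [integral_superInd_mul hcont hper, integral_superInd hcont, hm]
      exact starFun_le w hθ.le hc
  -- the lowest level whose superlevel set has measure at most `2θ`
  set A := {c : ℝ | 0 ≤ c ∧ μ.real {φ | c < w φ} ≤ 2 * θ} with hA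
  have hAne : A.Nonempty := by
    obtain ⟨C, hC⟩ := hper.compact_of_continuous (by positivity) hcont |>.bddAbove
    refine ⟨max C 0, le_max_right _ _, ?_⟩
    have : {φ | max C 0 < w φ} = ∅ := by
      ext φ; simp only [mem_ofPred_eq, mem_empty_iff_false, iff_false, not_lt]
      exact (hC (mem_range_self φ)).trans (le_max_left _ _)
    rw [this]; simp; positivity
  have hAb : BddBelow A := ⟨0, fun c hc => hc.1⟩
  set c := sInf A with hcdef
  have hc0 : 0 ≤ c := le_csInf hAne fun a ha => ha.1
  have hup : ∀ d, c < d → μ.real {φ | d < w φ} ≤ 2 * θ := by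
    intro d hd
    obtain ⟨a, ha, had⟩ := exists_lt_of_csInf_lt hAne hd
    exact (measureReal_mono fun φ (h : d < w φ) => show a < w φ from had.trans h).trans ha.2
  have hm : μ.real {φ | c < w φ} ≤ 2 * θ := by
    have e : {φ | c < w φ} = ⋃ n : ℕ, {φ | c + 1 / ((n : ℝ) + 1) < w φ} := by
      ext φ
      simp only [mem_ofPred_eq, mem_iUnion]
      constructor
      · intro h
        obtain ⟨n, hn⟩ := exists_nat_one_div_lt (sub_pos.2 h)
        exact ⟨n, by linarith⟩
      · rintro ⟨n, hn⟩
        have : 0 < 1 / ((n : ℝ) + 1) := by positivity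
        linarith
    have hmono : Monotone fun n : ℕ => {φ | c + 1 / ((n : ℝ) + 1) < w φ} := by
      intro n k hnk φ hφ
      have := Nat.one_div_le_one_div (α := ℝ) hnk
      simp only [mem_ofPred_eq] at hφ ⊢
      linarith
    rw [Measure.real, e, hmono.measure_iUnion]
    refine ENNReal.toReal_le_of_le_ofReal (by positivity) (iSup_le fun n => ?_)
    have := hup (c + 1 / ((n : ℝ) + 1)) (by
      have : 0 < 1 / ((n : ℝ) + 1) := by positivity
      linarith)
    rw [ENNReal.le_ofReal_iff_toReal_le (measure_ne_top _ _) (by positivity)]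
    exact this
  rcases hm.lt_or_eq with hm | hm
  swap
  · exact Or.inr (finish c hc0 hm)
  rcases hc0.eq_or_lt with hc | hc
  · left
    refine ⟨μ.real {φ | c < w φ} / 2, by positivity, by linarith, ?_⟩
    have hA' := isAngleSet_superInd hcont hper c
    have h1 : ∫ φ in (-π)..π, superInd w c φ * w φ ≤ starFun w (μ.real {φ | c < w φ} / 2) :=
      integral_unit_mul_le_starFun hA'.meas hA'.nonneg hA'.le_one hcont
        (by rw [integral_superInd hcont]; linarith)
    refine le_trans ?_ h1
    rw [integral_superInd_mul hcont hper, ← hc]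
    simpa [levelBound] using starFun_le w hθ.le le_rfl
  · have hge : 2 * θ ≤ μ.real {φ | c ≤ w φ} := by
      have e : {φ | c ≤ w φ} = ⋂ n : ℕ, {φ | c - c / ((n : ℝ) + 1) < w φ} := by
        ext φ
        simp only [mem_ofPred_eq, mem_iInter]
        constructor
        · intro h n
          have : 0 < c / ((n : ℝ) + 1) := by positivity
          linarith
        · intro h
          by_contra! hcon
          obtain ⟨n, hn⟩ := exists_nat_one_div_lt (div_pos (sub_pos.2 hcon) hc)
          have h1 := h n
          rw [div_lt_div_iff₀ (by positivity) hc] at hn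
          have h2 : c / ((n : ℝ) + 1) < c - w φ := by
            rw [div_lt_iff₀ (by positivity)]; linarith
          linarith
      have hanti : Antitone fun n : ℕ => {φ | c - c / ((n : ℝ) + 1) < w φ} := by
        intro n k hnk φ hφ
        have := mul_le_mul_of_nonneg_left (Nat.one_div_le_one_div (α := ℝ) hnk) hc.le
        rw [mul_one_div, mul_one_div] at this
        simp only [mem_ofPred_eq] at hφ ⊢
        linarith
      rw [Measure.real, e, hanti.measure_iInter
        (fun n => (measurableSet_lt measurable_const hcont.measurable).nullMeasurableSet)
        ⟨0, measure_ne_top _ _⟩]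
      rw [← ENNReal.ofReal_le_iff_le_toReal
        (ne_top_of_le_ne_top (measure_ne_top μ _) (iInf_le _ (0 : ℕ)))]
      refine le_iInf fun n => ?_
      refine ENNReal.ofReal_le_of_le_toReal ?_
      by_contra! hcon
      have hn : c / ((n : ℝ) + 1) ≤ c := div_le_self hc.le (by
        have : (0:ℝ) ≤ n := by positivity
        linarith)
      have hn' : 0 < c / ((n : ℝ) + 1) := by positivity
      have : c - c / ((n : ℝ) + 1) ∈ A := ⟨by linarith, hcon.le⟩
      linarith [csInf_le hAb this]
    rcases level_null_or_const hw hcont hc with hnull | hconst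
    · exfalso
      have h' : μ {φ | w φ = c} = 0 := le_antisymm ((Measure.restrict_le_self _).trans hnull.le) bot_le
      have h3 : ∀ᵐ φ ∂μ, w φ ≠ c := by rw [ae_iff]; simpa using h'
      have h4 : μ {φ | c ≤ w φ} = μ {φ | c < w φ} :=
        measure_congr (eventuallyEq_set.2 <| h3.mono fun φ h => by
          simp only [mem_ofPred_eq]
          rw [lt_iff_le_and_ne]
          exact ⟨fun h1 => ⟨h1, h.symm⟩, fun h1 => h1.1⟩)
      rw [Measure.real, h4, ← Measure.real] at hge
      linarith
    · right
      -- for constant `w`, the arc `|φ| < θ`, as a superlevel set of the cosine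
      have hcos : Continuous fun φ : ℝ => Real.cos φ := Real.continuous_cos
      have hAs := isAngleSet_superInd (w := Real.cos) hcos Real.cos_periodic (Real.cos θ)
      have hval : ∀ φ, |φ| < π → (superInd Real.cos (Real.cos θ) φ = if |φ| < θ then 1 else 0) := by
        intro φ hφ
        unfold superInd
        congr 1
        rw [eq_iff_iff, ← Real.cos_abs φ]
        exact (Real.strictAntiOn_cos.lt_iff_gt ⟨hθ.le, hθπ.le⟩ ⟨abs_nonneg _, hφ.le⟩)
      have hintg : ∫ φ in (-π)..π, superInd Real.cos (Real.cos θ) φ = 2 * θ := by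
        rw [intervalIntegral.integral_of_le (by linarith)]
        have : ∫ φ in Ioc (-π) π, superInd Real.cos (Real.cos θ) φ =
            ∫ φ in Ioc (-π) π, (Ioo (-θ) θ).indicator (fun _ => (1:ℝ)) φ := by
          rw [integral_Ioc_eq_integral_Ioo, integral_Ioc_eq_integral_Ioo]
          refine setIntegral_congr_fun measurableSet_Ioo fun φ hφ => ?_
          rw [hval φ (abs_lt.2 hφ)]
          simp [indicator, abs_lt]
        rw [this, integral_indicator measurableSet_Ioo, Measure.restrict_restrict measurableSet_Ioo,
          inter_eq_left.2 (fun t (ht : t ∈ Ioo (-θ) θ) =>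
            show t ∈ Ioc (-π) π from ⟨by linarith [ht.1], by linarith [ht.2]⟩)]
        simp [Measure.real]
        rw [ENNReal.toReal_ofReal (by linarith)]; ring
      refine ⟨superInd Real.cos (Real.cos θ), θ, min θ (π - θ), hAs, hintg,
        lt_min hθ (by linarith), fun t ht => ?_, fun t ht => ?_, ?_⟩
      · have h1 : 0 < t := by linarith [ht.1, min_le_left θ (π - θ)]
        rw [hval t (by rw [abs_of_pos h1]; linarith [ht.2]), if_pos (by rw [abs_of_pos h1]; exact ht.2)]
      · have h1 : 0 < t := by linarith [ht.1]
        rw [hval t (by rw [abs_of_pos h1]; linarith [ht.2, min_le_right θ (π - θ)]),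
          if_neg (by rw [abs_of_pos h1]; linarith [ht.1])]
      · simp_rw [hconst]
        rw [intervalIntegral.integral_mul_const, hintg]
        simpa [levelBound, hconst] using starFun_le w hθ.le hc.le

/-! ### Comparison of star functions -/

/-- The properties of the positive part of a Green function, written in logarithmic coordinates
`(x, φ) ↦ e^{x + iφ}`, that drive the comparison of star functions. The last one reflects
that the domain contains the disk bounded by any circle in it around the origin. -/
structure IsGreenLike (u : ℝ → ℝ → ℝ) : Prop where
  cont : Continuous fun p : ℝ × ℝ => u p.1 p.2
  nonneg : ∀ x φ, 0 ≤ u x φ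
  periodic : ∀ x, Function.Periodic (u x) (2 * π)
  submean : ∀ x, ∃ ε₀ > 0, ∀ ε, 0 < ε → ε ≤ ε₀ → ∀ φ,
    2 * π * u x φ ≤ ∫ ψ in (-π)..π, u (x + ε * Real.cos ψ) (φ + ε * Real.sin ψ)
  analytic : ∀ x, IsPosPartAnalytic (u x)
  pole : ∀ ε > 0, ∃ X, ∀ x ≤ X, ∀ φ, |u x φ + x| ≤ ε
  support : ∃ X, ∀ x ≥ X, ∀ φ, u x φ = 0
  integral_of_pos : ∀ x, (∀ φ, 0 < u x φ) → ∫ φ in (-π)..π, u x φ ≤ -(2 * π * x)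

/-- The properties of the Green function of the Koebe slit domain, in logarithmic coordinates. -/
structure IsKoebeLike (v : ℝ → ℝ → ℝ) : Prop where
  cont : Continuous fun p : ℝ × ℝ => v p.1 p.2
  nonneg : ∀ x φ, 0 ≤ v x φ
  mean : ∀ x θ, 0 ≤ θ → θ < π → ∃ ε₀ > 0, ∀ ε, 0 < ε → ε ≤ ε₀ → ∀ φ, |φ| ≤ θ →
    2 * π * v x φ = ∫ ψ in (-π)..π, v (x + ε * Real.cos ψ) (φ + ε * Real.sin ψ)
  pole : ∀ ε > 0, ∃ X, ∀ x ≤ X, ∀ φ, |v x φ + x| ≤ ε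
  integral_ge : ∀ x, -(2 * π * x) ≤ ∫ φ in (-π)..π, v x φ

lemma IsGreenLike.cont_slice {u : ℝ → ℝ → ℝ} (hu : IsGreenLike u) (x : ℝ) : Continuous (u x) :=
  hu.cont.comp (by fun_prop : Continuous fun φ : ℝ => (x, φ))

lemma IsKoebeLike.cont_slice {u : ℝ → ℝ → ℝ} (hu : IsKoebeLike u) (x : ℝ) : Continuous (u x) :=
  hu.cont.comp (by fun_prop : Continuous fun φ : ℝ => (x, φ))

/-- Fubini's theorem for a mean of weighted integrals. -/
lemma swap_mean {χ : ℝ → ℝ} (hm : Measurable χ) (h0 : ∀ φ, 0 ≤ χ φ) (h1 : ∀ φ, χ φ ≤ 1)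
    {w : ℝ → ℝ → ℝ} (hw : Continuous fun p : ℝ × ℝ => w p.1 p.2) {a b : ℝ} (hab : a ≤ b) :
    IntervalIntegrable (fun ψ => ∫ φ in a..b, χ φ * w ψ φ) volume (-π) π ∧
    ∫ ψ in (-π)..π, ∫ φ in a..b, χ φ * w ψ φ = ∫ φ in a..b, χ φ * ∫ ψ in (-π)..π, w ψ φ := by
  have hpi : -π ≤ π := by linarith [Real.pi_pos]
  have hintg : Integrable (fun p : ℝ × ℝ => χ p.2 * w p.1 p.2)
      ((volume.restrict (Ioc (-π) π)).prod (volume.restrict (Ioc a b))) := by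
    have hwi : Integrable (fun p : ℝ × ℝ => w p.1 p.2)
        ((volume.restrict (Ioc (-π) π)).prod (volume.restrict (Ioc a b))) := by
      rw [Measure.prod_restrict]
      refine IntegrableOn.mono_set ?_ (prod_mono Ioc_subset_Icc_self Ioc_subset_Icc_self)
      exact hw.continuousOn.integrableOn_compact (isCompact_Icc.prod isCompact_Icc)
    refine hwi.mono ((hm.comp measurable_snd).mul hw.measurable).aestronglyMeasurable ?_
    filter_upwards with p
    rw [norm_mul, Real.norm_of_nonneg (h0 _)]
    exact mul_le_of_le_one_left (norm_nonneg _) (h1 _)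
  constructor
  · rw [intervalIntegrable_iff_integrableOn_Ioc_of_le hpi]
    have := hintg.integral_prod_left
    simp only at this
    simp_rw [intervalIntegral.integral_of_le hab]
    exact this
  · simp_rw [intervalIntegral.integral_of_le hab, intervalIntegral.integral_of_le hpi]
    rw [integral_integral_swap (f := fun ψ φ => χ φ * w ψ φ) hintg]
    simp_rw [integral_const_mul]

lemma continuous_levelBound {u : ℝ → ℝ → ℝ} (hu : Continuous fun p : ℝ × ℝ => u p.1 p.2) (c : ℝ) :
    Continuous fun p : ℝ × ℝ => levelBound (u p.1) p.2 c := by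
  unfold levelBound
  refine Continuous.add ?_ (by fun_prop)
  have h : Continuous fun q : (ℝ × ℝ) × ℝ => max (u q.1.1 q.2 - c) 0 := by
    have : Continuous fun q : (ℝ × ℝ) × ℝ => u q.1.1 q.2 :=
      hu.comp (by fun_prop : Continuous fun q : (ℝ × ℝ) × ℝ => (q.1.1, q.2))
    fun_prop
  exact intervalIntegral.continuous_parametric_intervalIntegral_of_continuous'
    (f := fun (p : ℝ × ℝ) φ => max (u p.1 φ - c) 0) h _ _

lemma continuous_symmInt {v : ℝ → ℝ → ℝ} (hv : Continuous fun p : ℝ × ℝ => v p.1 p.2) :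
    Continuous fun p : ℝ × ℝ => ∫ φ in (-p.2)..p.2, v p.1 φ := by
  have h : Continuous (Function.uncurry fun (p : ℝ × ℝ) φ => v p.1 φ) :=
    hv.comp (by fun_prop : Continuous fun q : (ℝ × ℝ) × ℝ => (q.1.1, q.2))
  have h1 := intervalIntegral.continuous_parametric_intervalIntegral_of_continuous (μ := volume)
    (a₀ := 0) h (continuous_snd)
  have h2 := intervalIntegral.continuous_parametric_intervalIntegral_of_continuous (μ := volume)
    (a₀ := 0) h (continuous_snd.neg)
  refine (h1.sub h2).congr fun p => ?_
  have hc : Continuous (v p.1) := hv.comp (by fun_prop : Continuous fun φ : ℝ => (p.1, φ))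
  exact intervalIntegral.integral_interval_sub_left (hc.intervalIntegrable _ _)
    (hc.intervalIntegrable _ _)

lemma symmInt_mono {v : ℝ → ℝ} (hv : Continuous v) (h0 : ∀ φ, 0 ≤ v φ) {a b : ℝ} (ha : 0 ≤ a)
    (hab : a ≤ b) : ∫ φ in (-a)..a, v φ ≤ ∫ φ in (-b)..b, v φ :=
  intervalIntegral.integral_mono_interval (by linarith) (by linarith) hab
    (Eventually.of_forall h0) (hv.intervalIntegrable _ _)

/-- The exact counterpart of `star_pair_le` for integrals over symmetric intervals. -/
lemma symmInt_pair {v : ℝ → ℝ} (hv : Continuous v) (θ h : ℝ) :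
    (∫ φ in (-(θ + h))..(θ + h), v φ) + ∫ φ in (-(θ - h))..(θ - h), v φ =
      (∫ φ in (-θ)..θ, v (φ + h)) + ∫ φ in (-θ)..θ, v (φ - h) := by
  rw [intervalIntegral.integral_comp_add_right, intervalIntegral.integral_comp_sub_right]
  have i := fun a b => hv.intervalIntegrable (μ := volume) a b
  have e1 := intervalIntegral.integral_add_adjacent_intervals (i (-(θ + h)) 0) (i 0 (θ + h))
  have e2 := intervalIntegral.integral_add_adjacent_intervals (i (-(θ - h)) 0) (i 0 (θ - h))
  have e3 := intervalIntegral.integral_add_adjacent_intervals (i (-θ + h) 0) (i 0 (θ + h))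
  have e4 := intervalIntegral.integral_add_adjacent_intervals (i (-θ - h) 0) (i 0 (θ - h))
  rw [← e1, ← e2, ← e3, ← e4, show -(θ + h) = -θ - h by ring, show -(θ - h) = -θ + h by ring]
  ring

/-- Second-order comparison at an interior point: the pair inequality for `u`, the pair identity
for `v`, and the (sub-)mean value properties, integrated over a small circle. -/
lemma interior_contradiction {u v : ℝ → ℝ → ℝ} (hu : IsGreenLike u) (hv : IsKoebeLike v)
    {x₀ θ₀ η C r : ℝ} (q : ℝ → ℝ)
    (hq : ∀ h, q (θ₀ + h) + q (θ₀ - h) = 2 * q θ₀ + 2 * η * h ^ 2)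
    (hθ : 0 < θ₀) (hθπ : θ₀ < π) (hη : 0 < η) (hr : 0 < r)
    (hmax : ∀ x θ, |x - x₀| ≤ r → |θ - θ₀| ≤ r →
      starFun (u x) θ - (∫ φ in (-θ)..θ, v x φ) + q θ ≤ C)
    {χ : ℝ → ℝ} {b δ : ℝ} (hχ : IsAngleSet χ) (hχi : ∫ φ in (-π)..π, χ φ = 2 * θ₀) (hδ : 0 < δ)
    (hl : ∀ t ∈ Ioo (b - δ) b, χ t = 1) (hrr : ∀ t ∈ Ioo b (b + δ), χ t = 0)
    (hC : C ≤ (∫ φ in (-π)..π, χ φ * u x₀ φ) - (∫ φ in (-θ₀)..θ₀, v x₀ φ) + q θ₀) : False := by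
  have hpi := Real.pi_pos
  obtain ⟨ε₁, hε₁, hsub⟩ := hu.submean x₀
  obtain ⟨ε₂, hε₂, hmean⟩ := hv.mean x₀ θ₀ hθ.le hθπ
  obtain ⟨ε, hε, hεr, hε1, hε2, hεδ, hεπ⟩ : ∃ ε > 0, ε ≤ r ∧ ε ≤ ε₁ ∧ ε ≤ ε₂ ∧ 2 * ε < δ ∧ ε ≤ π := by
    refine ⟨min (min r ε₁) (min ε₂ (min (δ / 3) π)), by positivity, ?_, ?_, ?_, ?_, ?_⟩
    · exact (min_le_left _ _).trans (min_le_left _ _)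
    · exact (min_le_left _ _).trans (min_le_right _ _)
    · exact (min_le_right _ _).trans (min_le_left _ _)
    · have : min (min r ε₁) (min ε₂ (min (δ / 3) π)) ≤ δ / 3 :=
        (min_le_right _ _).trans ((min_le_right _ _).trans (min_le_left _ _))
      linarith
    · exact (min_le_right _ _).trans ((min_le_right _ _).trans (min_le_right _ _))
  set U : ℝ → ℝ := fun ψ => ∫ φ in (-π)..π, χ φ * u (x₀ + ε * Real.cos ψ) (φ + ε * Real.sin ψ)
  set V : ℝ → ℝ := fun ψ => ∫ φ in (-θ₀)..θ₀, v (x₀ + ε * Real.cos ψ) (φ + ε * Real.sin ψ)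
  have hcu : Continuous fun p : ℝ × ℝ => u (x₀ + ε * Real.cos p.1) (p.2 + ε * Real.sin p.1) :=
    hu.cont.comp (by fun_prop :
      Continuous fun p : ℝ × ℝ => (x₀ + ε * Real.cos p.1, p.2 + ε * Real.sin p.1))
  have hcv : Continuous fun p : ℝ × ℝ => v (x₀ + ε * Real.cos p.1) (p.2 + ε * Real.sin p.1) :=
    hv.cont.comp (by fun_prop :
      Continuous fun p : ℝ × ℝ => (x₀ + ε * Real.cos p.1, p.2 + ε * Real.sin p.1))
  obtain ⟨hUi, hUs⟩ := swap_mean hχ.meas hχ.nonneg hχ.le_one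
    (w := fun ψ φ => u (x₀ + ε * Real.cos ψ) (φ + ε * Real.sin ψ)) hcu (a := -π) (b := π)
    (by linarith)
  obtain ⟨hVi, hVs⟩ := swap_mean (χ := fun _ => 1) measurable_const (by simp) (by simp)
    (w := fun ψ φ => v (x₀ + ε * Real.cos ψ) (φ + ε * Real.sin ψ)) hcv (a := -θ₀) (b := θ₀)
    (by linarith)
  simp only [one_mul] at hVi hVs
  change IntervalIntegrable U volume (-π) π at hUi
  change ∫ ψ in (-π)..π, U ψ = _ at hUs
  change IntervalIntegrable V volume (-π) π at hVi
  change ∫ ψ in (-π)..π, V ψ = _ at hVs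
  -- pointwise inequality in the direction `ψ`
  have hpt : ∀ ψ, U ψ + U (-ψ) ≤ 2 * C + (V ψ + V (-ψ)) - 2 * q θ₀
      - 2 * η * (ε * Real.sin ψ) ^ 2 := by
    intro ψ
    set x := x₀ + ε * Real.cos ψ with hx
    set h := ε * Real.sin ψ with hh
    have hcs : Continuous (u x) := hu.cont_slice x
    have hvs : Continuous (v x) := hv.cont_slice x
    have habs : |h| ≤ ε := by
      rw [hh, abs_mul, abs_of_pos hε]
      exact mul_le_of_le_one_right hε.le (Real.abs_sin_le_one ψ)
    have hxr : |x - x₀| ≤ r := by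
      rw [hx, add_sub_cancel_left, abs_mul, abs_of_pos hε]
      exact (mul_le_of_le_one_right hε.le (Real.abs_cos_le_one ψ)).trans hεr
    have hU : U ψ + U (-ψ) = ∫ φ in (-π)..π, χ φ * (u x (φ + h) + u x (φ - h)) := by
      simp only [U, Real.cos_neg, Real.sin_neg, mul_neg, ← sub_eq_add_neg]
      simp_rw [mul_add]
      exact (intervalIntegral.integral_add
        (intervalIntegrable_unit_mul (w := fun φ => u x (φ + h)) hχ.meas hχ.nonneg hχ.le_one
          (by fun_prop) _ _)
        (intervalIntegrable_unit_mul (w := fun φ => u x (φ - h)) hχ.meas hχ.nonneg hχ.le_one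
          (by fun_prop) _ _)).symm
    have hV : V ψ + V (-ψ) =
        (∫ φ in (-(θ₀ + h))..(θ₀ + h), v x φ) + ∫ φ in (-(θ₀ - h))..(θ₀ - h), v x φ := by
      rw [symmInt_pair hvs]
      simp only [V, Real.cos_neg, Real.sin_neg, mul_neg, ← sub_eq_add_neg]
      rfl
    have hstar : ∫ φ in (-π)..π, χ φ * (u x (φ + h) + u x (φ - h)) ≤
        starFun (u x) (θ₀ + h) + starFun (u x) (θ₀ - h) := by
      rcases le_total 0 h with h0 | h0
      · rw [abs_of_nonneg h0] at habs
        exact star_pair_le hχ hcs (hu.periodic x) hχi h0 (by linarith) (by linarith) hl hrr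
      · rw [abs_of_nonpos h0] at habs
        have := star_pair_le (h := -h) hχ hcs (hu.periodic x) hχi (by linarith) (by linarith)
          (by linarith) hl hrr
        simp only [← sub_eq_add_neg, sub_neg_eq_add] at this
        rw [add_comm (starFun _ _)]
        refine le_trans (le_of_eq ?_) this
        exact intervalIntegral.integral_congr fun φ _ => by ring
    have m1 := hmax x (θ₀ + h) hxr (by rw [add_sub_cancel_left]; exact habs.trans hεr)
    have m2 := hmax x (θ₀ - h) hxr (by
      rw [show θ₀ - h - θ₀ = -h by ring, abs_neg]; exact habs.trans hεr)
    have m3 := hq h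
    rw [hU, hV]
    linarith
  have hUn : IntervalIntegrable (fun ψ => U (-ψ)) volume (-π) π := by
    have := (hUi.comp_sub_left 0).symm; simpa using this
  have hVn : IntervalIntegrable (fun ψ => V (-ψ)) volume (-π) π := by
    have := (hVi.comp_sub_left 0).symm; simpa using this
  have hsin : IntervalIntegrable (fun ψ => 2 * η * (ε * Real.sin ψ) ^ 2) volume (-π) π :=
    (by fun_prop : Continuous fun ψ => 2 * η * (ε * Real.sin ψ) ^ 2).intervalIntegrable _ _
  have hcst : ∀ c : ℝ, IntervalIntegrable (fun _ : ℝ => c) volume (-π) π :=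
    fun c => intervalIntegrable_const
  have hI := intervalIntegral.integral_mono_on (by linarith : -π ≤ π) (hUi.add hUn)
    ((((hcst (2 * C)).add (hVi.add hVn)).sub (hcst (2 * q θ₀))).sub hsin)
    (fun ψ _ => hpt ψ)
  rw [intervalIntegral.integral_sub (((hcst (2 * C)).add (hVi.add hVn)).sub (hcst (2 * q θ₀))) hsin,
    intervalIntegral.integral_sub ((hcst (2 * C)).add (hVi.add hVn)) (hcst (2 * q θ₀)),
    intervalIntegral.integral_add (hcst (2 * C)) (hVi.add hVn),
    intervalIntegral.integral_add hVi hVn, intervalIntegral.integral_add hUi hUn,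
    intervalIntegral.integral_comp_neg U, intervalIntegral.integral_comp_neg V,
    neg_neg, hUs, hVs] at hI
  have hsin2 : ∫ ψ in (-π)..π, 2 * η * (ε * Real.sin ψ) ^ 2 = 2 * η * ε ^ 2 * π := by
    simp_rw [mul_pow, ← mul_assoc]
    rw [intervalIntegral.integral_const_mul, integral_sin_sq]
    simp
  have hUge : 2 * π * (∫ φ in (-π)..π, χ φ * u x₀ φ) ≤
      ∫ φ in (-π)..π, χ φ * ∫ ψ in (-π)..π, u (x₀ + ε * Real.cos ψ) (φ + ε * Real.sin ψ) := by
    rw [← intervalIntegral.integral_const_mul]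
    refine intervalIntegral.integral_mono_on (by linarith)
      ((intervalIntegrable_unit_mul hχ.meas hχ.nonneg hχ.le_one (hu.cont_slice x₀) _ _).const_mul _)
      (intervalIntegrable_unit_mul hχ.meas hχ.nonneg hχ.le_one ?_ _ _) fun φ _ => ?_
    · exact intervalIntegral.continuous_parametric_intervalIntegral_of_continuous'
        (f := fun φ ψ => u (x₀ + ε * Real.cos ψ) (φ + ε * Real.sin ψ))
        (hcu.comp continuous_swap) _ _
    · have := mul_le_mul_of_nonneg_left (hsub ε hε hε1 φ) (hχ.nonneg φ)
      linarith
  have hVeq : ∫ φ in (-θ₀)..θ₀, ∫ ψ in (-π)..π, v (x₀ + ε * Real.cos ψ) (φ + ε * Real.sin ψ) =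
      2 * π * ∫ φ in (-θ₀)..θ₀, v x₀ φ := by
    rw [← intervalIntegral.integral_const_mul]
    refine intervalIntegral.integral_congr fun φ hφ => ?_
    rw [uIcc_of_le (by linarith)] at hφ
    exact (hmean ε hε hε2 φ (abs_le.2 hφ)).symm
  rw [hsin2, hVeq] at hI
  simp only [intervalIntegral.integral_const, smul_eq_mul, sub_neg_eq_add] at hI
  have h1 : 0 < 2 * η * ε ^ 2 * π := by positivity
  have h2 := mul_le_mul_of_nonneg_left hC (by positivity : 0 ≤ 4 * π)
  nlinarith

/-- Maximum principle at the edge `θ = π`: if `w` vanishes somewhere, cutting out a short arc near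
the zero costs `starFun` less than `μ` per unit of angle. -/
lemma starFun_edge {w : ℝ → ℝ} (hc : Continuous w) (hper : Function.Periodic w (2 * π))
    (hnn : ∀ φ, 0 ≤ w φ) (hz : ∃ φ, w φ = 0) {μ : ℝ} (hμ : 0 < μ) :
    ∃ h, 0 < h ∧ h < π ∧ starFun w π ≤ starFun w (π - h) + 2 * h * μ := by
  have hpi := Real.pi_pos
  obtain ⟨φ₁, hφ₁, hw₁⟩ : ∃ φ ∈ Ioo (-π) π, w φ < μ := by
    obtain ⟨φ₀, h0⟩ := hz
    obtain ⟨φ₂, hφ₂, e⟩ := hper.exists_mem_Ico (by positivity) φ₀ (-π)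
    rw [show -π + 2 * π = π by ring] at hφ₂
    have hcl : φ₂ ∈ closure (Ioo (-π) π) := by
      rw [closure_Ioo (by linarith)]; exact ⟨hφ₂.1, hφ₂.2.le⟩
    have hop : IsOpen {φ | w φ < μ} := isOpen_lt hc continuous_const
    obtain ⟨φ, h1, h2⟩ := mem_closure_iff.1 hcl _ hop (show w φ₂ < μ by rw [← e, h0]; exact hμ)
    exact ⟨φ, h2, h1⟩
  have hev : ∀ᶠ φ in 𝓝 φ₁, φ ∈ Ioo (-π) π ∧ w φ < μ :=
    (eventually_mem_set.2 (Ioo_mem_nhds hφ₁.1 hφ₁.2)).and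
      (hc.continuousAt.eventually_lt continuousAt_const hw₁)
  obtain ⟨r, hr, hball⟩ := Metric.eventually_nhds_iff.1 hev
  have hsub : ∀ φ ∈ Ioc (φ₁ - r / 2) (φ₁ + r / 2), φ ∈ Ioo (-π) π ∧ w φ < μ := fun φ hφ =>
    hball (by rw [Real.dist_eq, abs_lt]; constructor <;> linarith [hφ.1, hφ.2])
  have hlo : -π ≤ φ₁ - r / 2 := by
    by_contra hcon
    have := (hsub (min (-π) φ₁) ⟨lt_min (by linarith) (by linarith),
      (min_le_right _ _).trans (by linarith)⟩).1.1
    exact absurd this (not_lt.2 (min_le_left _ _))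
  have hhi : φ₁ + r / 2 < π := (hsub _ ⟨by linarith, le_rfl⟩).1.2
  set I := Ioc (φ₁ - r / 2) (φ₁ + r / 2) with hI
  set χ : ℝ → ℝ := Iᶜ.indicator (fun _ => 1) with hχ
  have hIsub : I ⊆ Ioc (-π) π := Ioc_subset_Ioc hlo hhi.le
  have χm : Measurable χ := measurable_const.indicator measurableSet_Ioc.compl
  have χ0 : ∀ φ, 0 ≤ χ φ := fun φ => indicator_nonneg (fun _ _ => zero_le_one) φ
  have χ1 : ∀ φ, χ φ ≤ 1 := fun φ => indicator_le_self' (fun _ _ => zero_le_one) φ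
  have hIi : ∀ g : ℝ → ℝ, ∫ φ in (-π)..π, I.indicator g φ = ∫ φ in I, g φ := by
    intro g
    rw [intervalIntegral.integral_of_le (by linarith), integral_indicator measurableSet_Ioc,
      Measure.restrict_restrict measurableSet_Ioc, inter_eq_left.2 hIsub]
  have hvol : ∫ φ in I, (1 : ℝ) = r := by
    simp [hI, Measure.real, hr.le]
  have hdec : ∀ φ, w φ = χ φ * w φ + I.indicator w φ := by
    intro φ
    by_cases h : φ ∈ I
    · simp [hχ, h]
    · simp [hχ, h]
  have hdec1 : ∀ φ, (1 : ℝ) = χ φ + I.indicator (fun _ => 1) φ := by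
    intro φ
    by_cases h : φ ∈ I
    · simp [hχ, h]
    · simp [hχ, h]
  have hii : IntervalIntegrable (I.indicator fun _ => (1 : ℝ)) volume (-π) π :=
    intervalIntegrable_unit (measurable_const.indicator measurableSet_Ioc)
      (fun φ => indicator_nonneg (fun _ _ => zero_le_one) φ)
      (fun φ => indicator_le_self' (fun _ _ => zero_le_one) φ) _ _
  have hiw : IntervalIntegrable (I.indicator w) volume (-π) π := by
    have := intervalIntegrable_unit_mul (χ := I.indicator fun _ => (1 : ℝ))
      (measurable_const.indicator measurableSet_Ioc)
      (fun φ => indicator_nonneg (fun _ _ => zero_le_one) φ)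
      (fun φ => indicator_le_self' (fun _ _ => zero_le_one) φ) hc (-π) π
    convert this using 2 with φ
    by_cases h : φ ∈ I <;> simp [h]
  have hone : ∫ φ in (-π)..π, χ φ = 2 * π - r := by
    have e : ∫ φ in (-π)..π, (1 : ℝ) = (∫ φ in (-π)..π, χ φ) + r := by
      rw [← hvol, ← hIi, ← intervalIntegral.integral_add (intervalIntegrable_unit χm χ0 χ1 _ _) hii]
      exact intervalIntegral.integral_congr fun φ _ => hdec1 φ
    simp at e
    linarith
  have hww : ∫ φ in (-π)..π, w φ = (∫ φ in (-π)..π, χ φ * w φ) + ∫ φ in I, w φ := by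
    rw [← hIi, ← intervalIntegral.integral_add (intervalIntegrable_unit_mul χm χ0 χ1 hc _ _) hiw]
    exact intervalIntegral.integral_congr fun φ _ => hdec φ
  have hsmall : ∫ φ in I, w φ ≤ r * μ := by
    have : ∫ φ in I, w φ ≤ ∫ φ in I, μ := by
      refine setIntegral_mono_on ?_ ?_ measurableSet_Ioc fun φ hφ => (hsub φ hφ).2.le
      · exact (hc.intervalIntegrable _ _).1
      · exact (intervalIntegrable_const (a := φ₁ - r / 2) (b := φ₁ + r / 2)).1
    refine this.trans (le_of_eq ?_)
    rw [show (fun _ : ℝ => μ) = fun _ => 1 * μ by simp, integral_mul_const, hvol]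
  refine ⟨r / 2, by positivity, by linarith, ?_⟩
  have h1 := integral_unit_mul_le_starFun χm χ0 χ1 hc (θ := π - r / 2) (by linarith)
  have h2 := starFun_le w hpi.le le_rfl
  simp only [levelBound, sub_zero, mul_zero, add_zero] at h2
  simp_rw [max_eq_left (hnn _)] at h2
  linarith

/-- Baernstein's comparison: the star function of `u` is dominated by the symmetric integral
of `v`. -/
theorem starFun_le_symmInt {u v : ℝ → ℝ → ℝ} (hu : IsGreenLike u) (hv : IsKoebeLike v)
    (x₁ θ₁ : ℝ) (hθ₁ : 0 ≤ θ₁) (hθ₁π : θ₁ ≤ π) :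
    starFun (u x₁) θ₁ ≤ ∫ φ in (-θ₁)..θ₁, v x₁ φ := by
  have hpi := Real.pi_pos
  by_contra! hcon
  set d := starFun (u x₁) θ₁ - ∫ φ in (-θ₁)..θ₁, v x₁ φ with hd
  have hd0 : 0 < d := sub_pos.2 hcon
  set δ := d / (2 * π) with hδ
  have hδ0 : 0 < δ := by positivity
  have hδd : δ * π = d / 2 := by rw [hδ]; field_simp
  set η := δ / (4 * π) with hη
  have hη0 : 0 < η := by positivity
  have hηδ : η * (4 * π) = δ := by rw [hη]; field_simp
  -- a strictly decreasing and strictly convex perturbation, too small to affect positivity: the slope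
  -- excludes maxima at `θ = π` and where the star function is flat, the convexity those inside
  set q : ℝ → ℝ := fun θ => -(δ * θ) + η * θ ^ 2 with hq
  have hqdec : ∀ a b, 0 ≤ a → a ≤ b → b ≤ π → q b + δ / 2 * (b - a) ≤ q a := by
    intro a b ha hab hb
    simp only [hq]
    have h1 : 0 ≤ (b - a) * (δ / 2 - η * (a + b)) := by
      refine mul_nonneg (by linarith) ?_
      have : η * (a + b) ≤ η * (2 * π) := mul_le_mul_of_nonneg_left (by linarith) hη0.le
      linarith
    nlinarith
  have hq0 : ∀ a, 0 ≤ a → a ≤ π → q a ≤ 0 := by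
    intro a ha haπ
    have := hqdec 0 a le_rfl ha haπ
    have h2 : q 0 = 0 := by simp [hq]
    have h3 : 0 ≤ δ / 2 * (a - 0) := by rw [sub_zero]; positivity
    linarith
  have hε : 0 < d / (16 * π) := by positivity
  have hεd : d / (16 * π) * (16 * π) = d := by field_simp
  set ε := d / (16 * π)
  obtain ⟨Xu, hXu⟩ := hu.pole ε hε
  obtain ⟨Xv, hXv⟩ := hv.pole ε hε
  obtain ⟨Xs, hXs⟩ := hu.support
  set a := min (min Xu Xv) (min x₁ 0) - 1 with ha
  set b := max Xs x₁ + 1 with hb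
  have ha1 : a ≤ Xu := by linarith [min_le_left (min Xu Xv) (min x₁ 0), min_le_left Xu Xv]
  have ha2 : a ≤ Xv := by linarith [min_le_left (min Xu Xv) (min x₁ 0), min_le_right Xu Xv]
  have ha3 : a < x₁ := by linarith [min_le_right (min Xu Xv) (min x₁ 0), min_le_left x₁ 0]
  have ha4 : a < 0 := by linarith [min_le_right (min Xu Xv) (min x₁ 0), min_le_right x₁ 0]
  have hb1 : Xs ≤ b := by linarith [le_max_left Xs x₁]
  have hb2 : x₁ < b := by linarith [le_max_right Xs x₁]
  set K : Set (ℝ × ℝ) := Icc a b ×ˢ Icc 0 π with hK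
  have hKc : IsCompact K := isCompact_Icc.prod isCompact_Icc
  set W : ℝ × ℝ → ℝ := fun p => starFun (u p.1) p.2 + (-(∫ φ in (-p.2)..p.2, v p.1 φ) + q p.2)
    with hW
  have husc : UpperSemicontinuousOn W K := by
    refine UpperSemicontinuousOn.add ?_ ?_
    · exact upperSemicontinuousOn_ciInf (fun p hp => bddBelow_levelBound _ hp.2.1) fun c =>
        (continuous_levelBound hu.cont c).upperSemicontinuous.upperSemicontinuousOn K
    · refine Continuous.upperSemicontinuous ?_ |>.upperSemicontinuousOn K
      exact (continuous_symmInt hv.cont).neg.add (by simp only [hq]; fun_prop)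
  have h1K : (x₁, θ₁) ∈ K := ⟨⟨ha3.le, hb2.le⟩, hθ₁, hθ₁π⟩
  obtain ⟨⟨x₀, θ₀⟩, h0K, hmax⟩ := husc.exists_isMaxOn ⟨_, h1K⟩ hKc
  have hWpos : d / 2 ≤ W (x₀, θ₀) := by
    refine le_trans ?_ (hmax h1K)
    simp only [hW, hq]
    have : δ * θ₁ ≤ δ * π := mul_le_mul_of_nonneg_left hθ₁π hδ0.le
    have : 0 ≤ η * θ₁ ^ 2 := by positivity
    linarith
  obtain ⟨⟨hx0a, hx0b⟩, hθ0, hθ0π⟩ := h0K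
  simp only at hx0a hx0b hθ0 hθ0π
  have hus := hu.cont_slice x₀
  have hvs := hv.cont_slice x₀
  have hVnn : 0 ≤ ∫ φ in (-θ₀)..θ₀, v x₀ φ :=
    intervalIntegral.integral_nonneg (by linarith) fun φ _ => hv.nonneg _ _
  have hWdef : W (x₀, θ₀) = starFun (u x₀) θ₀ + (-(∫ φ in (-θ₀)..θ₀, v x₀ φ) + q θ₀) := rfl
  -- on the left edge both Green functions are close to `-x`
  rcases hx0a.eq_or_lt with e | hxa
  · have s1 := starFun_le (u x₀) hθ0 (c := -x₀) (by linarith)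
    unfold levelBound at s1
    have s2 : ∫ φ in (-π)..π, max (u x₀ φ - -x₀) 0 ≤ ∫ φ in (-π)..π, ε := by
      refine intervalIntegral.integral_mono_on (by linarith)
        ((by fun_prop : Continuous fun φ => max (u x₀ φ - -x₀) 0).intervalIntegrable _ _)
        intervalIntegrable_const fun φ _ => ?_
      have := (abs_le.1 (hXu x₀ (by linarith) φ)).2
      exact max_le (by linarith) hε.le
    have s3 : ∫ φ in (-θ₀)..θ₀, (-x₀ - ε) ≤ ∫ φ in (-θ₀)..θ₀, v x₀ φ := by
      refine intervalIntegral.integral_mono_on (by linarith) intervalIntegrable_const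
        (hvs.intervalIntegrable _ _) fun φ _ => ?_
      have := (abs_le.1 (hXv x₀ (by linarith) φ)).1
      linarith
    simp only [intervalIntegral.integral_const, smul_eq_mul] at s2 s3
    have := hq0 θ₀ hθ0 hθ0π
    have : θ₀ * ε ≤ π * ε := mul_le_mul_of_nonneg_right hθ0π hε.le
    nlinarith
  -- on the right edge `u` vanishes
  rcases hx0b.eq_or_lt with e | hxb
  · have s1 := starFun_le (u x₀) hθ0 le_rfl
    have s2 : levelBound (u x₀) θ₀ 0 = 0 := by
      simp [levelBound, hXs x₀ (by linarith)]
    have := hq0 θ₀ hθ0 hθ0π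
    linarith
  -- on the bottom edge `θ = 0` the star function is at most `0`
  rcases hθ0.eq_or_lt with e | hθ0'
  · obtain ⟨C, hC⟩ := (hu.periodic x₀).compact_of_continuous (by positivity) hus |>.bddAbove
    have s1 := starFun_le (u x₀) hθ0 (le_max_right C 0)
    have s2 : levelBound (u x₀) θ₀ (max C 0) = 0 := by
      have : ∀ φ, max (u x₀ φ - max C 0) 0 = 0 := fun φ =>
        max_eq_right (by linarith [hC (mem_range_self φ), le_max_left C 0])
      simp [levelBound, this, ← e]
    have := hq0 θ₀ hθ0 hθ0π
    linarith
  -- on the top edge `θ = π` the full integrals are compared if `u` has no zero at this `x`;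
  -- otherwise a slight decrease of `θ` increases `W`
  rcases hθ0π.eq_or_lt with e | hθ0π'
  · by_cases hpos : ∀ φ, 0 < u x₀ φ
    · have s1 := starFun_le (u x₀) hθ0 le_rfl
      simp only [levelBound, sub_zero, mul_zero, add_zero] at s1
      simp_rw [max_eq_left (hu.nonneg _ _)] at s1
      have s2 := hu.integral_of_pos x₀ hpos
      have s3 := hv.integral_ge x₀
      rw [← e] at s3
      rw [← e] at s1 s2
      have := hq0 θ₀ hθ0 hθ0π
      linarith
    · push Not at hpos
      obtain ⟨φ₀, hφ₀⟩ := hpos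
      obtain ⟨h, hh0, hhπ, hst⟩ := starFun_edge hus (hu.periodic x₀) (hu.nonneg x₀)
        ⟨φ₀, le_antisymm hφ₀ (hu.nonneg _ _)⟩ (by positivity : 0 < δ / 8)
      have hm := hmax (show (x₀, π - h) ∈ K from ⟨⟨hx0a, hx0b⟩, by simp only; linarith, by simp only; linarith⟩)
      simp only [hW, mem_ofPred_eq] at hm
      have m1 := symmInt_mono hvs (hv.nonneg x₀) (by linarith : 0 ≤ π - h) (by linarith : π - h ≤ π)
      have m2 := hqdec (π - h) π (by linarith) (by linarith) le_rfl
      rw [e] at hm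
      have : 0 < δ * h := by positivity
      nlinarith
  rcases exists_extremal_set (hu.analytic x₀) hus (hu.periodic x₀) hθ0' hθ0π' with
    ⟨θ', h1, h2, h3⟩ | ⟨χ, b', δ', hχ, hχi, hδ', hl, hr, hst⟩
  · have hm := hmax (show (x₀, θ') ∈ K from ⟨⟨hx0a, hx0b⟩, h1, by simp only; linarith⟩)
    simp only [hW, mem_ofPred_eq] at hm
    have m1 := symmInt_mono hvs (hv.nonneg x₀) h1 h2.le
    have m2 := hqdec θ' θ₀ h1 h2.le hθ0π
    have : 0 < δ / 2 * (θ₀ - θ') := mul_pos (by positivity) (by linarith)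
    linarith
  · refine interior_contradiction hu hv (x₀ := x₀) (θ₀ := θ₀) (η := η) (C := W (x₀, θ₀))
      (r := min (min (x₀ - a) (b - x₀)) (min θ₀ (π - θ₀))) q ?_ hθ0' hθ0π' hη0 ?_ ?_ hχ hχi hδ' hl hr ?_
    · intro h; simp only [hq]; ring
    · exact lt_min (lt_min (by linarith) (by linarith)) (lt_min (by linarith) (by linarith))
    · intro x θ hx hθ
      have r1 := (min_le_left (min (x₀ - a) (b - x₀)) (min θ₀ (π - θ₀)))
      have r2 := (min_le_right (min (x₀ - a) (b - x₀)) (min θ₀ (π - θ₀)))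
      have r3 := min_le_left (x₀ - a) (b - x₀)
      have r4 := min_le_right (x₀ - a) (b - x₀)
      have r5 := min_le_left θ₀ (π - θ₀)
      have r6 := min_le_right θ₀ (π - θ₀)
      rw [abs_le] at hx hθ
      have hm := hmax (show (x, θ) ∈ K from ⟨⟨by simp only; linarith, by simp only; linarith⟩,
        by simp only; linarith, by simp only; linarith⟩)
      simp only [hW, mem_ofPred_eq] at hm ⊢
      linarith
    · rw [hWdef]; linarith

/-- The star function, evaluated at the size of a superlevel set of `u`, controls the integral of
`(u - c)⁺`. -/
theorem integral_posPart_le {u v : ℝ → ℝ → ℝ} (hu : IsGreenLike u) (hv : IsKoebeLike v)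
    (x c : ℝ) : ∫ φ in (-π)..π, max (u x φ - c) 0 ≤ ∫ φ in (-π)..π, max (v x φ - c) 0 := by
  have hpi := Real.pi_pos
  have hus := hu.cont_slice x
  have hvs := hv.cont_slice x
  have hA := isAngleSet_superInd hus (hu.periodic x) c
  set θ := (∫ φ in (-π)..π, superInd (u x) c φ) / 2 with hθ
  have hθ2 : ∫ φ in (-π)..π, superInd (u x) c φ = 2 * θ := by rw [hθ]; ring
  have hθ0 : 0 ≤ θ := by
    have : 0 ≤ ∫ φ in (-π)..π, superInd (u x) c φ :=
      intervalIntegral.integral_nonneg (by linarith) fun φ _ => hA.nonneg φ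
    positivity
  have hθπ : θ ≤ π := by
    have : ∫ φ in (-π)..π, superInd (u x) c φ ≤ ∫ φ in (-π)..π, (1 : ℝ) :=
      intervalIntegral.integral_mono_on (by linarith)
        (intervalIntegrable_unit hA.meas hA.nonneg hA.le_one _ _) intervalIntegrable_const
        fun φ _ => hA.le_one φ
    simp at this
    linarith
  have h1 := integral_superInd_mul hus (hu.periodic x) c
  have h2 := integral_unit_mul_le_starFun hA.meas hA.nonneg hA.le_one hus hθ2.le
  have h3 := starFun_le_symmInt hu hv x θ hθ0 hθπ
  have h4 : ∫ φ in (-θ)..θ, (v x φ - c) ≤ ∫ φ in (-π)..π, max (v x φ - c) 0 := by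
    have hcm : Continuous fun φ => max (v x φ - c) 0 := by fun_prop
    refine le_trans ?_ (symmInt_mono hcm (fun φ => le_max_right _ _) hθ0 hθπ)
    exact intervalIntegral.integral_mono_on (by linarith)
      ((by fun_prop : Continuous fun φ => v x φ - c).intervalIntegrable _ _)
      (hcm.intervalIntegrable _ _) fun φ _ => le_max_left _ _
  rw [intervalIntegral.integral_sub (hvs.intervalIntegrable _ _) intervalIntegrable_const] at h4
  simp only [intervalIntegral.integral_const, smul_eq_mul] at h4
  rw [hθ2] at h1
  linarith

/-! ### Univalent functions, Jensen's formula and Cartan's identity -/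

/-- An injective analytic function has no critical point: at a zero of order `n ≥ 2`, `f - f z₀` is the
`n`-th power of a local coordinate. -/
lemma deriv_ne_zero_of_injOn {f : ℂ → ℂ} {z₀ : ℂ} {U : Set ℂ} (hU : U ∈ 𝓝 z₀)
    (hf : AnalyticAt ℂ f z₀) (hinj : InjOn f U) : deriv f z₀ ≠ 0 := by
  intro hd
  have hg : AnalyticAt ℂ (fun z => f z - f z₀) z₀ := hf.sub analyticAt_const
  have hnz : ¬ ∀ᶠ z in 𝓝 z₀, f z - f z₀ = 0 := by
    intro h
    have h1 : ∀ᶠ z in 𝓝[≠] z₀, f z - f z₀ = 0 ∧ z ∈ U :=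
      nhdsWithin_le_nhds (h.and hU)
    obtain ⟨z, ⟨h2, h3⟩, h4⟩ := (h1.and self_mem_nhdsWithin).exists
    exact h4 (hinj h3 (mem_of_mem_nhds hU) (sub_eq_zero.1 h2))
  obtain ⟨n, h, hh, hh0, he⟩ := hg.exists_eventuallyEq_pow_smul_nonzero_iff.2 hnz
  simp only [smul_eq_mul] at he
  have hn0 : n ≠ 0 := by
    rintro rfl
    have := he.self_of_nhds
    simp at this
    exact hh0 this.symm
  have hn1 : n ≠ 1 := by
    rintro rfl
    have h1 : HasDerivAt (fun z => (z - z₀) ^ 1 * h z) (h z₀) z₀ := by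
      have := (((hasDerivAt_id z₀).sub_const z₀).fun_mul hh.differentiableAt.hasDerivAt)
      simpa only [pow_one, id, sub_self, zero_mul, one_mul, add_zero] using this
    have h2 : HasDerivAt (fun z => f z - f z₀) (h z₀) z₀ := h1.congr_of_eventuallyEq he
    have h3 := h2.deriv
    rw [deriv_sub_const, hd] at h3
    exact hh0 h3.symm
  -- an `n`-th root of the nonvanishing cofactor
  set κ : ℂ := Complex.exp (Complex.log (h z₀) / n)
  set k : ℂ → ℂ := fun z => κ * Complex.exp (Complex.log (h z / h z₀) / n) with hk
  have hnC : (n : ℂ) ≠ 0 := by exact_mod_cast hn0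
  have hka : AnalyticAt ℂ k z₀ := by
    refine analyticAt_const.mul (AnalyticAt.cexp ?_)
    refine AnalyticAt.div_const (AnalyticAt.clog (hh.div_const) ?_)
    rw [div_self hh0]; exact Complex.one_mem_slitPlane
  have hk0 : k z₀ ≠ 0 := mul_ne_zero (Complex.exp_ne_zero _) (Complex.exp_ne_zero _)
  have hkn : ∀ᶠ z in 𝓝 z₀, k z ^ n = h z := by
    filter_upwards [hh.continuousAt.eventually_ne hh0] with z hz
    rw [hk]; simp only
    rw [mul_pow, ← Complex.exp_nat_mul, ← Complex.exp_nat_mul, mul_div_cancel₀ _ hnC,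
      mul_div_cancel₀ _ hnC, Complex.exp_log hh0, Complex.exp_log (div_ne_zero hz hh0),
      mul_div_cancel₀ _ hh0]
  set p : ℂ → ℂ := fun z => (z - z₀) * k z with hp
  have hpa : AnalyticAt ℂ p z₀ := (analyticAt_id.sub analyticAt_const).mul hka
  have hpd : deriv p z₀ = k z₀ := by
    have := (((hasDerivAt_id z₀).sub_const z₀).fun_mul hka.differentiableAt.hasDerivAt)
    refine HasDerivAt.deriv ?_
    simpa only [id, sub_self, zero_mul, one_mul, add_zero] using this
  have hmap := hpa.hasStrictDerivAt.map_nhds_eq (by rw [hpd]; exact hk0)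
  have hp0 : p z₀ = 0 := by simp [hp]
  rw [hp0] at hmap
  have hpn : ∀ᶠ z in 𝓝 z₀, p z ^ n = f z - f z₀ ∧ z ∈ U := by
    filter_upwards [he, hkn, hU] with z h1 h2 h3
    refine ⟨?_, h3⟩
    rw [h1, hp]; simp only
    rw [mul_pow, h2]
  have himg : p '' {z | p z ^ n = f z - f z₀ ∧ z ∈ U} ∈ 𝓝 (0 : ℂ) := by
    rw [← hmap]; exact image_mem_map hpn
  obtain ⟨r, hr, hball⟩ := Metric.mem_nhds_iff.1 himg
  have hζ := Complex.isPrimitiveRoot_exp n hn0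
  set ζ := Complex.exp (2 * π * I / n)
  have hζ1 : ζ ≠ 1 := hζ.ne_one (by omega)
  have hζn : ‖ζ‖ = 1 := hζ.norm'_eq_one hn0
  have hr2 : ((r / 2 : ℝ) : ℂ) ≠ 0 := by exact_mod_cast (by positivity : r / 2 ≠ 0)
  obtain ⟨z₁, ⟨h11, h12⟩, h13⟩ := hball (show ((r / 2 : ℝ) : ℂ) ∈ ball 0 r by
    rw [mem_ball_zero_iff, Complex.norm_real, Real.norm_of_nonneg (by positivity)]; linarith)
  obtain ⟨z₂, ⟨h21, h22⟩, h23⟩ := hball (show ζ * ((r / 2 : ℝ) : ℂ) ∈ ball 0 r by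
    rw [mem_ball_zero_iff, norm_mul, hζn, Complex.norm_real, Real.norm_of_nonneg (by positivity)]
    linarith)
  have hfe : f z₁ = f z₂ := by
    rw [h13] at h11
    rw [h23, mul_pow, hζ.pow_eq_one, one_mul] at h21
    rw [h11] at h21
    exact sub_left_injective h21
  have := hinj h12 h22 hfe
  rw [← this, h13] at h23
  have : (ζ - 1) * ((r / 2 : ℝ) : ℂ) = 0 := by rw [sub_mul, ← h23]; ring
  rcases mul_eq_zero.1 this with h | h
  · exact hζ1 (sub_eq_zero.1 h)
  · exact hr2 h

/-- Analytic injective functions on the disk of radius `R`, normalized at the origin. -/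
structure IsUnivalent (F : ℂ → ℂ) (R : ℝ) : Prop where
  pos : 0 < R
  analytic : AnalyticOnNhd ℂ F (ball 0 R)
  inj : InjOn F (ball 0 R)
  map_zero : F 0 = 0
  deriv_zero : deriv F 0 = 1

namespace IsUnivalent

variable {F : ℂ → ℂ} {R : ℝ}

lemma zero_mem (h : IsUnivalent F R) : (0 : ℂ) ∈ ball (0 : ℂ) R := mem_ball_self h.pos

lemma deriv_ne_zero (h : IsUnivalent F R) {z : ℂ} (hz : z ∈ ball (0 : ℂ) R) : deriv F z ≠ 0 :=
  deriv_ne_zero_of_injOn (isOpen_ball.mem_nhds hz) (h.analytic z hz) h.inj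

lemma ne_zero (h : IsUnivalent F R) {z : ℂ} (hz : z ∈ ball (0 : ℂ) R) (h0 : z ≠ 0) : F z ≠ 0 :=
  fun e => h0 (h.inj hz h.zero_mem (e.trans h.map_zero.symm))

lemma isOpen_image (h : IsUnivalent F R) {U : Set ℂ} (hU : IsOpen U) (hUs : U ⊆ ball 0 R) :
    IsOpen (F '' U) := by
  rw [isOpen_iff_mem_nhds]
  rintro _ ⟨z, hz, rfl⟩
  rw [← (h.analytic z (hUs hz)).hasStrictDerivAt.map_nhds_eq (h.deriv_ne_zero (hUs hz))]
  exact image_mem_map (hU.mem_nhds hz)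

end IsUnivalent

/-- The inverse function of a univalent function. -/
noncomputable def uinv (F : ℂ → ℂ) (R : ℝ) : ℂ → ℂ := Function.invFunOn F (ball 0 R)

namespace IsUnivalent

variable {F : ℂ → ℂ} {R : ℝ}

lemma uinv_apply (h : IsUnivalent F R) {z : ℂ} (hz : z ∈ ball (0 : ℂ) R) : uinv F R (F z) = z :=
  h.inj.leftInvOn_invFunOn hz

lemma uinv_mem {w : ℂ} (hw : w ∈ F '' ball 0 R) : uinv F R w ∈ ball (0 : ℂ) R :=
  Function.invFunOn_mem hw

lemma apply_uinv {w : ℂ} (hw : w ∈ F '' ball 0 R) : F (uinv F R w) = w :=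
  Function.invFunOn_eq hw

lemma uinv_zero (h : IsUnivalent F R) : uinv F R 0 = 0 := by
  conv_lhs => rw [← h.map_zero]
  exact h.uinv_apply h.zero_mem

lemma hasStrictDerivAt_uinv (h : IsUnivalent F R) {z : ℂ} (hz : z ∈ ball (0 : ℂ) R) :
    HasStrictDerivAt (uinv F R) (deriv F z)⁻¹ (F z) := by
  refine (h.analytic z hz).hasStrictDerivAt.to_local_left_inverse (h.deriv_ne_zero hz) ?_
  filter_upwards [isOpen_ball.mem_nhds hz] with y hy using h.uinv_apply hy

lemma analyticOnNhd_uinv (h : IsUnivalent F R) : AnalyticOnNhd ℂ (uinv F R) (F '' ball 0 R) := by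
  refine DifferentiableOn.analyticOnNhd ?_ (h.isOpen_image isOpen_ball le_rfl)
  rintro _ ⟨z, hz, rfl⟩
  exact (h.hasStrictDerivAt_uinv hz).hasDerivAt.differentiableAt.differentiableWithinAt

lemma uinv_ne_zero (h : IsUnivalent F R) {w : ℂ} (hw : w ∈ F '' ball 0 R) (h0 : w ≠ 0) :
    uinv F R w ≠ 0 := by
  intro e
  have := apply_uinv hw
  rw [e, h.map_zero] at this
  exact h0 this.symm

end IsUnivalent

/-- The logarithmic counting function `log⁺ (s / |F⁻¹(w)|)` of the value `w` on the disk of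
radius `s`, equal to `0` when `w` is not a value of `F`. It is meaningful for `w ≠ 0` only, as its pole
at `w = 0` is lost to the convention `log 0 = 0`. -/
noncomputable def countFun (F : ℂ → ℂ) (R s : ℝ) (w : ℂ) : ℝ :=
  open Classical in
  if w ∈ F '' ball 0 R then max (Real.log s - Real.log ‖uinv F R w‖) 0 else 0

lemma countFun_nonneg (F : ℂ → ℂ) (R s : ℝ) (w : ℂ) : 0 ≤ countFun F R s w := by
  unfold countFun; split_ifs
  · exact le_max_right _ _
  · exact le_rfl

/-- Jensen's formula for a univalent function. -/
lemma IsUnivalent.circleAverage_log {F : ℂ → ℂ} {R s : ℝ} (h : IsUnivalent F R) (hs : 0 < s)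
    (hsR : s < R) {w : ℂ} (hw : w ≠ 0) :
    circleAverage (fun z => Real.log ‖F z - w‖) 0 s = Real.log ‖w‖ + countFun F R s w := by
  have hcb : closedBall (0 : ℂ) |s| ⊆ ball 0 R := by
    rw [abs_of_pos hs]; exact closedBall_subset_ball hsR
  unfold countFun
  split_ifs with hmem
  · obtain ⟨z₀, hz₀, rfl⟩ := hmem
    rw [h.uinv_apply hz₀]
    have hz0 : z₀ ≠ 0 := by rintro rfl; exact hw h.map_zero
    set k := dslope F z₀ with hk
    have hka : AnalyticOnNhd ℂ k (ball 0 R) :=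
      ((Complex.differentiableOn_dslope (isOpen_ball.mem_nhds hz₀)).2
        h.analytic.differentiableOn).analyticOnNhd isOpen_ball
    have hk0 : ∀ z ∈ ball (0 : ℂ) R, k z ≠ 0 := by
      intro z hz
      by_cases e : z = z₀
      · rw [e, hk, dslope_same]; exact h.deriv_ne_zero hz₀
      · rw [hk, dslope_of_ne _ e, slope_def_field]
        exact div_ne_zero (sub_ne_zero.2 fun e' => e (h.inj hz hz₀ e')) (sub_ne_zero.2 e)
    have h1 := AnalyticOnNhd.circleAverage_log_norm_of_ne_zero (hka.mono hcb)
      (fun z hz => hk0 z (hcb hz))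
    have h2 := circleAverage_log_norm_sub_const_eq_log_radius_add_posLog (a := z₀) (c := 0) hs.ne'
    have hsum : circleAverage (fun z => Real.log ‖F z - F z₀‖) 0 s =
        circleAverage ((fun z => Real.log ‖z - z₀‖) + fun z => Real.log ‖k z‖) 0 s := by
      refine circleAverage_congr_codiscreteWithin ?_ hs.ne'
      have hcd : {z₀}ᶜ ∈ codiscreteWithin (sphere (0 : ℂ) |s|) := by
        rw [mem_codiscreteWithin]
        intro x _
        rw [disjoint_principal_right]
        by_cases e : x = z₀
        · rw [e]
          filter_upwards [self_mem_nhdsWithin] with y hy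
          simp at hy; simp [hy]
        · refine nhdsWithin_le_nhds ?_
          filter_upwards [isOpen_ne.mem_nhds e] with y hy
          have : y ≠ z₀ := hy
          simp [this]
      filter_upwards [hcd, self_mem_codiscreteWithin _] with z hz hzs
      have hz' : z ≠ z₀ := hz
      have hzR : z ∈ ball (0 : ℂ) R := hcb (sphere_subset_closedBall hzs)
      have e : F z - F z₀ = (z - z₀) * k z := by
        rw [hk, dslope_of_ne _ hz', slope_def_field, mul_div_cancel₀ _ (sub_ne_zero.2 hz')]
      simp only [Pi.add_apply]
      rw [e, norm_mul, Real.log_mul (norm_ne_zero_iff.2 (sub_ne_zero.2 hz'))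
        (norm_ne_zero_iff.2 (hk0 z hzR))]
    have hki : CircleIntegrable (fun z => Real.log ‖k z‖) 0 s :=
      MeromorphicOn.circleIntegrable_log_norm fun z hz =>
        (hka z (hcb (sphere_subset_closedBall hz))).meromorphicAt
    rw [hsum, circleAverage_add (circleIntegrable_log_norm_sub_const s) hki, h1, h2]
    have hk00 : k 0 = F z₀ / z₀ := by
      rw [hk, dslope_of_ne _ hz0.symm, slope_def_field, h.map_zero, zero_sub, zero_sub, neg_div_neg_eq]
    rw [hk00, norm_div, Real.log_div (norm_ne_zero_iff.2 hw) (norm_ne_zero_iff.2 hz0),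
      posLog_apply, zero_sub, norm_neg, Real.log_mul (by positivity) (norm_ne_zero_iff.2 hz0),
      Real.log_inv]
    rcases le_total (Real.log s) (Real.log ‖z₀‖) with h3 | h3
    · rw [max_eq_right (by linarith), max_eq_right (by linarith)]; ring
    · rw [max_eq_left (by linarith), max_eq_left (by linarith)]; ring
  · have h1 := AnalyticOnNhd.circleAverage_log_norm_of_ne_zero (R := s) (c := 0)
      (g := fun z => F z - w) ((h.analytic.mono hcb).sub analyticOnNhd_const)
      (fun z hz e => hmem ⟨z, hcb hz, sub_eq_zero.1 e⟩)
    rw [h1, h.map_zero, zero_sub, norm_neg, add_zero]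

lemma circleAverage_symm (f : ℂ → ℝ) (c : ℂ) (s : ℝ) :
    2 * π * circleAverage f c s = ∫ θ in (-π)..π, f (circleMap c s θ) := by
  have hp : Function.Periodic (fun θ => f (circleMap c s θ)) (2 * π) :=
    (periodic_circleMap c s).comp f
  have := hp.intervalIntegral_add_eq (-π) 0
  rw [show -π + 2 * π = π by ring, zero_add] at this
  rw [this, circleAverage_def, smul_eq_mul, ← mul_assoc, mul_inv_cancel₀ (by positivity), one_mul]

lemma integral_log_norm_sub_circle (a : ℂ) (t : ℝ) (ha : a ≠ 0) :
    ∫ φ in (-π)..π, Real.log ‖a - circleMap 0 (Real.exp t) φ‖ =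
      2 * π * max (Real.log ‖a‖) t := by
  have h := circleAverage_symm (fun z => Real.log ‖z - a‖) 0 (Real.exp t)
  rw [circleAverage_log_norm_sub_const_eq_log_radius_add_posLog (Real.exp_pos t).ne'] at h
  simp_rw [norm_sub_rev a]
  rw [← h, posLog_apply, zero_sub, norm_neg, Real.log_mul (by positivity) (norm_ne_zero_iff.2 ha),
    Real.log_inv, Real.log_exp]
  congr 1
  rcases le_total (Real.log ‖a‖) t with h1 | h1
  · rw [max_eq_left (by linarith), max_eq_right h1]; ring
  · rw [max_eq_right (by linarith), max_eq_left h1]; ring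

/-- Cartan's identity: Jensen's formula averaged over the circle of radius `e^t` of values. -/
theorem IsUnivalent.cartan {F : ℂ → ℂ} {R s : ℝ} (h : IsUnivalent F R) (hs : 0 < s)
    (hsR : s < R) (t : ℝ) :
    ∫ θ in (-π)..π, max (Real.log ‖F (circleMap 0 s θ)‖ - t) 0 =
      ∫ φ in (-π)..π, countFun F R s (circleMap 0 (Real.exp t) φ) := by
  have hpi := Real.pi_pos
  have hpi' : -π ≤ π := by linarith
  have hmemb : ∀ θ, circleMap 0 s θ ∈ ball (0 : ℂ) R := fun θ => by
    rw [mem_ball_zero_iff, norm_circleMap_zero, abs_of_pos hs]; exact hsR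
  have hne : ∀ θ, F (circleMap 0 s θ) ≠ 0 := fun θ =>
    h.ne_zero (hmemb θ) (circleMap_ne_center hs.ne')
  have hFc : Continuous fun θ => F (circleMap 0 s θ) :=
    h.analytic.continuousOn.comp_continuous (continuous_circleMap 0 s) hmemb
  have hlogc : Continuous fun θ => Real.log ‖F (circleMap 0 s θ)‖ :=
    hFc.norm.log fun θ => norm_ne_zero_iff.2 (hne θ)
  set μ := (volume : Measure ℝ).restrict (Ioc (-π) π) with hμ
  set G : ℝ × ℝ → ℝ := fun p =>
    Real.log ‖F (circleMap 0 s p.1) - circleMap 0 (Real.exp t) p.2‖ with hG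
  have hin : Continuous fun p : ℝ × ℝ =>
      ‖F (circleMap 0 s p.1) - circleMap 0 (Real.exp t) p.2‖ :=
    ((hFc.comp continuous_fst).sub ((continuous_circleMap 0 _).comp continuous_snd)).norm
  have hGm : Measurable G := Real.measurable_log.comp hin.measurable
  have hslice : ∀ θ, IntervalIntegrable (fun φ => G (θ, φ)) volume (-π) π := by
    intro θ
    have h0 : CircleIntegrable (fun z => Real.log ‖z - F (circleMap 0 s θ)‖) 0 (Real.exp t) :=
      circleIntegrable_log_norm_sub_const _
    have hp : Function.Periodic
        (fun φ => Real.log ‖circleMap 0 (Real.exp t) φ - F (circleMap 0 s θ)‖) (2 * π) :=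
      (periodic_circleMap 0 _).comp fun z => Real.log ‖z - F (circleMap 0 s θ)‖
    have h1 := hp.intervalIntegrable (t := 0) (by positivity) (by rw [zero_add]; exact h0) (-π) π
    simpa only [hG, norm_sub_rev (F (circleMap 0 s θ))] using h1
  have hGi : Integrable G (μ.prod μ) := by
    rw [integrable_prod_iff hGm.aestronglyMeasurable]
    refine ⟨Eventually.of_forall fun θ => (intervalIntegrable_iff_integrableOn_Ioc_of_le hpi').1
      (hslice θ), ?_⟩
    have hposc : Continuous (Function.uncurry fun θ φ : ℝ =>
        posLog ‖F (circleMap 0 s θ) - circleMap 0 (Real.exp t) φ‖) :=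
      continuous_posLog.comp hin
    have hval : ∀ θ, ∫ φ, ‖G (θ, φ)‖ ∂μ =
        2 * (∫ φ in (-π)..π, posLog ‖F (circleMap 0 s θ) - circleMap 0 (Real.exp t) φ‖) -
          2 * π * max (Real.log ‖F (circleMap 0 s θ)‖) t := by
      intro θ
      rw [← integral_log_norm_sub_circle _ t (hne θ), ← intervalIntegral.integral_const_mul,
        hμ, ← intervalIntegral.integral_of_le hpi',
        ← intervalIntegral.integral_sub _ (hslice θ)]
      · refine intervalIntegral.integral_congr fun φ _ => ?_
        simp only [hG, Real.norm_eq_abs]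
        rw [← half_mul_log_add_log_abs]
        ring
      · have hc : Continuous fun φ => posLog ‖F (circleMap 0 s θ) - circleMap 0 (Real.exp t) φ‖ :=
          continuous_posLog.comp (continuous_const.sub (continuous_circleMap 0 _)).norm
        exact (hc.intervalIntegrable _ _).const_mul 2
    rw [show (fun θ => ∫ φ, ‖G (θ, φ)‖ ∂μ) = _ from funext hval]
    refine (Continuous.intervalIntegrable ?_ (-π) π).1
    refine Continuous.sub (Continuous.mul continuous_const ?_)
      (continuous_const.mul (hlogc.max continuous_const))
    exact intervalIntegral.continuous_parametric_intervalIntegral_of_continuous' hposc _ _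
  have hsw := integral_integral_swap (f := fun θ φ => G (θ, φ)) hGi
  have hL : ∫ θ, ∫ φ, G (θ, φ) ∂μ ∂μ =
      2 * π * ∫ θ in (-π)..π, max (Real.log ‖F (circleMap 0 s θ)‖) t := by
    rw [hμ, ← intervalIntegral.integral_of_le hpi', ← intervalIntegral.integral_const_mul]
    refine intervalIntegral.integral_congr fun θ _ => ?_
    simp only [hG]
    rw [← intervalIntegral.integral_of_le hpi', integral_log_norm_sub_circle _ t (hne θ)]
  have hinner : ∀ φ, ∫ θ, G (θ, φ) ∂μ =
      2 * π * (t + countFun F R s (circleMap 0 (Real.exp t) φ)) := by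
    intro φ
    have hw : circleMap 0 (Real.exp t) φ ≠ 0 := circleMap_ne_center (Real.exp_pos t).ne'
    have := h.circleAverage_log hs hsR hw
    rw [norm_circleMap_zero, abs_of_pos (Real.exp_pos t), Real.log_exp] at this
    rw [← this, circleAverage_symm, hμ, ← intervalIntegral.integral_of_le hpi']
  have hNi : IntervalIntegrable (fun φ => countFun F R s (circleMap 0 (Real.exp t) φ))
      volume (-π) π := by
    have h1 := hGi.integral_prod_right
    simp_rw [hinner] at h1
    have h2 := (h1.const_mul (2 * π)⁻¹).sub (integrable_const t)
    rw [intervalIntegrable_iff_integrableOn_Ioc_of_le hpi']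
    refine h2.congr (Eventually.of_forall fun φ => ?_)
    simp only [Pi.sub_apply]
    field_simp
    ring
  have hR : ∫ φ, ∫ θ, G (θ, φ) ∂μ ∂μ =
      2 * π * (2 * π * t + ∫ φ in (-π)..π, countFun F R s (circleMap 0 (Real.exp t) φ)) := by
    simp_rw [hinner]
    rw [hμ, ← intervalIntegral.integral_of_le hpi', intervalIntegral.integral_const_mul,
      intervalIntegral.integral_add intervalIntegrable_const hNi]
    simp only [intervalIntegral.integral_const, smul_eq_mul]
    ring
  rw [hL, hR] at hsw
  have h3 := mul_left_cancel₀ (by positivity : (2 * π) ≠ 0) hsw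
  have h4 : ∀ θ, max (Real.log ‖F (circleMap 0 s θ)‖ - t) 0 =
      max (Real.log ‖F (circleMap 0 s θ)‖) t - t := fun θ => by
    rw [← sub_self t, max_sub_sub_right]
  simp_rw [h4]
  rw [intervalIntegral.integral_sub ((hlogc.max
    continuous_const).intervalIntegrable _ _)
    intervalIntegrable_const, h3]
  simp only [intervalIntegral.integral_const, smul_eq_mul]
  ring

/-! ### The Green function of the image domain -/

lemma circleMap_exp (x φ : ℝ) : circleMap 0 (Real.exp x) φ = Complex.exp (x + φ * I) := by
  rw [circleMap_zero, Complex.exp_add, Complex.ofReal_exp]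

lemma circleMap_exp_add (x φ ε ψ : ℝ) :
    circleMap 0 (Real.exp (x + ε * Real.cos ψ)) (φ + ε * Real.sin ψ) =
      Complex.exp (circleMap (x + φ * I) ε ψ) := by
  rw [circleMap_exp, circleMap, Complex.exp_mul_I]
  congr 1
  push_cast
  ring

/-- Jensen's formula at the zero of a univalent function. -/
lemma IsUnivalent.integral_log {F : ℂ → ℂ} {R s : ℝ} (h : IsUnivalent F R) (hs : 0 < s)
    (hsR : s < R) : ∫ θ in (-π)..π, Real.log ‖F (circleMap 0 s θ)‖ = 2 * π * Real.log s := by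
  have hcb : closedBall (0 : ℂ) |s| ⊆ ball 0 R := by
    rw [abs_of_pos hs]; exact closedBall_subset_ball hsR
  set k := dslope F 0 with hk
  have hka : AnalyticOnNhd ℂ k (ball 0 R) :=
    ((Complex.differentiableOn_dslope (isOpen_ball.mem_nhds h.zero_mem)).2
      h.analytic.differentiableOn).analyticOnNhd isOpen_ball
  have hkF : ∀ z, z ≠ 0 → k z = F z / z := by
    intro z hz
    rw [hk, dslope_of_ne _ hz, slope_def_field, h.map_zero, sub_zero, sub_zero]
  have hk0 : ∀ z ∈ ball (0 : ℂ) R, k z ≠ 0 := by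
    intro z hz
    by_cases e : z = 0
    · rw [e, hk, dslope_same]; exact h.deriv_ne_zero h.zero_mem
    · rw [hkF z e]; exact div_ne_zero (h.ne_zero hz e) e
  have h1 := AnalyticOnNhd.circleAverage_log_norm_of_ne_zero (hka.mono hcb)
      (fun z hz => hk0 z (hcb hz))
  have h2 := circleAverage_symm (fun z => Real.log ‖k z‖) 0 s
  have hk00 : k 0 = 1 := by rw [hk, dslope_same, h.deriv_zero]
  rw [h1, hk00, norm_one, Real.log_one, mul_zero] at h2
  have h3 : ∀ θ, Real.log ‖F (circleMap 0 s θ)‖ =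
      Real.log ‖k (circleMap 0 s θ)‖ + Real.log s := by
    intro θ
    have hm : circleMap 0 s θ ∈ ball (0 : ℂ) R := by
      rw [mem_ball_zero_iff, norm_circleMap_zero, abs_of_pos hs]; exact hsR
    have h0 : circleMap 0 s θ ≠ 0 := circleMap_ne_center hs.ne'
    rw [hkF _ h0, norm_div, norm_circleMap_zero, abs_of_pos hs,
      Real.log_div (norm_ne_zero_iff.2 (h.ne_zero hm h0)) hs.ne']
    ring
  simp_rw [h3]
  have hki : IntervalIntegrable (fun θ => Real.log ‖k (circleMap 0 s θ)‖) volume (-π) π := by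
    refine (Continuous.log ?_ ?_).intervalIntegrable _ _
    · refine (hka.continuousOn.comp_continuous (continuous_circleMap 0 s) fun θ => ?_).norm
      exact hcb (circleMap_mem_closedBall 0 (abs_nonneg s) θ |> fun h => by
        rw [abs_of_pos hs] at h ⊢; exact h)
    · intro θ
      refine norm_ne_zero_iff.2 (hk0 _ (hcb ?_))
      rw [abs_of_pos hs]; exact circleMap_mem_closedBall 0 hs.le θ
  rw [intervalIntegral.integral_add hki intervalIntegrable_const, ← h2]
  simp only [intervalIntegral.integral_const, smul_eq_mul]
  ring

namespace IsUnivalent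

variable {F : ℂ → ℂ} {R : ℝ}

lemma closedBall_subset (hR : 1 < R) : closedBall (0 : ℂ) 1 ⊆ ball 0 R :=
  closedBall_subset_ball hR

lemma isCompact_image (h : IsUnivalent F R) (hR : 1 < R) : IsCompact (F '' closedBall 0 1) :=
  (isCompact_closedBall 0 1).image_of_continuousOn
    (h.analytic.continuousOn.mono (closedBall_subset hR))

lemma countFun_eq {w : ℂ} (hw : w ∈ F '' ball 0 R) :
    countFun F R 1 w = max (-Real.log ‖uinv F R w‖) 0 := by
  rw [countFun, if_pos hw, Real.log_one, zero_sub]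

lemma countFun_pos_iff (h : IsUnivalent F R) (hR : 1 < R) {w : ℂ} (h0 : w ≠ 0) :
    0 < countFun F R 1 w ↔ w ∈ F '' ball 0 1 := by
  have hsub : F '' ball 0 1 ⊆ F '' ball 0 R := image_mono (ball_subset_ball hR.le)
  constructor
  · intro hp
    by_cases hw : w ∈ F '' ball 0 R
    · rw [countFun_eq hw, lt_max_iff] at hp
      have hp := hp.resolve_right (lt_irrefl _)
      refine ⟨uinv F R w, ?_, apply_uinv hw⟩
      rw [mem_ball_zero_iff]
      by_contra hc
      have := Real.log_nonneg (not_lt.1 hc)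
      linarith
    · rw [countFun, if_neg hw] at hp; exact absurd hp (lt_irrefl _)
  · intro hw
    rw [countFun_eq (hsub hw), lt_max_iff]
    left
    obtain ⟨z, hz, rfl⟩ := hw
    have hz0 : z ≠ 0 := by rintro rfl; exact h0 h.map_zero
    rw [h.uinv_apply (ball_subset_ball hR.le hz)]
    have := Real.log_neg (norm_pos_iff.2 hz0) (mem_ball_zero_iff.1 hz)
    linarith

lemma countFun_eq_zero (h : IsUnivalent F R) (hR : 1 < R) {w : ℂ} (h0 : w ≠ 0)
    (hw : w ∉ F '' closedBall 0 1) : countFun F R 1 w = 0 := by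
  by_contra hne
  have := (h.countFun_pos_iff hR h0).1 (lt_of_le_of_ne (countFun_nonneg _ _ _ _) (Ne.symm hne))
  exact hw (image_mono ball_subset_closedBall this)

lemma continuousAt_countFun (h : IsUnivalent F R) (hR : 1 < R) {w : ℂ} (h0 : w ≠ 0) :
    ContinuousAt (countFun F R 1) w := by
  by_cases hw : w ∈ F '' closedBall 0 1
  · have hw' : w ∈ F '' ball 0 R := image_mono (closedBall_subset hR) hw
    have hev : countFun F R 1 =ᶠ[𝓝 w] fun w => max (-Real.log ‖uinv F R w‖) 0 := by
      filter_upwards [(h.isOpen_image isOpen_ball le_rfl).mem_nhds hw'] with y hy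
        using countFun_eq hy
    refine ContinuousAt.congr ?_ hev.symm
    refine Filter.Tendsto.max (ContinuousAt.neg (ContinuousAt.log ?_ ?_)) continuousAt_const
    · exact (h.analyticOnNhd_uinv w hw').continuousAt.norm
    · exact norm_ne_zero_iff.2 (h.uinv_ne_zero hw' h0)
  · have hev : countFun F R 1 =ᶠ[𝓝 w] fun _ => 0 := by
      filter_upwards [(h.isCompact_image hR).isClosed.isOpen_compl.mem_nhds hw,
        isOpen_ne.mem_nhds h0] with y hy hy0 using h.countFun_eq_zero hR hy0 hy
    exact continuousAt_const.congr hev.symm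

/-- If a circle centred at the origin lies in the image of the unit disk, then the
values of `F` on the unit circle lie outside the open disk it bounds: `1 / (w - F z₀)` has a primitive
on the image, so the circle does not wind around `F z₀`. -/
lemma exp_le_norm (h : IsUnivalent F R) (hR : 1 < R) {ρ : ℝ} (hρ : 0 < ρ)
    (hc : ∀ w ∈ sphere (0 : ℂ) ρ, w ∈ F '' ball 0 1) {z₀ : ℂ} (hz₀ : ‖z₀‖ = 1) : ρ ≤ ‖F z₀‖ := by
  by_contra hlt
  push Not at hlt
  have hb : ball (0 : ℂ) 1 ⊆ ball 0 R := ball_subset_ball hR.le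
  have hz₀R : z₀ ∈ ball (0 : ℂ) R := by rw [mem_ball_zero_iff, hz₀]; exact hR
  have hne : ∀ z ∈ ball (0 : ℂ) 1, F z - F z₀ ≠ 0 := by
    intro z hz e
    have := h.inj (hb hz) hz₀R (sub_eq_zero.1 e)
    rw [this, mem_ball_zero_iff, hz₀] at hz
    exact lt_irrefl _ hz
  have hd : DifferentiableOn ℂ (fun z => deriv F z / (F z - F z₀)) (ball 0 1) := by
    refine DifferentiableOn.fun_div ?_ ?_ hne
    · exact (h.analytic.deriv.mono hb).differentiableOn
    · exact (h.analytic.mono hb).differentiableOn.sub_const _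
  obtain ⟨L, hL⟩ := hd.isExactOn_ball
  have hintg : ∮ w in C(0, ρ), (w - F z₀)⁻¹ = 0 := by
    refine circleIntegral.integral_eq_zero_of_hasDerivWithinAt (f := fun w => L (uinv F R w)) hρ.le ?_
    intro w hw
    obtain ⟨z, hz, rfl⟩ := hc w hw
    have h1 := (h.hasStrictDerivAt_uinv (hb hz)).hasDerivAt
    have h2 : HasDerivAt L (deriv F z / (F z - F z₀)) (uinv F R (F z)) := by
      rw [h.uinv_apply (hb hz)]; exact hL z hz
    have h3 := h2.comp (F z) h1
    refine (h3.congr_deriv ?_).hasDerivWithinAt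
    rw [div_mul_eq_mul_div, mul_inv_cancel₀ (h.deriv_ne_zero (hb hz)), one_div]
  rw [circleIntegral.integral_sub_inv_of_mem_ball (mem_ball_zero_iff.2 hlt)] at hintg
  simp at hintg

/-- The Green function of the image of the unit disk has all properties used in the
symmetrization argument. -/
theorem isGreenLike (h : IsUnivalent F R) (hR : 1 < R) :
    IsGreenLike fun x φ => countFun F R 1 (circleMap 0 (Real.exp x) φ) := by
  have hne : ∀ x φ, circleMap 0 (Real.exp x) φ ≠ 0 := fun x φ =>
    circleMap_ne_center (Real.exp_pos x).ne'
  have hcm : Continuous fun p : ℝ × ℝ => circleMap 0 (Real.exp p.1) p.2 := by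
    simp_rw [circleMap_exp]; fun_prop
  have hcont : Continuous fun p : ℝ × ℝ => countFun F R 1 (circleMap 0 (Real.exp p.1) p.2) := by
    rw [continuous_iff_continuousAt]
    intro p
    exact (h.continuousAt_countFun hR (hne p.1 p.2)).comp (f := fun p : ℝ × ℝ =>
      circleMap 0 (Real.exp p.1) p.2) hcm.continuousAt
  have hper : ∀ x, Function.Periodic
      (fun φ => countFun F R 1 (circleMap 0 (Real.exp x) φ)) (2 * π) := fun x =>
    (periodic_circleMap 0 _).comp (countFun F R 1)
  have hopen := h.isOpen_image isOpen_ball le_rfl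
  have hnorm : ∀ x φ, ‖circleMap 0 (Real.exp x) φ‖ = Real.exp x := fun x φ => by
    rw [norm_circleMap_zero, abs_of_pos (Real.exp_pos x)]
  refine ⟨hcont, fun x φ => countFun_nonneg _ _ _ _, hper, ?_, ?_, ?_, ?_, ?_⟩
  · -- sub-mean value property
    intro x
    set K : Set ℂ := (fun φ : ℝ => (x + φ * I : ℂ)) '' Icc (-π) π ∩
      Complex.exp ⁻¹' (F '' closedBall 0 1) with hK
    have hKc : IsCompact K :=
      (isCompact_Icc.image (by fun_prop)).inter_right
        ((h.isCompact_image hR).isClosed.preimage Complex.continuous_exp)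
    obtain ⟨δ, hδ, hsub⟩ := hKc.exists_thickening_subset_open
      (hopen.preimage Complex.continuous_exp)
      (fun ζ hζ => image_mono (closedBall_subset hR) hζ.2)
    refine ⟨δ / 2, by positivity, fun ε hε hεδ φ => ?_⟩
    -- reduction to angles in one period
    wlog hφ : φ ∈ Icc (-π) π generalizing φ
    · obtain ⟨n, hn, -⟩ := existsUnique_add_zsmul_mem_Ico (by positivity : 0 < 2 * π) φ (-π)
      have := this (φ + n • (2 * π)) ⟨hn.1, by linarith [hn.2]⟩
      have e1 : ∀ ψ, φ + n • (2 * π) + ε * Real.sin ψ = φ + ε * Real.sin ψ + n • (2 * π) :=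
        fun ψ => by ring
      simp_rw [e1] at this
      have e2 : ∀ y a, countFun F R 1 (circleMap 0 (Real.exp y) (a + n • (2 * π))) =
        countFun F R 1 (circleMap 0 (Real.exp y) a) := fun y a => (hper y).zsmul n a
      simp_rw [e2] at this
      exact this
    simp_rw [circleMap_exp_add]
    have hint0 : 0 ≤ ∫ ψ in (-π)..π, countFun F R 1 (Complex.exp (circleMap (x + φ * I) ε ψ)) :=
      intervalIntegral.integral_nonneg (by linarith [Real.pi_pos])
        fun ψ _ => countFun_nonneg _ _ _ _
    rcases (countFun_nonneg F R 1 (circleMap 0 (Real.exp x) φ)).eq_or_lt with h0 | hpos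
    · rw [← h0, mul_zero]; exact hint0
    have hmem := (h.countFun_pos_iff hR (hne x φ)).1 hpos
    have hζK : (x + φ * I : ℂ) ∈ K := by
      refine ⟨⟨φ, hφ, rfl⟩, ?_⟩
      rw [mem_preimage, ← circleMap_exp]
      exact image_mono ball_subset_closedBall hmem
    have hball : ∀ ζ ∈ closedBall (x + φ * I : ℂ) |ε|, Complex.exp ζ ∈ F '' ball 0 R := by
      intro ζ hζ
      rw [abs_of_pos hε, mem_closedBall] at hζ
      exact hsub (mem_thickening_iff.2 ⟨_, hζK, by linarith⟩)
    have havg := AnalyticOnNhd.circleAverage_log_norm_of_ne_zero (R := ε) (c := x + φ * I)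
      (g := fun ζ => uinv F R (Complex.exp ζ))
      (fun ζ hζ => (h.analyticOnNhd_uinv _ (hball ζ hζ)).comp analyticAt_cexp)
      (fun ζ hζ => h.uinv_ne_zero (hball ζ hζ) (Complex.exp_ne_zero _))
    have hs := circleAverage_symm (fun ζ => Real.log ‖uinv F R (Complex.exp ζ)‖) (x + φ * I) ε
    rw [havg] at hs
    have hval : countFun F R 1 (circleMap 0 (Real.exp x) φ) =
        -Real.log ‖uinv F R (Complex.exp (x + φ * I))‖ := by
      have hb := hball _ (mem_closedBall_self (abs_nonneg ε))
      rw [circleMap_exp] at hpos ⊢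
      rw [countFun_eq hb] at hpos ⊢
      exact max_eq_left (lt_max_iff.1 hpos |>.resolve_right (lt_irrefl _)).le
    have hcmem : ∀ ψ, circleMap (x + φ * I) ε ψ ∈ closedBall (x + φ * I : ℂ) |ε| := fun ψ => by
      rw [abs_of_pos hε]; exact circleMap_mem_closedBall _ hε.le ψ
    have hcexp : Continuous fun ψ => Complex.exp (circleMap (x + φ * I) ε ψ) :=
      Complex.continuous_exp.comp (continuous_circleMap _ _)
    rw [hval, mul_neg, hs, ← intervalIntegral.integral_neg]
    refine intervalIntegral.integral_mono_on (by linarith [Real.pi_pos]) ?_ ?_ ?_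
    · refine (Continuous.neg (Continuous.log ?_ ?_)).intervalIntegrable _ _
      · exact (h.analyticOnNhd_uinv.continuousOn.comp_continuous hcexp
          fun ψ => hball _ (hcmem ψ)).norm
      · exact fun ψ => norm_ne_zero_iff.2
          (h.uinv_ne_zero (hball _ (hcmem ψ)) (Complex.exp_ne_zero _))
    · refine Continuous.intervalIntegrable ?_ _ _
      rw [continuous_iff_continuousAt]
      exact fun ψ => (h.continuousAt_countFun hR (Complex.exp_ne_zero _)).comp
        (f := fun ψ => Complex.exp (circleMap (x + φ * I) ε ψ)) hcexp.continuousAt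
    · intro ψ _
      rw [countFun_eq (hball _ (hcmem ψ))]
      exact le_max_left _ _
  · intro x φ₀ hfr
    have hmem : circleMap 0 (Real.exp x) φ₀ ∈ F '' closedBall 0 1 := by
      by_contra hc
      refine hfr ?_
      have := (continuous_circleMap 0 (Real.exp x)).continuousAt.preimage_mem_nhds
        ((h.isCompact_image hR).isClosed.isOpen_compl.mem_nhds hc)
      filter_upwards [this] with φ hφ
      rw [h.countFun_eq_zero hR (hne x φ) hφ]
      exact lt_irrefl _
    have hmem' := image_mono (closedBall_subset hR) hmem
    refine ⟨fun φ => -Real.log ‖uinv F R (circleMap 0 (Real.exp x) φ)‖, ?_, ?_⟩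
    · have h1 : AnalyticAt ℝ (fun w => Real.log ‖uinv F R w‖) (circleMap 0 (Real.exp x) φ₀) :=
        HarmonicAt.analyticAt ((h.analyticOnNhd_uinv _ hmem').harmonicAt_log_norm
          (h.uinv_ne_zero hmem' (hne x φ₀)))
      exact (h1.comp (analyticOnNhd_circleMap 0 (Real.exp x) φ₀ (mem_univ _))).neg
    · have := (continuous_circleMap 0 (Real.exp x)).continuousAt.preimage_mem_nhds
        (hopen.mem_nhds hmem')
      filter_upwards [this] with φ hφ using countFun_eq hφ
  · intro ε hε
    have hd : HasDerivAt (uinv F R) 1 0 := by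
      have := (h.hasStrictDerivAt_uinv h.zero_mem).hasDerivAt
      rwa [h.deriv_zero, h.map_zero, inv_one] at this
    have hsl := hasDerivAt_iff_tendsto_slope.1 hd
    have hlog : Tendsto (fun w => Real.log ‖slope (uinv F R) 0 w‖) (𝓝[≠] 0) (𝓝 0) := by
      have := (hsl.norm).log (by simp)
      simpa using this
    have h0mem : (0 : ℂ) ∈ F '' ball 0 R := ⟨0, h.zero_mem, h.map_zero⟩
    have e1 : ∀ᶠ w in 𝓝[≠] (0 : ℂ), w ∈ F '' ball 0 R := nhdsWithin_le_nhds (hopen.mem_nhds h0mem)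
    have e2 : ∀ᶠ w in 𝓝[≠] (0 : ℂ), uinv F R w ∈ ball (0 : ℂ) 1 := by
      refine nhdsWithin_le_nhds ?_
      refine hd.continuousAt.preimage_mem_nhds (isOpen_ball.mem_nhds ?_)
      rw [h.uinv_zero]; exact mem_ball_self one_pos
    have e3 := hlog.eventually (Metric.ball_mem_nhds 0 hε)
    have := (e1.and (e2.and e3))
    rw [eventually_nhdsWithin_iff, Metric.eventually_nhds_iff] at this
    obtain ⟨r, hr, hrr⟩ := this
    refine ⟨Real.log r - 1, fun x hx φ => ?_⟩
    have hlt : Real.exp x < r := by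
      rw [← Real.lt_log_iff_exp_lt hr]; linarith
    obtain ⟨a1, a2, a3⟩ := hrr (y := circleMap 0 (Real.exp x) φ)
      (by rw [dist_zero_right, hnorm]; exact hlt) (hne x φ)
    have hu0 := h.uinv_ne_zero a1 (hne x φ)
    rw [dist_zero_right, slope_def_field, h.uinv_zero, sub_zero, sub_zero, norm_div, hnorm,
      Real.log_div (norm_ne_zero_iff.2 hu0) (Real.exp_pos x).ne', Real.log_exp,
      Real.norm_eq_abs] at a3
    have := Real.log_neg (norm_pos_iff.2 hu0) (mem_ball_zero_iff.1 a2)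
    rw [countFun_eq a1, max_eq_left (by linarith), ← abs_neg]
    refine le_of_eq_of_le ?_ a3.le
    congr 1; ring
  · obtain ⟨M, hM⟩ := (h.isCompact_image hR).isBounded.exists_norm_le
    refine ⟨Real.log (|M| + 1), fun x hx φ => h.countFun_eq_zero hR (hne x φ) fun hmem => ?_⟩
    have h1 := hM _ hmem
    rw [hnorm] at h1
    have h2 := (Real.log_le_iff_le_exp (by positivity)).1 hx
    linarith [le_abs_self M]
  · intro x hpos
    have hge : ∀ z₀ : ℂ, ‖z₀‖ = 1 → Real.exp x ≤ ‖F z₀‖ := fun z₀ hz₀ => by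
      refine h.exp_le_norm hR (Real.exp_pos x) (fun w hw => ?_) hz₀
      rw [← abs_of_pos (Real.exp_pos x), ← range_circleMap] at hw
      obtain ⟨φ, rfl⟩ := hw
      exact (h.countFun_pos_iff hR (hne x φ)).1 (hpos φ)
    rw [← h.cartan one_pos hR x]
    have hmemb : ∀ θ, circleMap 0 1 θ ∈ ball (0 : ℂ) R := fun θ => by
      rw [mem_ball_zero_iff, norm_circleMap_zero, abs_one]; exact hR
    have e : ∀ θ, max (Real.log ‖F (circleMap 0 1 θ)‖ - x) 0 =
        Real.log ‖F (circleMap 0 1 θ)‖ - x := fun θ => by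
      refine max_eq_left (sub_nonneg.2 ?_)
      have := hge (circleMap 0 1 θ) (by simp)
      exact (Real.le_log_iff_exp_le ((Real.exp_pos x).trans_le this)).2 this
    simp_rw [e]
    rw [intervalIntegral.integral_sub _ intervalIntegrable_const, h.integral_log one_pos hR]
    · simp only [intervalIntegral.integral_const, smul_eq_mul, Real.log_one]
      apply le_of_eq; ring
    · refine (Continuous.log ?_ ?_).intervalIntegrable _ _
      · exact (h.analytic.continuousOn.comp_continuous (continuous_circleMap 0 1) hmemb).norm
      · exact fun θ => norm_ne_zero_iff.2
          (h.ne_zero (hmemb θ) (circleMap_ne_center one_ne_zero))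

end IsUnivalent

/-! ### The Koebe function and Baernstein's inequality -/

/-- The Koebe function. -/
noncomputable def koebeFun (z : ℂ) : ℂ := z / (1 - z) ^ 2

lemma one_sub_ne_zero_of_mem {z : ℂ} (hz : z ∈ ball (0 : ℂ) 1) : 1 - z ≠ 0 := by
  intro h
  rw [← sub_eq_zero.1 h, mem_ball_zero_iff, norm_one] at hz
  exact lt_irrefl _ hz

lemma isUnivalent_koebeFun : IsUnivalent koebeFun 1 := by
  refine ⟨one_pos, ?_, ?_, ?_, ?_⟩
  · intro z hz
    exact analyticAt_id.div ((analyticAt_const.sub analyticAt_id).pow 2)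
      (pow_ne_zero 2 (one_sub_ne_zero_of_mem hz))
  · intro z hz w hw h
    have h1 := one_sub_ne_zero_of_mem hz
    have h2 := one_sub_ne_zero_of_mem hw
    simp only [koebeFun] at h
    rw [div_eq_div_iff (pow_ne_zero 2 h1) (pow_ne_zero 2 h2)] at h
    have h3 : (z - w) * (1 - z * w) = 0 := by linear_combination h
    rcases mul_eq_zero.1 h3 with h4 | h4
    · exact sub_eq_zero.1 h4
    · exfalso
      refine one_sub_ne_zero_of_mem (z := z * w) ?_ h4
      rw [mem_ball_zero_iff, norm_mul]
      rw [mem_ball_zero_iff] at hz hw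
      exact mul_lt_one_of_nonneg_of_lt_one_left (norm_nonneg _) hz hw.le
  · simp [koebeFun]
  · have h1 : HasDerivAt (fun z : ℂ => (1 - z) ^ 2) (2 * (1 - 0) * (-1)) (0 : ℂ) := by
      have := ((hasDerivAt_id (0 : ℂ)).const_sub 1).fun_pow 2
      simpa using this
    have h2 := (hasDerivAt_id (0 : ℂ)).fun_div h1 (by simp)
    have h3 : HasDerivAt koebeFun _ 0 := h2
    rw [h3.deriv]
    simp

/-- The nonnegative real part of a square root of `1 + 4 w`. -/
noncomputable def koebeRe (w : ℂ) : ℝ := √((‖1 + 4 * w‖ + (1 + 4 * w).re) / 2)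

/-- The Green function with pole at `0` of the complement of the slit `(-∞, -1/4]`, which is the
image of the unit disk under the Koebe function. -/
noncomputable def koebeGreen (w : ℂ) : ℝ :=
  Real.log (‖1 + 4 * w‖ + 1 + 2 * koebeRe w) - Real.log 4 - Real.log ‖w‖

lemma koebeRe_nonneg (w : ℂ) : 0 ≤ koebeRe w := Real.sqrt_nonneg _

lemma koebeRe_eq {p w : ℂ} (hp : p ^ 2 = 1 + 4 * w) (hre : 0 ≤ p.re) : koebeRe w = p.re := by
  rw [koebeRe, ← hp, norm_pow, ← Complex.normSq_eq_norm_sq, Complex.normSq_apply, pow_two,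
    Complex.mul_re]
  rw [show (p.re * p.re + p.im * p.im + (p.re * p.re - p.im * p.im)) / 2 = p.re ^ 2 by ring]
  exact Real.sqrt_sq hre

lemma koebe_norm_add {p w : ℂ} (hp : p ^ 2 = 1 + 4 * w) (hre : 0 ≤ p.re) :
    ‖1 + 4 * w‖ + 1 + 2 * koebeRe w = ‖p + 1‖ ^ 2 := by
  rw [koebeRe_eq hp hre, ← hp, norm_pow, ← Complex.normSq_eq_norm_sq, ← Complex.normSq_eq_norm_sq,
    Complex.normSq_apply, Complex.normSq_apply]
  simp
  ring

lemma koebeGreen_eq {p w : ℂ} (hp : p ^ 2 = 1 + 4 * w) (hre : 0 ≤ p.re) (hw : w ≠ 0) :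
    koebeGreen w = Real.log ‖(p + 1) / (p - 1)‖ := by
  have h1 : (p - 1) * (p + 1) = 4 * w := by linear_combination hp
  have h2 : (p - 1) * (p + 1) ≠ 0 := by rw [h1]; exact mul_ne_zero (by norm_num) hw
  have h3 := norm_ne_zero_iff.2 (left_ne_zero_of_mul h2)
  have h4 := norm_ne_zero_iff.2 (right_ne_zero_of_mul h2)
  have h5 : Real.log 4 + Real.log ‖w‖ = Real.log ‖p - 1‖ + Real.log ‖p + 1‖ := by
    rw [← Real.log_mul h3 h4, ← norm_mul, h1, norm_mul,
      Real.log_mul (by norm_num) (norm_ne_zero_iff.2 hw)]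
    norm_num
  rw [koebeGreen, koebe_norm_add hp hre, Real.log_pow, norm_div, Real.log_div h4 h3]
  push_cast
  linarith

lemma exists_sqrt_re_nonneg (a : ℂ) : ∃ p : ℂ, p ^ 2 = a ∧ 0 ≤ p.re := by
  obtain ⟨p, hp⟩ := IsAlgClosed.exists_pow_nat_eq a (n := 2) (by norm_num)
  rcases le_total 0 p.re with h | h
  · exact ⟨p, hp, h⟩
  · exact ⟨-p, by rw [neg_sq, hp], by simpa using h⟩

lemma koebe_norm_le {p : ℂ} (hre : 0 ≤ p.re) : ‖p - 1‖ ≤ ‖p + 1‖ := by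
  rw [← sq_le_sq₀ (norm_nonneg _) (norm_nonneg _), ← Complex.normSq_eq_norm_sq,
    ← Complex.normSq_eq_norm_sq, Complex.normSq_apply, Complex.normSq_apply]
  simp
  nlinarith

lemma koebe_norm_lt {p : ℂ} (hre : 0 < p.re) : ‖p - 1‖ < ‖p + 1‖ := by
  rw [← sq_lt_sq₀ (norm_nonneg _) (norm_nonneg _), ← Complex.normSq_eq_norm_sq,
    ← Complex.normSq_eq_norm_sq, Complex.normSq_apply, Complex.normSq_apply]
  simp
  nlinarith

lemma koebe_norm_eq {p : ℂ} (hre : p.re = 0) : ‖p - 1‖ = ‖p + 1‖ := by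
  rw [← sq_eq_sq₀ (norm_nonneg _) (norm_nonneg _), ← Complex.normSq_eq_norm_sq,
    ← Complex.normSq_eq_norm_sq, Complex.normSq_apply, Complex.normSq_apply]
  simp [hre]

lemma koebeGreen_nonneg {w : ℂ} (hw : w ≠ 0) : 0 ≤ koebeGreen w := by
  obtain ⟨p, hp, hre⟩ := exists_sqrt_re_nonneg (1 + 4 * w)
  rw [koebeGreen_eq hp hre hw, norm_div]
  have h1 : (p - 1) * (p + 1) = 4 * w := by linear_combination hp
  have h2 : (p - 1) * (p + 1) ≠ 0 := by rw [h1]; exact mul_ne_zero (by norm_num) hw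
  exact Real.log_nonneg ((one_le_div (norm_pos_iff.2 (left_ne_zero_of_mul h2))).2
    (koebe_norm_le hre))

lemma koebeGreen_koebeFun {z : ℂ} (hz : z ∈ ball (0 : ℂ) 1) (h0 : z ≠ 0) :
    koebeGreen (koebeFun z) = -Real.log ‖z‖ := by
  have h1 := one_sub_ne_zero_of_mem hz
  have hp : ((1 + z) / (1 - z)) ^ 2 = 1 + 4 * koebeFun z := by
    rw [koebeFun]; field_simp; ring
  have hre : 0 ≤ ((1 + z) / (1 - z)).re := by
    rw [Complex.div_re, ← add_div]
    refine div_nonneg ?_ (Complex.normSq_nonneg _)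
    have : Complex.normSq z < 1 := by
      rw [Complex.normSq_eq_norm_sq]
      rw [mem_ball_zero_iff] at hz
      nlinarith [norm_nonneg z]
    rw [Complex.normSq_apply] at this
    simp
    nlinarith
  have e : ((1 + z) / (1 - z) + 1) / ((1 + z) / (1 - z) - 1) = z⁻¹ := by
    have h2 : (1 + z) / (1 - z) + 1 = 2 / (1 - z) := by field_simp; ring
    have h3 : (1 + z) / (1 - z) - 1 = 2 * z / (1 - z) := by field_simp; ring
    rw [h2, h3]; field_simp
  rw [koebeGreen_eq hp hre (isUnivalent_koebeFun.ne_zero hz h0), e, norm_inv, Real.log_inv]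

lemma koebeGreen_eq_zero {w : ℂ} (hw : w ≠ 0) (hmem : w ∉ koebeFun '' ball 0 1) :
    koebeGreen w = 0 := by
  obtain ⟨p, hp, hre⟩ := exists_sqrt_re_nonneg (1 + 4 * w)
  have h1 : (p - 1) * (p + 1) = 4 * w := by linear_combination hp
  have h2 : (p - 1) * (p + 1) ≠ 0 := by rw [h1]; exact mul_ne_zero (by norm_num) hw
  have h3 := left_ne_zero_of_mul h2
  have h4 := right_ne_zero_of_mul h2
  rcases hre.eq_or_lt with h0 | hpos
  · rw [koebeGreen_eq hp hre hw, norm_div, koebe_norm_eq h0.symm,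
      div_self (norm_ne_zero_iff.2 h4), Real.log_one]
  · refine absurd ⟨(p - 1) / (p + 1), ?_, ?_⟩ hmem
    · rw [mem_ball_zero_iff, norm_div, div_lt_one (norm_pos_iff.2 h4)]
      exact koebe_norm_lt hpos
    · have h5 : 1 - (p - 1) / (p + 1) = 2 / (p + 1) := by field_simp; ring
      rw [koebeFun, h5]
      field_simp
      linear_combination h1

/-- The counting function of the Koebe function. -/
lemma countFun_koebe {s : ℝ} (hs : 0 < s) (hs1 : s ≤ 1) {w : ℂ} (hw : w ≠ 0) :
    countFun koebeFun 1 s w = max (koebeGreen w - -Real.log s) 0 := by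
  rw [countFun]
  split_ifs with hmem
  · obtain ⟨z, hz, rfl⟩ := hmem
    have h0 : z ≠ 0 := by rintro rfl; exact hw isUnivalent_koebeFun.map_zero
    rw [isUnivalent_koebeFun.uinv_apply hz, koebeGreen_koebeFun hz h0]
    congr 1; ring
  · rw [koebeGreen_eq_zero hw hmem, max_eq_right]
    linarith [Real.log_nonpos hs.le hs1]

lemma continuousAt_koebeGreen {w : ℂ} (hw : w ≠ 0) : ContinuousAt koebeGreen w := by
  have hc : Continuous fun w : ℂ => ‖1 + 4 * w‖ + 1 + 2 * koebeRe w := by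
    unfold koebeRe; fun_prop
  refine ContinuousAt.sub (ContinuousAt.sub (hc.continuousAt.log ?_) continuousAt_const)
    (continuous_norm.continuousAt.log (norm_ne_zero_iff.2 hw))
  have := koebeRe_nonneg w
  positivity

theorem isKoebeLike_koebeGreen :
    IsKoebeLike fun x φ => koebeGreen (circleMap 0 (Real.exp x) φ) := by
  have hne : ∀ x φ, circleMap 0 (Real.exp x) φ ≠ 0 := fun x φ =>
    circleMap_ne_center (Real.exp_pos x).ne'
  have hcm : Continuous fun p : ℝ × ℝ => circleMap 0 (Real.exp p.1) p.2 := by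
    simp_rw [circleMap_exp]; fun_prop
  have hcont : Continuous fun p : ℝ × ℝ => koebeGreen (circleMap 0 (Real.exp p.1) p.2) := by
    rw [continuous_iff_continuousAt]
    intro p
    exact (continuousAt_koebeGreen (hne p.1 p.2)).comp (f := fun p : ℝ × ℝ =>
      circleMap 0 (Real.exp p.1) p.2) hcm.continuousAt
  have hnorm : ∀ x φ, ‖circleMap 0 (Real.exp x) φ‖ = Real.exp x := fun x φ => by
    rw [norm_circleMap_zero, abs_of_pos (Real.exp_pos x)]
  refine ⟨hcont, fun x φ => koebeGreen_nonneg (hne x φ), ?_, ?_, ?_⟩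
  · intro x θ hθ hθπ
    refine ⟨(π - θ) / 2, by linarith, fun ε hε hεθ φ hφ => ?_⟩
    set q : ℂ → ℂ := fun ζ => Complex.exp (Complex.log (1 + 4 * Complex.exp ζ) / 2) with hq
    have hslit : ∀ ζ ∈ closedBall (x + φ * I : ℂ) |ε|, 1 + 4 * Complex.exp ζ ∈ slitPlane := by
      intro ζ hζ
      rw [abs_of_pos hε, mem_closedBall, dist_eq_norm] at hζ
      have h1 : |ζ.im - φ| ≤ ε := by
        have := (Complex.abs_im_le_norm (ζ - (x + φ * I))).trans hζ
        simpa using this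
      have h2 : |ζ.im| < π := by
        have h3 := abs_add_le (ζ.im - φ) φ
        rw [sub_add_cancel] at h3
        linarith
      rw [mem_slitPlane_iff]
      by_contra hc
      push Not at hc
      obtain ⟨h3, h4⟩ := hc
      simp only [Complex.add_re, Complex.one_re, Complex.mul_re, Complex.re_ofNat,
        Complex.im_ofNat, zero_mul, sub_zero, Complex.add_im, Complex.one_im, Complex.mul_im,
        zero_add, add_zero, Complex.exp_re, Complex.exp_im] at h3 h4
      have hE := Real.exp_pos ζ.re
      have h5 : Real.sin ζ.im = 0 := by
        rcases mul_eq_zero.1 h4 with h | h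
        · norm_num at h
        · exact (mul_eq_zero.1 h).resolve_left hE.ne'
      have h6 : ζ.im = 0 := (Real.sin_eq_zero_iff_of_lt_of_lt (by linarith [neg_abs_le ζ.im])
        (by linarith [le_abs_self ζ.im])).1 h5
      rw [h6, Real.cos_zero, mul_one] at h3
      linarith
    have hqsq : ∀ ζ ∈ closedBall (x + φ * I : ℂ) |ε|, q ζ ^ 2 = 1 + 4 * Complex.exp ζ := by
      intro ζ hζ
      rw [hq]; simp only
      rw [← Complex.exp_nat_mul]
      push_cast
      rw [mul_div_cancel₀ _ two_ne_zero, Complex.exp_log (slitPlane_ne_zero (hslit ζ hζ))]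
    have hqre : ∀ ζ, 0 ≤ (q ζ).re := by
      intro ζ
      rw [hq]; simp only
      rw [Complex.exp_re]
      refine mul_nonneg (Real.exp_pos _).le (Real.cos_nonneg_of_mem_Icc ?_)
      have e : (Complex.log (1 + 4 * Complex.exp ζ) / 2).im =
          (Complex.log (1 + 4 * Complex.exp ζ)).im / 2 := by simp
      rw [e]
      constructor
      · linarith [Complex.neg_pi_lt_log_im (1 + 4 * Complex.exp ζ)]
      · linarith [Complex.log_im_le_pi (1 + 4 * Complex.exp ζ)]
    have hval : ∀ ζ ∈ closedBall (x + φ * I : ℂ) |ε|,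
        koebeGreen (Complex.exp ζ) = Real.log ‖(q ζ + 1) / (q ζ - 1)‖ := fun ζ hζ =>
      koebeGreen_eq (hqsq ζ hζ) (hqre ζ) (Complex.exp_ne_zero _)
    have hqne : ∀ ζ ∈ closedBall (x + φ * I : ℂ) |ε|, q ζ - 1 ≠ 0 ∧ q ζ + 1 ≠ 0 := by
      intro ζ hζ
      have h1 : (q ζ - 1) * (q ζ + 1) = 4 * Complex.exp ζ := by
        linear_combination hqsq ζ hζ
      have h2 : (q ζ - 1) * (q ζ + 1) ≠ 0 := by
        rw [h1]; exact mul_ne_zero (by norm_num) (Complex.exp_ne_zero _)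
      exact ⟨left_ne_zero_of_mul h2, right_ne_zero_of_mul h2⟩
    have hqa : ∀ ζ ∈ closedBall (x + φ * I : ℂ) |ε|, AnalyticAt ℂ q ζ := fun ζ hζ =>
      (((analyticAt_const.add (analyticAt_const.mul analyticAt_cexp)).clog
        (hslit ζ hζ)).div_const).cexp
    have havg := AnalyticOnNhd.circleAverage_log_norm_of_ne_zero (R := ε) (c := x + φ * I)
      (g := fun ζ => (q ζ + 1) / (q ζ - 1))
      (fun ζ hζ => ((hqa ζ hζ).add analyticAt_const).div ((hqa ζ hζ).sub analyticAt_const)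
        (hqne ζ hζ).1)
      (fun ζ hζ => div_ne_zero (hqne ζ hζ).2 (hqne ζ hζ).1)
    have hs := circleAverage_symm (fun ζ => Real.log ‖(q ζ + 1) / (q ζ - 1)‖) (x + φ * I) ε
    rw [havg] at hs
    simp_rw [circleMap_exp_add]
    rw [circleMap_exp, hval _ (mem_closedBall_self (abs_nonneg ε)), hs]
    refine intervalIntegral.integral_congr fun ψ _ => (hval _ ?_).symm
    rw [abs_of_pos hε]; exact circleMap_mem_closedBall _ hε.le ψ
  · intro ε hε
    have hc : Continuous fun w : ℂ => ‖1 + 4 * w‖ + 1 + 2 * koebeRe w := by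
      unfold koebeRe; fun_prop
    have hr0 : koebeRe 0 = 1 := by simp [koebeRe]
    have hl : ContinuousAt (fun w : ℂ => Real.log (‖1 + 4 * w‖ + 1 + 2 * koebeRe w)) 0 :=
      hc.continuousAt.log (by simp [hr0]; norm_num)
    have h0 : Real.log (‖1 + 4 * (0 : ℂ)‖ + 1 + 2 * koebeRe 0) = Real.log 4 := by
      rw [hr0]; norm_num
    obtain ⟨δ, hδ, hδ'⟩ := Metric.continuousAt_iff.1 hl ε hε
    refine ⟨Real.log δ - 1, fun x hx φ => ?_⟩
    have hlt : Real.exp x < δ := by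
      rw [← Real.lt_log_iff_exp_lt hδ]; linarith
    have := hδ' (x := circleMap 0 (Real.exp x) φ) (by rw [dist_zero_right, hnorm]; exact hlt)
    rw [h0, Real.dist_eq] at this
    simp only [koebeGreen, hnorm, Real.log_exp]
    rw [sub_add_cancel]
    exact this.le
  · intro x
    have hkey : ∀ s : ℝ, 0 < s → s < 1 → 2 * π * Real.log s - 2 * π * x ≤
        ∫ φ in (-π)..π, koebeGreen (circleMap 0 (Real.exp x) φ) := by
      intro s hs hs1
      have h1 := isUnivalent_koebeFun.cartan hs hs1 x
      simp_rw [fun φ => countFun_koebe hs hs1.le (hne x φ)] at h1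
      have hpi : -π ≤ π := by linarith [Real.pi_pos]
      have hgc : Continuous fun φ => koebeGreen (circleMap 0 (Real.exp x) φ) :=
        continuous_iff_continuousAt.2 fun φ => (continuousAt_koebeGreen (hne x φ)).comp
          (f := circleMap 0 (Real.exp x)) (continuous_circleMap 0 _).continuousAt
      have hmemb : ∀ θ, circleMap 0 s θ ∈ ball (0 : ℂ) 1 := fun θ => by
        rw [mem_ball_zero_iff, norm_circleMap_zero, abs_of_pos hs]; exact hs1
      have hlc : Continuous fun θ => Real.log ‖koebeFun (circleMap 0 s θ)‖ :=
        ((isUnivalent_koebeFun.analytic.continuousOn.comp_continuous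
          (continuous_circleMap 0 s) hmemb).norm).log fun θ => norm_ne_zero_iff.2
            (isUnivalent_koebeFun.ne_zero (hmemb θ) (circleMap_ne_center hs.ne'))
      have h2 : ∫ φ in (-π)..π, max (koebeGreen (circleMap 0 (Real.exp x) φ) - -Real.log s) 0 ≤
          ∫ φ in (-π)..π, koebeGreen (circleMap 0 (Real.exp x) φ) := by
        refine intervalIntegral.integral_mono_on hpi ?_ (hgc.intervalIntegrable _ _) ?_
        · exact ((hgc.sub continuous_const).max continuous_const).intervalIntegrable _ _
        · intro φ _
          refine max_le ?_ (koebeGreen_nonneg (hne x φ))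
          linarith [Real.log_nonpos hs.le hs1.le]
      have h3 : ∫ θ in (-π)..π, (Real.log ‖koebeFun (circleMap 0 s θ)‖ - x) ≤
          ∫ θ in (-π)..π, max (Real.log ‖koebeFun (circleMap 0 s θ)‖ - x) 0 := by
        refine intervalIntegral.integral_mono_on hpi ?_ ?_ fun φ _ => le_max_left _ _
        · exact (hlc.sub continuous_const).intervalIntegrable _ _
        · exact ((hlc.sub continuous_const).max continuous_const).intervalIntegrable _ _
      rw [intervalIntegral.integral_sub (hlc.intervalIntegrable _ _) intervalIntegrable_const,
        isUnivalent_koebeFun.integral_log hs hs1] at h3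
      simp only [intervalIntegral.integral_const, smul_eq_mul] at h3
      nlinarith
    have hlim : Tendsto (fun s : ℝ => 2 * π * Real.log s - 2 * π * x) (𝓝[<] 1)
        (𝓝 (2 * π * Real.log 1 - 2 * π * x)) := by
      refine Tendsto.mono_left ?_ nhdsWithin_le_nhds
      exact ((continuousAt_const.mul (Real.continuousAt_log one_ne_zero)).sub
        continuousAt_const).tendsto
    rw [Real.log_one, mul_zero, zero_sub] at hlim
    refine le_of_tendsto hlim ?_
    filter_upwards [Ioo_mem_nhdsLT (zero_lt_one' ℝ)] with s hs using hkey s hs.1 hs.2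

lemma countFun_shift {F : ℂ → ℂ} {R s : ℝ} (hs : 0 < s) (hs1 : s ≤ 1) (w : ℂ) :
    countFun F R s w = max (countFun F R 1 w - -Real.log s) 0 := by
  have hl := Real.log_nonpos hs.le hs1
  rw [countFun, countFun]
  split_ifs with hmem
  · rw [Real.log_one, zero_sub, sub_neg_eq_add]
    rcases le_total (-Real.log ‖uinv F R w‖) 0 with h | h
    · rw [max_eq_right h, max_eq_right (by linarith), max_eq_right (by linarith)]
    · rw [max_eq_left h]; congr 1; ring
  · rw [max_eq_right (by linarith)]

/-- Baernstein's inequality: among univalent functions, the Koebe function maximizes the integral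
means of `(log |F| - t)⁺`. -/
theorem IsUnivalent.baernstein {F : ℂ → ℂ} {R s : ℝ} (h : IsUnivalent F R) (hR : 1 < R)
    (hs : 0 < s) (hs1 : s < 1) (t : ℝ) :
    ∫ θ in (-π)..π, max (Real.log ‖F (circleMap 0 s θ)‖ - t) 0 ≤
      ∫ θ in (-π)..π, max (Real.log ‖koebeFun (circleMap 0 s θ)‖ - t) 0 := by
  rw [h.cartan hs (hs1.trans hR), isUnivalent_koebeFun.cartan hs hs1]
  have hne : ∀ φ, circleMap 0 (Real.exp t) φ ≠ 0 := fun φ =>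
    circleMap_ne_center (Real.exp_pos t).ne'
  simp_rw [fun φ => countFun_koebe hs hs1.le (hne φ),
    fun φ => countFun_shift (F := F) (R := R) hs hs1.le (circleMap 0 (Real.exp t) φ)]
  exact integral_posPart_le (h.isGreenLike hR) isKoebeLike_koebeGreen t (-Real.log s)

/-! ### Convex means -/

lemma integral_posPart_mul {κ H : ℝ → ℝ} (hκ : Continuous κ) {x m M : ℝ} (hm : m ≤ x) (hM : x ≤ M)
    (hH : ∀ t, HasDerivAt H ((x - t) * κ t) t) :
    ∫ t in m..M, max (x - t) 0 * κ t = H x - H m := by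
  have hc : Continuous fun t => max (x - t) 0 * κ t := by fun_prop
  rw [← intervalIntegral.integral_add_adjacent_intervals (hc.intervalIntegrable m x)
    (hc.intervalIntegrable x M)]
  have h1 : ∫ t in m..x, max (x - t) 0 * κ t = ∫ t in m..x, (x - t) * κ t := by
    refine intervalIntegral.integral_congr fun t ht => ?_
    rw [uIcc_of_le hm] at ht
    rw [max_eq_left (by linarith [ht.2])]
  have h2 : ∫ t in x..M, max (x - t) 0 * κ t = ∫ t in x..M, (0 : ℝ) := by
    refine intervalIntegral.integral_congr fun t ht => ?_
    rw [uIcc_of_le hM] at ht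
    rw [max_eq_right (by linarith [ht.1]), zero_mul]
  rw [h1, h2, intervalIntegral.integral_zero, add_zero]
  refine intervalIntegral.integral_eq_sub_of_hasDerivAt (fun t _ => hH t) ?_
  exact (by fun_prop : Continuous fun t => (x - t) * κ t).intervalIntegrable _ _

lemma integral_posPart_swap {A κ : ℝ → ℝ} (hA : Continuous A) (hκ : Continuous κ) {m M : ℝ}
    (hmM : m ≤ M) :
    ∫ ψ in (-π)..π, ∫ t in m..M, max (A ψ - t) 0 * κ t =
      ∫ t in m..M, κ t * ∫ ψ in (-π)..π, max (A ψ - t) 0 := by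
  have h := (swap_mean (χ := fun _ => 1) measurable_const (fun _ => zero_le_one) (fun _ => le_rfl)
    (w := fun ψ t => max (A ψ - t) 0 * κ t) (by fun_prop) hmM).2
  simp only [one_mul] at h
  rw [h]
  refine intervalIntegral.integral_congr fun t _ => ?_
  rw [intervalIntegral.integral_mul_const, mul_comm]

lemma continuous_integral_posPart {A : ℝ → ℝ} (hA : Continuous A) :
    Continuous fun t => ∫ ψ in (-π)..π, max (A ψ - t) 0 :=
  intervalIntegral.continuous_parametric_intervalIntegral_of_continuous'
    (by unfold Function.uncurry; fun_prop) _ _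

lemma exists_bounds {A : ℝ → ℝ} (hA : Continuous A) :
    ∃ C, ∀ ψ ∈ Icc (-π) π, |A ψ| ≤ C := by
  obtain ⟨C, hC⟩ := isCompact_Icc.exists_bound_of_continuousOn (hA.continuousOn (s := Icc (-π) π))
  exact ⟨C, hC⟩

/-- Domination of the means of `(· - t)⁺` together with equality of means gives domination of the
second moments, because `(x - m)² / 2` is the integral of `(x - t)⁺` over `t ≥ m`. -/
lemma integral_sq_le {A B : ℝ → ℝ} (hA : Continuous A) (hB : Continuous B)
    (hmean : ∫ ψ in (-π)..π, A ψ = ∫ ψ in (-π)..π, B ψ)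
    (hle : ∀ t, ∫ ψ in (-π)..π, max (A ψ - t) 0 ≤ ∫ ψ in (-π)..π, max (B ψ - t) 0) :
    ∫ ψ in (-π)..π, A ψ ^ 2 ≤ ∫ ψ in (-π)..π, B ψ ^ 2 := by
  obtain ⟨C₁, hC₁⟩ := exists_bounds hA
  obtain ⟨C₂, hC₂⟩ := exists_bounds hB
  set M := max C₁ C₂
  have hpi : -π ≤ π := by linarith [Real.pi_pos]
  have hM : -M ≤ M := by
    have := (abs_nonneg _).trans (hC₁ π ⟨hpi, le_rfl⟩)
    have : 0 ≤ M := this.trans (le_max_left _ _)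
    linarith
  have key : ∀ D : ℝ → ℝ, Continuous D → (∀ ψ ∈ Icc (-π) π, |D ψ| ≤ M) →
      ∫ ψ in (-π)..π, D ψ ^ 2 = 2 * (∫ t in (-M)..M, ∫ ψ in (-π)..π, max (D ψ - t) 0) -
        2 * M * (∫ ψ in (-π)..π, D ψ) - ∫ ψ in (-π)..π, M ^ 2 := by
    intro D hD hb
    have h := integral_posPart_swap hD (κ := fun _ => 1) continuous_const hM
    simp only [one_mul] at h
    rw [← h, ← intervalIntegral.integral_const_mul, ← intervalIntegral.integral_const_mul,
      ← intervalIntegral.integral_sub, ← intervalIntegral.integral_sub]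
    · refine intervalIntegral.integral_congr fun ψ hψ => ?_
      rw [uIcc_of_le hpi] at hψ
      have hbψ := abs_le.1 (hb ψ hψ)
      have h2 := integral_posPart_mul (κ := fun _ => 1) (H := fun t => -(D ψ - t) ^ 2 / 2)
        continuous_const hbψ.1 hbψ.2 (fun t => by
          have := ((((hasDerivAt_id t).const_sub (D ψ)).fun_pow 2).fun_neg).div_const 2
          refine this.congr_deriv ?_
          simp)
      simp only [h2]
      ring
    · refine Continuous.intervalIntegrable ?_ _ _
      refine Continuous.sub (continuous_const.mul ?_) (by fun_prop)
      exact intervalIntegral.continuous_parametric_intervalIntegral_of_continuous'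
        (by unfold Function.uncurry; fun_prop) _ _
    · exact intervalIntegrable_const
    · refine Continuous.intervalIntegrable (continuous_const.mul ?_) _ _
      exact intervalIntegral.continuous_parametric_intervalIntegral_of_continuous'
        (by unfold Function.uncurry; fun_prop) _ _
    · exact (by fun_prop : Continuous fun ψ => 2 * M * D ψ).intervalIntegrable _ _
  rw [key A hA fun ψ hψ => (hC₁ ψ hψ).trans (le_max_left _ _),
    key B hB fun ψ hψ => (hC₂ ψ hψ).trans (le_max_right _ _), hmean]
  have := intervalIntegral.integral_mono_on (μ := volume) hM
    ((continuous_integral_posPart hA).intervalIntegrable _ _)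
    ((continuous_integral_posPart hB).intervalIntegrable _ _) (fun t _ => hle t)
  linarith

/-- If the means of `(· - t)⁺` grow from `A` to `B` by at most the growth of the means, then the
means of `exp (-·)` decrease. -/
lemma integral_exp_neg_le {A B : ℝ → ℝ} (hA : Continuous A) (hB : Continuous B) {d : ℝ}
    (hd : 0 ≤ d) (hmean : ∫ ψ in (-π)..π, B ψ = (∫ ψ in (-π)..π, A ψ) + d)
    (hle : ∀ t, ∫ ψ in (-π)..π, max (B ψ - t) 0 ≤ (∫ ψ in (-π)..π, max (A ψ - t) 0) + d) :
    ∫ ψ in (-π)..π, Real.exp (-B ψ) ≤ ∫ ψ in (-π)..π, Real.exp (-A ψ) := by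
  obtain ⟨C₁, hC₁⟩ := exists_bounds hA
  obtain ⟨C₂, hC₂⟩ := exists_bounds hB
  set M := max C₁ C₂
  have hpi : -π ≤ π := by linarith [Real.pi_pos]
  have hM : -M ≤ M := by
    have := (abs_nonneg _).trans (hC₁ π ⟨hpi, le_rfl⟩)
    have : 0 ≤ M := this.trans (le_max_left _ _)
    linarith
  have key : ∀ D : ℝ → ℝ, Continuous D → (∀ ψ ∈ Icc (-π) π, |D ψ| ≤ M) →
      ∫ ψ in (-π)..π, Real.exp (-D ψ) =
        (∫ t in (-M)..M, Real.exp (-t) * ∫ ψ in (-π)..π, max (D ψ - t) 0) -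
        Real.exp M * (∫ ψ in (-π)..π, D ψ) - ∫ ψ in (-π)..π, (Real.exp M * M - Real.exp M) := by
    intro D hD hb
    have h := integral_posPart_swap hD (κ := fun t => Real.exp (-t)) (by fun_prop) hM
    rw [← h, ← intervalIntegral.integral_const_mul,
      ← intervalIntegral.integral_sub, ← intervalIntegral.integral_sub]
    · refine intervalIntegral.integral_congr fun ψ hψ => ?_
      rw [uIcc_of_le hpi] at hψ
      have hbψ := abs_le.1 (hb ψ hψ)
      have h2 := integral_posPart_mul (κ := fun t => Real.exp (-t))
        (H := fun t => (1 - (D ψ - t)) * Real.exp (-t))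
        (by fun_prop) hbψ.1 hbψ.2 (fun t => by
          have h3 := (((hasDerivAt_id t).const_sub (D ψ)).const_sub 1).fun_mul
            (hasDerivAt_id t).fun_neg.exp
          refine h3.congr_deriv ?_
          simp
          ring)
      simp only [h2]
      rw [neg_neg]
      ring
    · refine Continuous.intervalIntegrable ?_ _ _
      refine Continuous.sub ?_ (by fun_prop)
      exact intervalIntegral.continuous_parametric_intervalIntegral_of_continuous'
        (by unfold Function.uncurry; fun_prop) _ _
    · exact intervalIntegrable_const
    · refine Continuous.intervalIntegrable ?_ _ _
      exact intervalIntegral.continuous_parametric_intervalIntegral_of_continuous'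
        (by unfold Function.uncurry; fun_prop) _ _
    · exact (by fun_prop : Continuous fun ψ => Real.exp M * D ψ).intervalIntegrable _ _
  rw [key A hA fun ψ hψ => (hC₁ ψ hψ).trans (le_max_left _ _),
    key B hB fun ψ hψ => (hC₂ ψ hψ).trans (le_max_right _ _), hmean]
  have hce : Continuous fun t : ℝ => Real.exp (-t) := by fun_prop
  have h1 := intervalIntegral.integral_mono_on (μ := volume) hM
    ((hce.fun_mul (continuous_integral_posPart hB)).intervalIntegrable _ _)
    ((hce.fun_mul ((continuous_integral_posPart hA).fun_add continuous_const)).intervalIntegrable _ _)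
    (fun t _ => mul_le_mul_of_nonneg_left (hle t) (Real.exp_pos _).le)
  have h2 : ∫ t in (-M)..M, Real.exp (-t) * ((∫ ψ in (-π)..π, max (A ψ - t) 0) + d) =
      (∫ t in (-M)..M, Real.exp (-t) * (∫ ψ in (-π)..π, max (A ψ - t) 0)) +
        (Real.exp M - Real.exp (-M)) * d := by
    simp_rw [mul_add]
    rw [intervalIntegral.integral_add
      ((hce.fun_mul (continuous_integral_posPart hA)).intervalIntegrable _ _)
      ((hce.fun_mul continuous_const).intervalIntegrable _ _), intervalIntegral.integral_mul_const]
    congr 2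
    rw [intervalIntegral.integral_comp_neg (fun t => Real.exp t), integral_exp, neg_neg]
  have h3 : 0 ≤ Real.exp (-M) * d := by positivity
  nlinarith

namespace IsUnivalent

variable {F : ℂ → ℂ} {R s : ℝ}

lemma continuous_log (h : IsUnivalent F R) (hs : 0 < s) (hsR : s < R) :
    Continuous fun θ => Real.log ‖F (circleMap 0 s θ)‖ := by
  have hmemb : ∀ θ, circleMap 0 s θ ∈ ball (0 : ℂ) R := fun θ => by
    rw [mem_ball_zero_iff, norm_circleMap_zero, abs_of_pos hs]; exact hsR
  exact ((h.analytic.continuousOn.comp_continuous (continuous_circleMap 0 s) hmemb).norm).log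
    fun θ => norm_ne_zero_iff.2 (h.ne_zero (hmemb θ) (circleMap_ne_center hs.ne.symm))

/-- The second moment of `log |F(z) / z|` on a circle is maximal for the Koebe function. -/
theorem integral_log_sq_le (h : IsUnivalent F R) (hR : 1 < R) (hs : 0 < s) (hs1 : s < 1) :
    ∫ θ in (-π)..π, (Real.log ‖F (circleMap 0 s θ)‖ - Real.log s) ^ 2 ≤
      ∫ θ in (-π)..π, (Real.log ‖koebeFun (circleMap 0 s θ)‖ - Real.log s) ^ 2 := by
  have hF := h.continuous_log hs (hs1.trans hR)
  have hK := isUnivalent_koebeFun.continuous_log hs hs1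
  refine integral_sq_le (hF.fun_sub continuous_const) (hK.fun_sub continuous_const) ?_ fun t => ?_
  · rw [intervalIntegral.integral_sub (hF.intervalIntegrable _ _) intervalIntegrable_const,
      intervalIntegral.integral_sub (hK.intervalIntegrable _ _) intervalIntegrable_const,
      h.integral_log hs (hs1.trans hR), isUnivalent_koebeFun.integral_log hs hs1]
  · simp_rw [sub_sub]
    exact h.baernstein hR hs hs1 (Real.log s + t)

/-- The mean of `1 / |F|` over circles decreases with the radius; this is a form of the area
theorem for `F(z²)^(-1/2)`. -/
theorem integral_inv_norm_le (h : IsUnivalent F R) (hR : 1 < R) (hs : 0 < s) (hs1 : s < 1) :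
    ∫ θ in (-π)..π, ‖F (circleMap 0 1 θ)‖⁻¹ ≤ ∫ θ in (-π)..π, ‖F (circleMap 0 s θ)‖⁻¹ := by
  have hsR := hs1.trans hR
  have hl := Real.log_nonpos hs.le hs1.le
  have hexp : ∀ r, 0 < r → r < R → ∀ θ, ‖F (circleMap 0 r θ)‖⁻¹ =
      Real.exp (-Real.log ‖F (circleMap 0 r θ)‖) := fun r hr hrR θ => by
    rw [Real.exp_neg, Real.exp_log (norm_pos_iff.2 (h.ne_zero _ (circleMap_ne_center hr.ne')))]
    rw [mem_ball_zero_iff, norm_circleMap_zero, abs_of_pos hr]; exact hrR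
  simp_rw [hexp 1 one_pos hR, hexp s hs hsR]
  refine integral_exp_neg_le (d := -(2 * π * Real.log s)) (h.continuous_log hs hsR)
    (h.continuous_log one_pos hR) ?_ ?_ ?_
  · have := Real.pi_pos
    nlinarith
  · rw [h.integral_log one_pos hR, h.integral_log hs hsR, Real.log_one]; ring
  · intro t
    rw [h.cartan one_pos hR, h.cartan hs hsR]
    simp_rw [fun φ => countFun_shift (F := F) (R := R) hs hs1.le (circleMap 0 (Real.exp t) φ)]
    have hc := (h.isGreenLike hR).cont_slice t
    have hc2 : Continuous fun φ =>
        max (countFun F R 1 (circleMap 0 (Real.exp t) φ) - -Real.log s) 0 :=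
      (hc.fun_sub continuous_const).max continuous_const
    have e : -(2 * π * Real.log s) = ∫ _φ in (-π)..π, -Real.log s := by
      simp only [intervalIntegral.integral_const, smul_eq_mul]; ring
    rw [e, ← intervalIntegral.integral_add
      (hc2.intervalIntegrable _ _) intervalIntegrable_const]
    refine intervalIntegral.integral_mono_on (by linarith [Real.pi_pos])
      (hc.intervalIntegrable _ _)
      ((hc2.add continuous_const).intervalIntegrable _ _) fun φ _ => ?_
    have := le_max_left (countFun F R 1 (circleMap 0 (Real.exp t) φ) - -Real.log s) 0
    linarith

end IsUnivalent

/-! ### Parseval's formula -/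

lemma hasSum_intervalIntegral {E : Type*} [NormedAddCommGroup E] [NormedSpace ℝ E]
    {p : ℕ → ℝ → E} {q : ℝ → E} {u : ℕ → ℝ} {a b : ℝ} (hab : a ≤ b) (hu : Summable u)
    (hp : ∀ n, Continuous (p n)) (hb : ∀ n, ∀ t ∈ Icc a b, ‖p n t‖ ≤ u n)
    (hq : ∀ t ∈ Icc a b, HasSum (fun n => p n t) (q t)) :
    HasSum (fun n => ∫ t in a..b, p n t) (∫ t in a..b, q t) := by
  have hsub : ∀ t, t ∈ uIoc a b → t ∈ Icc a b := fun t ht => by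
    rw [uIoc_of_le hab] at ht; exact Ioc_subset_Icc_self ht
  exact intervalIntegral.hasSum_integral_of_dominated_convergence (fun n _ => u n)
    (fun n => (hp n).aestronglyMeasurable)
    (fun n => Eventually.of_forall fun t ht => hb n t (hsub t ht))
    (Eventually.of_forall fun _ _ => hu) intervalIntegrable_const
    (Eventually.of_forall fun t ht => hq t (hsub t ht))

lemma integral_circleMap_pow_mul_conj (r : ℝ) (m n : ℕ) :
    ∫ θ in (-π)..π, circleMap 0 r θ ^ n * (starRingEnd ℂ) (circleMap 0 r θ ^ m) =
      if n = m then ((2 * π * r ^ (2 * m) : ℝ) : ℂ) else 0 := by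
  have e : ∀ θ : ℝ, circleMap 0 r θ ^ n * (starRingEnd ℂ) (circleMap 0 r θ ^ m) =
      (r : ℂ) ^ (n + m) * cexp ((((n : ℂ) - m) * I) * θ) := fun θ => by
    rw [circleMap_zero, map_pow, map_mul, conj_ofReal, ← Complex.exp_conj, map_mul, conj_ofReal,
      conj_I, mul_pow, mul_pow, ← Complex.exp_nat_mul, ← Complex.exp_nat_mul, pow_add,
      mul_mul_mul_comm, ← Complex.exp_add]
    congr 2
    ring
  simp_rw [e]
  rw [intervalIntegral.integral_const_mul]
  split_ifs with h
  · subst h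
    simp
    ring
  · have hne : ((n : ℂ) - m) * I ≠ 0 :=
      mul_ne_zero (sub_ne_zero.2 (by exact_mod_cast h)) I_ne_zero
    rw [integral_exp_mul_complex hne]
    have : cexp (((n : ℂ) - m) * I * (π : ℝ)) = cexp (((n : ℂ) - m) * I * ((-π : ℝ) : ℝ)) := by
      rw [Complex.exp_eq_exp_iff_exists_int]
      refine ⟨(n : ℤ) - m, ?_⟩
      push_cast
      ring
    rw [this]
    simp

/-- Parseval's formula on a circle for an absolutely convergent power series. -/
lemma hasSum_parseval {a : ℕ → ℂ} {r : ℝ} (hr : 0 ≤ r) {q : ℝ → ℂ} (hqc : Continuous q)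
    (ha : Summable fun n => ‖a n‖ * r ^ n)
    (hq : ∀ θ, HasSum (fun n => a n * circleMap 0 r θ ^ n) (q θ)) :
    HasSum (fun n => 2 * π * (‖a n‖ ^ 2 * r ^ (2 * n))) (∫ θ in (-π)..π, ‖q θ‖ ^ 2) := by
  have hpi : -π ≤ π := by linarith [Real.pi_pos]
  have hn : ∀ θ, ‖circleMap 0 r θ‖ = r := fun θ => by
    rw [norm_circleMap_zero, abs_of_nonneg hr]
  have hcc : Continuous (circleMap 0 r) := continuous_circleMap 0 r
  have h1 : ∀ m, ∫ θ in (-π)..π, q θ * (starRingEnd ℂ) (circleMap 0 r θ ^ m) =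
      a m * ((2 * π * r ^ (2 * m) : ℝ) : ℂ) := fun m => by
    have h := hasSum_intervalIntegral hpi (ha.mul_right (r ^ m))
      (p := fun n θ => a n * circleMap 0 r θ ^ n * (starRingEnd ℂ) (circleMap 0 r θ ^ m))
      (q := fun θ => q θ * (starRingEnd ℂ) (circleMap 0 r θ ^ m))
      (fun n => by fun_prop) (fun n θ _ => by simp [hn])
      (fun θ _ => (hq θ).mul_right _)
    have e : ∀ n, ∫ θ in (-π)..π,
        a n * circleMap 0 r θ ^ n * (starRingEnd ℂ) (circleMap 0 r θ ^ m) =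
        a n * if n = m then ((2 * π * r ^ (2 * m) : ℝ) : ℂ) else 0 := fun n => by
      rw [← integral_circleMap_pow_mul_conj, ← intervalIntegral.integral_const_mul]
      simp_rw [mul_assoc]
    have h' := hasSum_single
      (f := fun n => ∫ θ in (-π)..π, a n * circleMap 0 r θ ^ n *
        (starRingEnd ℂ) (circleMap 0 r θ ^ m)) m (fun n hnm => by rw [e, if_neg hnm, mul_zero])
    rw [e, if_pos rfl] at h'
    exact h.unique h'
  have hM : ∀ θ, ‖q θ‖ ≤ ∑' n, ‖a n‖ * r ^ n := fun θ => by
    rw [← (hq θ).tsum_eq]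
    have : Summable fun n => ‖a n * circleMap 0 r θ ^ n‖ := by simpa [hn] using ha
    refine (norm_tsum_le_tsum_norm this).trans (le_of_eq ?_)
    simp [hn]
  have h2 := hasSum_intervalIntegral hpi (ha.mul_left (∑' n, ‖a n‖ * r ^ n))
    (p := fun n θ => q θ * (starRingEnd ℂ) (a n * circleMap 0 r θ ^ n))
    (q := fun θ => q θ * (starRingEnd ℂ) (q θ))
    (fun n => by fun_prop)
    (fun n θ _ => by
      rw [norm_mul, RCLike.norm_conj, norm_mul, norm_pow, hn]
      exact mul_le_mul_of_nonneg_right (hM θ) (by positivity))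
    (fun θ _ => (Complex.hasSum_conj'.2 (hq θ)).mul_left _)
  have e1 : ∀ n, ∫ θ in (-π)..π, q θ * (starRingEnd ℂ) (a n * circleMap 0 r θ ^ n) =
      ((2 * π * (‖a n‖ ^ 2 * r ^ (2 * n)) : ℝ) : ℂ) := fun n => by
    have : ∀ θ, q θ * (starRingEnd ℂ) (a n * circleMap 0 r θ ^ n) =
        (starRingEnd ℂ) (a n) * (q θ * (starRingEnd ℂ) (circleMap 0 r θ ^ n)) := fun θ => by
      rw [map_mul]; ring
    simp_rw [this]
    rw [intervalIntegral.integral_const_mul, h1, ← mul_assoc, mul_comm _ (a n), Complex.mul_conj,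
      Complex.normSq_eq_norm_sq]
    push_cast
    ring
  have e2 : ∫ θ in (-π)..π, q θ * (starRingEnd ℂ) (q θ) =
      ((∫ θ in (-π)..π, ‖q θ‖ ^ 2 : ℝ) : ℂ) := by
    simp_rw [Complex.mul_conj, Complex.normSq_eq_norm_sq]
    exact intervalIntegral.integral_ofReal
  rw [e2, funext e1] at h2
  exact Complex.hasSum_ofReal.1 h2

/-- Taylor coefficients at the origin. -/
noncomputable def taylorCoeff (g : ℂ → ℂ) (n : ℕ) : ℂ := (n.factorial : ℂ)⁻¹ * iteratedDeriv n g 0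

lemma hasSum_taylorCoeff {g : ℂ → ℂ} (hg : AnalyticOnNhd ℂ g (ball 0 1)) {z : ℂ}
    (hz : z ∈ ball (0 : ℂ) 1) : HasSum (fun n => taylorCoeff g n * z ^ n) (g z) := by
  have e : (fun n => taylorCoeff g n * z ^ n) = fun n : ℕ =>
      (n.factorial : ℂ)⁻¹ • (z - 0) ^ n • iteratedDeriv n g 0 := by
    funext n
    simp only [taylorCoeff, sub_zero, smul_eq_mul]
    ring
  rw [e]
  exact Complex.hasSum_taylorSeries_on_ball hg.differentiableOn hz

/-- `a` are the coefficients of a power series that represents `g` on the unit disk. -/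
def HasCoeffs (g : ℂ → ℂ) (a : ℕ → ℂ) : Prop :=
  ∀ z ∈ ball (0 : ℂ) 1, HasSum (fun n => a n * z ^ n) (g z)

lemma hasCoeffs_taylorCoeff {g : ℂ → ℂ} (hg : AnalyticOnNhd ℂ g (ball 0 1)) :
    HasCoeffs g (taylorCoeff g) := fun _ hz => hasSum_taylorCoeff hg hz

lemma HasCoeffs.summable {g : ℂ → ℂ} {a : ℕ → ℂ} (ha : HasCoeffs g a) {r : ℝ}
    (hr : 0 ≤ r) (hr1 : r < 1) : Summable fun n => ‖a n‖ * r ^ n := by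
  have h := (ha (r : ℂ) (by simpa [abs_of_nonneg hr])).summable.norm
  simpa [abs_of_nonneg hr] using h

lemma circleMap_mem_unitBall {r : ℝ} (hr : 0 ≤ r) (hr1 : r < 1) (θ : ℝ) :
    circleMap 0 r θ ∈ ball (0 : ℂ) 1 := by
  rwa [mem_ball_zero_iff, norm_circleMap_zero, abs_of_nonneg hr]

lemma continuous_comp_circleMap {g : ℂ → ℂ} (hg : AnalyticOnNhd ℂ g (ball 0 1)) {r : ℝ}
    (hr : 0 ≤ r) (hr1 : r < 1) : Continuous fun θ => g (circleMap 0 r θ) :=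
  hg.continuousOn.comp_continuous (continuous_circleMap 0 r) (circleMap_mem_unitBall hr hr1)

lemma HasCoeffs.hasSum_sq {g : ℂ → ℂ} {a : ℕ → ℂ} (ha : HasCoeffs g a)
    (hg : AnalyticOnNhd ℂ g (ball 0 1)) {r : ℝ} (hr : 0 ≤ r) (hr1 : r < 1) :
    HasSum (fun n => 2 * π * (‖a n‖ ^ 2 * r ^ (2 * n)))
      (∫ θ in (-π)..π, ‖g (circleMap 0 r θ)‖ ^ 2) :=
  hasSum_parseval hr (continuous_comp_circleMap hg hr hr1) (ha.summable hr hr1)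
    fun θ => ha _ (circleMap_mem_unitBall hr hr1 θ)

/-- The mean of `g ^ 2` vanishes when `g 0 = 0`, so the real part carries half of the second
moment of `g`. -/
lemma HasCoeffs.hasSum_re_sq {g : ℂ → ℂ} {a : ℕ → ℂ} (ha : HasCoeffs g a)
    (hg : AnalyticOnNhd ℂ g (ball 0 1)) (h8 : a 0 = 0) {r : ℝ} (hr : 0 ≤ r) (hr1 : r < 1) :
    HasSum (fun n => π * (‖a (n + 1)‖ ^ 2 * r ^ (2 * (n + 1))))
      (∫ θ in (-π)..π, (g (circleMap 0 r θ)).re ^ 2) := by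
  have h0 : g 0 = 0 := by
    refine (ha 0 (mem_ball_self one_pos)).unique ?_
    have h' := hasSum_single (f := fun n => a n * (0 : ℂ) ^ n) 0 (fun n hn => by simp [hn])
    rwa [h8, zero_mul] at h'
  have h1 := ha.hasSum_sq hg hr hr1
  have hc := continuous_comp_circleMap hg hr hr1
  have hsq : AnalyticOnNhd ℂ (fun z => g z ^ 2) (ball 0 1) := hg.fun_pow 2
  have h2 : ∫ θ in (-π)..π, ((g (circleMap 0 r θ)) ^ 2).re = 0 := by
    have h3 := circleAverage_symm (fun z => (g z ^ 2).re) 0 r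
    rw [← h3]
    have hd : DiffContOnCl ℂ (fun z => g z ^ 2) (ball 0 |r|) := by
      refine (hsq.differentiableOn.mono ?_).diffContOnCl_ball (U := ball 0 1) ?_
      · exact Subset.rfl
      · rw [abs_of_nonneg hr]; exact closedBall_subset_ball hr1
    have h4 := hd.circleAverage
    have hci : CircleIntegrable (fun z => g z ^ 2) 0 r :=
      (hc.fun_pow 2).intervalIntegrable _ _
    have h5 : circleAverage (fun z => (g z ^ 2).re) 0 r = (circleAverage (fun z => g z ^ 2) 0 r).re := by
      exact (Complex.reCLM.circleAverage_comp_comm hci)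
    rw [h5, h4, h0]
    simp
  have h6 : ∫ θ in (-π)..π, (g (circleMap 0 r θ)).re ^ 2 =
      1 / 2 * (∫ θ in (-π)..π, ‖g (circleMap 0 r θ)‖ ^ 2) +
      1 / 2 * (∫ θ in (-π)..π, ((g (circleMap 0 r θ)) ^ 2).re) := by
    rw [← intervalIntegral.integral_const_mul, ← intervalIntegral.integral_const_mul,
      ← intervalIntegral.integral_add]
    · refine intervalIntegral.integral_congr fun θ _ => ?_
      have hns := Complex.normSq_eq_norm_sq (g (circleMap 0 r θ))
      rw [Complex.normSq_apply] at hns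
      simp only [← hns, sq, Complex.mul_re]
      ring
    · exact (continuous_const.fun_mul (hc.norm.fun_pow 2)).intervalIntegrable _ _
    · exact (continuous_const.fun_mul (Complex.continuous_re.comp (hc.fun_pow 2))).intervalIntegrable _ _
  rw [h6, h2, mul_zero, add_zero]
  have h7 := (hasSum_nat_add_iff' 1).2 (h1.mul_left (1 / 2))
  simp only [Finset.sum_range_one, h8] at h7
  have h9 : (1 / 2 * ∫ θ in (-π)..π, ‖g (circleMap 0 r θ)‖ ^ 2) -
      1 / 2 * (2 * π * (‖(0 : ℂ)‖ ^ 2 * r ^ (2 * 0))) =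
      1 / 2 * ∫ θ in (-π)..π, ‖g (circleMap 0 r θ)‖ ^ 2 := by rw [norm_zero]; ring
  rw [h9] at h7
  have h10 : (fun n => π * (‖a (n + 1)‖ ^ 2 * r ^ (2 * (n + 1)))) = fun n =>
      1 / 2 * (2 * π * (‖a (n + 1)‖ ^ 2 * r ^ (2 * (n + 1)))) := by
    funext n; ring
  rw [h10]
  exact h7

/-! ### Second moments of the logarithmic coefficients -/

/-- A function injective on the unit disk, rescaled so as to be univalent on a larger disk. -/
lemma isUnivalent_rescale {f : ℂ → ℂ} (ha : AnalyticOnNhd ℂ f (ball 0 1))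
    (hi : InjOn f (ball 0 1)) (h0 : f 0 = 0) (hd : deriv f 0 = 1) {ρ : ℝ} (hρ : 0 < ρ) :
    IsUnivalent (fun z => f (ρ * z) / ρ) (1 / ρ) := by
  have hρ' : (ρ : ℂ) ≠ 0 := ofReal_ne_zero.2 hρ.ne'
  have hm : ∀ z ∈ ball (0 : ℂ) (1 / ρ), (ρ : ℂ) * z ∈ ball (0 : ℂ) 1 := fun z hz => by
    rw [mem_ball_zero_iff] at hz ⊢
    rw [norm_mul, norm_real, Real.norm_of_nonneg hρ.le]
    rw [lt_div_iff₀ hρ] at hz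
    linarith
  refine ⟨by positivity, fun z hz => ?_, fun z hz w hw e => ?_, by simp [h0], ?_⟩
  · have h1 : AnalyticAt ℂ (fun z : ℂ => (ρ : ℂ) * z) z := analyticAt_const.fun_mul analyticAt_id
    have h2 : AnalyticAt ℂ (fun z => f (ρ * z)) z :=
      AnalyticAt.fun_comp (g := f) (f := fun z : ℂ => (ρ : ℂ) * z) (ha _ (hm z hz)) h1
    exact h2.fun_div analyticAt_const hρ'
  · have e' : f (ρ * z) = f (ρ * w) := by
      have := congrArg (· * (ρ : ℂ)) e
      simpa [hρ'] using this
    exact mul_left_cancel₀ hρ' (hi (hm z hz) (hm w hw) e')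
  · have h1 : HasDerivAt f 1 ((ρ : ℂ) * 0) := by
      rw [mul_zero, ← hd]
      exact (ha 0 (mem_ball_self one_pos)).differentiableAt.hasDerivAt
    have h2 : HasDerivAt (fun z : ℂ => (ρ : ℂ) * z) (ρ : ℂ) 0 :=
      ((hasDerivAt_id (0 : ℂ)).const_mul (ρ : ℂ)).congr_deriv (mul_one _)
    have h3 : HasDerivAt (fun z => f (ρ * z) / ρ) (1 * (ρ : ℂ) / ρ) 0 :=
      (HasDerivAt.comp (h₂ := f) (0 : ℂ) h1 h2).div_const _
    rw [h3.deriv]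
    field_simp

lemma norm_of_exp_eq {f g : ℂ → ℂ} {z : ℂ} (hz : z ≠ 0) (h : cexp (g z) = f z / z) :
    ‖f z‖ = ‖z‖ * Real.exp (g z).re := by
  rw [← Complex.norm_exp, h, norm_div]
  field_simp [norm_ne_zero_iff.2 hz]

/-- The branch of `log (k z / z)` for the Koebe function `k`. -/
noncomputable def koebeLog (z : ℂ) : ℂ := 2 * -Complex.log (1 - z)

lemma analyticOnNhd_koebeLog : AnalyticOnNhd ℂ koebeLog (ball 0 1) := fun z hz => by
  refine analyticAt_const.fun_mul (AnalyticAt.fun_neg (AnalyticAt.clog (by fun_prop) ?_))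
  refine Or.inl ?_
  rw [sub_re, one_re, sub_pos]
  exact (re_le_norm z).trans_lt (mem_ball_zero_iff.1 hz)

lemma hasCoeffs_koebeLog : HasCoeffs koebeLog fun n => 2 / (n : ℂ) := fun z hz => by
  have h := (Complex.hasSum_taylorSeries_neg_log (mem_ball_zero_iff.1 hz)).mul_left 2
  have e : (fun n : ℕ => 2 / (n : ℂ) * z ^ n) = fun n : ℕ => 2 * (z ^ n / n) := by
    funext n; ring
  rw [e]
  exact h

lemma exp_koebeLog {z : ℂ} (hz : z ∈ ball (0 : ℂ) 1) (h0 : z ≠ 0) :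
    cexp (koebeLog z) = koebeFun z / z := by
  have h1 : (1 - z) ≠ 0 := by
    intro e
    rw [← sub_eq_zero.1 e] at hz
    simp at hz
  rw [koebeLog, two_mul, Complex.exp_add, Complex.exp_neg, Complex.exp_log h1, koebeFun]
  field_simp

section

variable {f g : ℂ → ℂ}

/-- Baernstein's inequality for the second moments of `log |f(z) / z|`, with a slightly larger
radius on the side of the Koebe function. -/
lemma integral_re_sq_le (ha : AnalyticOnNhd ℂ f (ball 0 1))
    (hi : InjOn f (ball 0 1)) (h0 : f 0 = 0) (hd : deriv f 0 = 1)
    (hexp : ∀ z ∈ ball (0 : ℂ) 1, z ≠ 0 → cexp (g z) = f z / z)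
    {r s : ℝ} (hr : 0 < r) (hrs : r < s) (hs1 : s < 1) :
    ∫ θ in (-π)..π, (g (circleMap 0 r θ)).re ^ 2 ≤
      ∫ θ in (-π)..π, (koebeLog (circleMap 0 s θ)).re ^ 2 := by
  have hs : 0 < s := hr.trans hrs
  have hρ : 0 < r / s := by positivity
  have hu := isUnivalent_rescale ha hi h0 hd hρ
  have h := hu.integral_log_sq_le
    (by rw [one_div_div, one_lt_div hr]; exact hrs) hs hs1
  have e1 : ∀ θ, Real.log ‖f (((r / s : ℝ) : ℂ) * circleMap 0 s θ) / ((r / s : ℝ) : ℂ)‖ -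
      Real.log s = (g (circleMap 0 r θ)).re := fun θ => by
    have e : ((r / s : ℝ) : ℂ) * circleMap 0 s θ = circleMap 0 r θ := by
      rw [circleMap_zero, circleMap_zero]
      push_cast
      field_simp [ofReal_ne_zero.2 hs.ne']
    have hne : circleMap 0 r θ ≠ 0 := circleMap_ne_center hr.ne'
    rw [e, norm_div, norm_of_exp_eq hne
      (hexp _ (circleMap_mem_unitBall hr.le (hrs.trans hs1) θ) hne), norm_circleMap_zero, norm_real,
      Real.norm_of_nonneg hρ.le, abs_of_pos hr]
    have : r * Real.exp (g (circleMap 0 r θ)).re / (r / s) = s * Real.exp (g (circleMap 0 r θ)).re := by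
      field_simp
    rw [this, Real.log_mul hs.ne' (Real.exp_ne_zero _), Real.log_exp]
    ring
  have e2 : ∀ θ, Real.log ‖koebeFun (circleMap 0 s θ)‖ - Real.log s =
      (koebeLog (circleMap 0 s θ)).re := fun θ => by
    have hne : circleMap 0 s θ ≠ 0 := circleMap_ne_center hs.ne'
    rw [norm_of_exp_eq hne (exp_koebeLog (circleMap_mem_unitBall hs.le hs1 θ) hne),
      norm_circleMap_zero, abs_of_pos hs, Real.log_mul hs.ne' (Real.exp_ne_zero _), Real.log_exp]
    ring
  simp_rw [e1, e2] at h
  exact h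

end

/-- The sum `∑ c n * s ^ (2 * (n + 1))`. -/
noncomputable def radialSum (c : ℕ → ℝ) (s : ℝ) : ℝ := ∑' n, c n * s ^ (2 * (n + 1))

section

variable {c : ℕ → ℝ}

lemma summable_radial (hc0 : ∀ n, 0 ≤ c n) (hc : Summable c) {s : ℝ} (hs : 0 ≤ s) (hs1 : s ≤ 1) :
    Summable fun n => c n * s ^ (2 * (n + 1)) :=
  hc.of_nonneg_of_le (fun n => mul_nonneg (hc0 n) (by positivity))
    fun n => mul_le_of_le_one_right (hc0 n) (pow_le_one₀ hs hs1)

lemma continuousOn_radialSum (hc0 : ∀ n, 0 ≤ c n) (hc : Summable c) :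
    ContinuousOn (radialSum c) (Icc 0 1) := by
  refine continuousOn_tsum (u := c) (fun n => by fun_prop) hc fun n s hs => ?_
  have h1 := hs.1
  rw [Real.norm_of_nonneg (mul_nonneg (hc0 n) (by positivity))]
  exact mul_le_of_le_one_right (hc0 n) (pow_le_one₀ hs.1 hs.2)

lemma hasSum_integral_radialSum (hc0 : ∀ n, 0 ≤ c n) (hc : Summable c) :
    HasSum (fun n : ℕ => 1 / (((n : ℝ) + 1) + 1) * c n) (∫ s in (0 : ℝ)..1, 2 * s * radialSum c s) := by
  have h := hasSum_intervalIntegral zero_le_one (hc.mul_left 2)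
    (p := fun n s => 2 * s * (c n * s ^ (2 * (n + 1)))) (q := fun s => 2 * s * radialSum c s)
    (fun n => by fun_prop)
    (fun n s hs => by
      have h1 := hs.1
      have h2 := hc0 n
      rw [Real.norm_of_nonneg (by positivity)]
      have h3 : c n * s ^ (2 * (n + 1)) ≤ c n :=
        mul_le_of_le_one_right (hc0 n) (pow_le_one₀ hs.1 hs.2)
      have h4 : 0 ≤ c n * s ^ (2 * (n + 1)) := by positivity
      nlinarith [hs.2])
    (fun s hs => (summable_radial hc0 hc hs.1 hs.2).hasSum.mul_left _)
  have e : ∀ n : ℕ, ∫ s in (0 : ℝ)..1, 2 * s * (c n * s ^ (2 * (n + 1))) =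
      1 / (((n : ℝ) + 1) + 1) * c n := fun n => by
    have e1 : ∀ s : ℝ, 2 * s * (c n * s ^ (2 * (n + 1))) = 2 * c n * s ^ (2 * (n + 1) + 1) :=
      fun s => by ring
    simp_rw [e1]
    rw [intervalIntegral.integral_const_mul, integral_pow]
    push_cast
    have : (n : ℝ) + 1 + 1 ≠ 0 := by positivity
    field_simp
    ring
  rw [funext e] at h
  exact h

lemma radialSum_zero_le {d : ℕ → ℝ} (hc0 : ∀ n, 0 ≤ c n) (hc : Summable c) (hd0 : ∀ n, 0 ≤ d n)
    (hd : Summable d) (h : ∀ s ∈ Ioo (0 : ℝ) 1, radialSum d s ≤ radialSum c s) : d 0 ≤ c 0 := by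
  have key : ∀ s ∈ Ioo (0 : ℝ) 1, d 0 ≤ c 0 + s ^ 2 * ∑' n, c (n + 1) := fun s hs => by
    have h0 := hs.1
    have h1 : d 0 * s ^ 2 ≤ radialSum d s := by
      have := (summable_radial hd0 hd hs.1.le hs.2.le).le_tsum 0
        (fun n _ => mul_nonneg (hd0 n) (by positivity))
      simpa [radialSum] using this
    have h2 : radialSum c s ≤ c 0 * s ^ 2 + s ^ 4 * ∑' n, c (n + 1) := by
      rw [radialSum, (summable_radial hc0 hc hs.1.le hs.2.le).tsum_eq_zero_add, ← tsum_mul_left]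
      refine add_le_add (by simp) (Summable.tsum_le_tsum (fun n => ?_)
        ((summable_nat_add_iff 1).2 (summable_radial hc0 hc hs.1.le hs.2.le))
        (((summable_nat_add_iff 1).2 hc).mul_left _))
      rw [mul_comm]
      refine mul_le_mul_of_nonneg_right ?_ (hc0 _)
      exact pow_le_pow_of_le_one h0.le hs.2.le (by omega)
    have h3 := h s hs
    have h4 : 0 < s ^ 2 := by positivity
    refine le_of_mul_le_mul_right ?_ h4
    nlinarith
  have ht : Tendsto (fun s : ℝ => c 0 + s ^ 2 * ∑' n, c (n + 1)) (𝓝[>] 0) (𝓝 (c 0)) := by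
    have : Continuous fun s : ℝ => c 0 + s ^ 2 * ∑' n, c (n + 1) := by fun_prop
    have h2 := this.tendsto 0
    simp only [ne_eq, OfNat.ofNat_ne_zero, not_false_eq_true, zero_pow, zero_mul, add_zero] at h2
    exact h2.mono_left nhdsWithin_le_nhds
  exact ge_of_tendsto ht (by
    filter_upwards [Ioo_mem_nhdsGT one_pos] with s hs using key s hs)

end

/-- The squares `1 / n ^ 2` of the logarithmic coefficients of the Koebe function, indexed from `n = 1`
at `0`. -/
noncomputable def invSq (n : ℕ) : ℝ := 1 / ((n : ℝ) + 1) ^ 2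

lemma invSq_nonneg (n : ℕ) : 0 ≤ invSq n := by unfold invSq; positivity

lemma hasSum_invSq : HasSum invSq (π ^ 2 / 6) := by
  have h := (hasSum_nat_add_iff' 1).2 hasSum_zeta_two
  have e : (fun n : ℕ => 1 / (((n + 1 : ℕ) : ℝ)) ^ 2) = invSq := by
    funext n; simp [invSq]
  rw [e] at h
  simpa using h

lemma hasSum_invSq_div : HasSum (fun n : ℕ => 1 / (((n : ℝ) + 1) + 1) * invSq n) (π ^ 2 / 6 - 1) := by
  have h1 : HasSum (fun n : ℕ => 1 / ((n : ℝ) + 1) - 1 / (((n : ℝ) + 1) + 1)) 1 := by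
    rw [hasSum_iff_tendsto_nat_of_nonneg]
    · have e : ∀ N : ℕ, ∑ n ∈ Finset.range N, (1 / ((n : ℝ) + 1) - 1 / (((n : ℝ) + 1) + 1)) =
          1 - 1 / ((N : ℝ) + 1) := fun N => by
        induction N with
        | zero => simp
        | succ N ih => rw [Finset.sum_range_succ, ih]; push_cast; ring
      simp_rw [e]
      simpa using (tendsto_one_div_add_atTop_nhds_zero_nat (𝕜 := ℝ)).const_sub 1
    · intro n
      have h0 : (0 : ℝ) < (n : ℝ) + 1 := by positivity
      rw [sub_nonneg]
      exact one_div_le_one_div_of_le h0 (by linarith)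
  have h2 := hasSum_invSq.sub h1
  have e : (fun n : ℕ => 1 / (((n : ℝ) + 1) + 1) * invSq n) = fun n : ℕ =>
      invSq n - (1 / ((n : ℝ) + 1) - 1 / (((n : ℝ) + 1) + 1)) := by
    funext n
    unfold invSq
    have h0 : (n : ℝ) + 1 ≠ 0 := by positivity
    have h0 : (n : ℝ) + 1 + 1 ≠ 0 := by positivity
    field_simp
    ring
  rw [e]
  exact h2

section

variable {f g : ℂ → ℂ} {γ : ℕ → ℂ}

/-- The comparison of second moments in terms of coefficients: `∑ |γ n|² s ^ (2 n) ≤ ∑ s ^ (2 n) / n²`,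
for partial sums on the left. -/
lemma sum_le_radialSum (ha : AnalyticOnNhd ℂ f (ball 0 1))
    (hi : InjOn f (ball 0 1)) (h0 : f 0 = 0) (hd : deriv f 0 = 1)
    (hg : AnalyticOnNhd ℂ g (ball 0 1)) (hg0 : g 0 = 0)
    (hexp : ∀ z ∈ ball (0 : ℂ) 1, z ≠ 0 → cexp (g z) = f z / z)
    (hγ : ∀ n, taylorCoeff g (n + 1) = 2 * γ (n + 1))
    {s : ℝ} (hs : 0 < s) (hs1 : s < 1) (N : ℕ) :
    ∑ n ∈ Finset.range N, ‖γ (n + 1)‖ ^ 2 * s ^ (2 * (n + 1)) ≤ radialSum invSq s := by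
  have key : ∀ r ∈ Ioo 0 s,
      ∑ n ∈ Finset.range N, ‖γ (n + 1)‖ ^ 2 * r ^ (2 * (n + 1)) ≤ radialSum invSq s := by
    intro r hr
    have hr0 := hr.1
    have h1 := (hasCoeffs_taylorCoeff hg).hasSum_re_sq hg (by simp [taylorCoeff, hg0]) hr.1.le
      (hr.2.trans hs1)
    have h2 := hasCoeffs_koebeLog.hasSum_re_sq analyticOnNhd_koebeLog (by simp) hs.le hs1
    have h3 := integral_re_sq_le ha hi h0 hd hexp hr.1 hr.2 hs1
    have h4 := sum_le_hasSum (Finset.range N) (fun n _ => by positivity) h1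
    have e1 : ∀ n, π * (‖taylorCoeff g (n + 1)‖ ^ 2 * r ^ (2 * (n + 1))) =
        4 * π * (‖γ (n + 1)‖ ^ 2 * r ^ (2 * (n + 1))) := fun n => by
      rw [hγ, norm_mul, Complex.norm_ofNat]; ring
    have e2 : (fun n : ℕ => π * (‖(2 : ℂ) / ((n + 1 : ℕ) : ℂ)‖ ^ 2 * s ^ (2 * (n + 1)))) =
        fun n => 4 * π * (invSq n * s ^ (2 * (n + 1))) := by
      funext n
      rw [norm_div, Complex.norm_ofNat, Complex.norm_natCast, invSq, div_pow]
      push_cast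
      ring
    rw [e2] at h2
    simp_rw [e1] at h4
    rw [← Finset.mul_sum] at h4
    have h5 := h2.unique ((summable_radial invSq_nonneg hasSum_invSq.summable hs.le
      hs1.le).hasSum.mul_left (4 * π))
    rw [h5] at h3
    exact le_of_mul_le_mul_left (h4.trans h3) (by positivity)
  have ht : Tendsto (fun r : ℝ => ∑ n ∈ Finset.range N, ‖γ (n + 1)‖ ^ 2 * r ^ (2 * (n + 1)))
      (𝓝[<] s) (𝓝 (∑ n ∈ Finset.range N, ‖γ (n + 1)‖ ^ 2 * s ^ (2 * (n + 1)))) := by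
    have : Continuous fun r : ℝ =>
        ∑ n ∈ Finset.range N, ‖γ (n + 1)‖ ^ 2 * r ^ (2 * (n + 1)) := by fun_prop
    exact (this.tendsto s).mono_left nhdsWithin_le_nhds
  exact le_of_tendsto ht (by filter_upwards [Ioo_mem_nhdsLT hs] with r hr using key r hr)

lemma summable_of_sum_le_radialSum
    (h : ∀ s ∈ Ioo (0 : ℝ) 1, ∀ N : ℕ,
      ∑ n ∈ Finset.range N, ‖γ (n + 1)‖ ^ 2 * s ^ (2 * (n + 1)) ≤ radialSum invSq s) :
    Summable fun n => ‖γ (n + 1)‖ ^ 2 := by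
  refine summable_of_sum_range_le (c := ∑' n, invSq n) (fun n => by positivity) fun N => ?_
  have ht : Tendsto (fun r : ℝ => ∑ n ∈ Finset.range N, ‖γ (n + 1)‖ ^ 2 * r ^ (2 * (n + 1)))
      (𝓝[<] 1) (𝓝 (∑ n ∈ Finset.range N, ‖γ (n + 1)‖ ^ 2)) := by
    have : Continuous fun r : ℝ =>
        ∑ n ∈ Finset.range N, ‖γ (n + 1)‖ ^ 2 * r ^ (2 * (n + 1)) := by fun_prop
    have h2 := this.tendsto 1
    simp only [one_pow, mul_one] at h2
    exact h2.mono_left nhdsWithin_le_nhds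
  refine le_of_tendsto ht ?_
  filter_upwards [Ioo_mem_nhdsLT one_pos] with s hs
  refine (h s hs N).trans (Summable.tsum_le_tsum (fun n => ?_)
    (summable_radial invSq_nonneg hasSum_invSq.summable hs.1.le hs.2.le) hasSum_invSq.summable)
  exact mul_le_of_le_one_right (invSq_nonneg n) (pow_le_one₀ hs.1.le hs.2.le)

/-- Integrating the comparison of radial sums against `2 s ds` gives the inequality. In the case of
equality the radial sums coincide by continuity, and so do their leading coefficients. -/
lemma tsum_le_of_radialSum_le {c : ℕ → ℝ} (hc0 : ∀ n, 0 ≤ c n) (hc : Summable c)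
    (h : ∀ s ∈ Ioo (0 : ℝ) 1, radialSum c s ≤ radialSum invSq s) :
    (∑' n : ℕ, (1 / (((n : ℝ) + 1) + 1)) * c n ≤ π ^ 2 / 6 - 1) ∧
    (∑' n : ℕ, (1 / (((n : ℝ) + 1) + 1)) * c n = π ^ 2 / 6 - 1 → c 0 = 1) := by
  have hI := hasSum_integral_radialSum hc0 hc
  have hJ := hasSum_integral_radialSum invSq_nonneg hasSum_invSq.summable
  rw [hI.tsum_eq, ← hJ.unique hasSum_invSq_div]
  have hcc : ContinuousOn (fun s => 2 * s * radialSum c s) (Icc 0 1) :=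
    (by fun_prop : ContinuousOn (fun s : ℝ => 2 * s) (Icc 0 1)).fun_mul (continuousOn_radialSum hc0 hc)
  have hdc : ContinuousOn (fun s => 2 * s * radialSum invSq s) (Icc 0 1) :=
    (by fun_prop : ContinuousOn (fun s : ℝ => 2 * s) (Icc 0 1)).fun_mul
      (continuousOn_radialSum invSq_nonneg hasSum_invSq.summable)
  have hle1 : ∀ s ∈ Ioo (0 : ℝ) 1, 2 * s * radialSum c s ≤ 2 * s * radialSum invSq s :=
    fun s hs => mul_le_mul_of_nonneg_left (h s hs) (by linarith [hs.1])
  have hle : ∀ s ∈ Icc (0 : ℝ) 1, 2 * s * radialSum c s ≤ 2 * s * radialSum invSq s := by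
    have hcl : closure (Ioo (0 : ℝ) 1) = Icc 0 1 := closure_Ioo zero_ne_one
    intro s hs
    refine le_on_closure hle1 (by rwa [hcl]) (by rwa [hcl]) (by rwa [hcl])
  refine ⟨?_, fun heq => ?_⟩
  · exact intervalIntegral.integral_mono_on zero_le_one
      (hcc.intervalIntegrable_of_Icc zero_le_one) (hdc.intervalIntegrable_of_Icc zero_le_one) hle
  · have hge : ∀ s ∈ Ioo (0 : ℝ) 1, radialSum invSq s ≤ radialSum c s := by
      by_contra! hcon
      obtain ⟨s, hs, hlt⟩ := hcon
      have := intervalIntegral.integral_lt_integral_of_continuousOn_of_le_of_exists_lt zero_lt_one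
        hcc hdc (fun s hs => hle s (Ioc_subset_Icc_self hs))
        ⟨s, Ioo_subset_Icc_self hs, mul_lt_mul_of_pos_left hlt (by linarith [hs.1])⟩
      exact this.ne heq
    have h1 := radialSum_zero_le hc0 hc invSq_nonneg hasSum_invSq.summable hge
    have h2 := radialSum_zero_le invSq_nonneg hasSum_invSq.summable hc0 hc h
    have e : invSq 0 = 1 := by simp [invSq]
    rw [e] at h1 h2
    exact le_antisymm h2 h1

/-! ### The equality case -/

/-- The area theorem: if `β` are the coefficients of `(z / f z) ^ (1 / 2)`, then
`∑ |β n|² r ^ (2 n - 1)` does not increase with `r`. -/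
lemma area_le (ha : AnalyticOnNhd ℂ f (ball 0 1))
    (hi : InjOn f (ball 0 1)) (h0 : f 0 = 0) (hd : deriv f 0 = 1)
    {b : ℂ → ℂ} {β : ℕ → ℂ} (hb : AnalyticOnNhd ℂ b (ball 0 1)) (hβ : HasCoeffs b β)
    (hexp : ∀ z ∈ ball (0 : ℂ) 1, z ≠ 0 → ‖b z‖ ^ 2 = ‖z‖ * ‖f z‖⁻¹)
    {r₁ r₂ : ℝ} (h₁ : 0 < r₁) (h₁₂ : r₁ < r₂) (h₂ : r₂ < 1) :
    r₂⁻¹ * ∑' n, ‖β n‖ ^ 2 * r₂ ^ (2 * n) ≤ r₁⁻¹ * ∑' n, ‖β n‖ ^ 2 * r₁ ^ (2 * n) := by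
  have hr₂ : 0 < r₂ := h₁.trans h₁₂
  have hu := isUnivalent_rescale ha hi h0 hd hr₂
  have h := hu.integral_inv_norm_le (s := r₁ / r₂) (by rw [one_lt_div hr₂]; exact h₂)
    (by positivity) (by rw [div_lt_one hr₂]; exact h₁₂)
  have e : ∀ r, 0 < r → r < 1 → ∫ θ in (-π)..π,
      ‖f ((r₂ : ℂ) * circleMap 0 (r / r₂) θ) / (r₂ : ℂ)‖⁻¹ =
      2 * π * r₂ * (r⁻¹ * ∑' n, ‖β n‖ ^ 2 * r ^ (2 * n)) := fun r hr hr1 => by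
    have h3 := (hβ.hasSum_sq hb hr.le hr1).tsum_eq
    rw [tsum_mul_left] at h3
    have e2 : ∀ θ, ‖f ((r₂ : ℂ) * circleMap 0 (r / r₂) θ) / (r₂ : ℂ)‖⁻¹ =
        r₂ * r⁻¹ * ‖b (circleMap 0 r θ)‖ ^ 2 := fun θ => by
      have e : (r₂ : ℂ) * circleMap 0 (r / r₂) θ = circleMap 0 r θ := by
        rw [circleMap_zero, circleMap_zero]
        push_cast
        field_simp [ofReal_ne_zero.2 hr₂.ne']
      rw [e, hexp _ (circleMap_mem_unitBall hr.le hr1 θ) (circleMap_ne_center hr.ne'), norm_div,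
        norm_real, Real.norm_of_nonneg hr₂.le, norm_circleMap_zero, abs_of_pos hr, inv_div]
      field_simp
    simp_rw [e2]
    rw [intervalIntegral.integral_const_mul, ← h3]
    ring
  have e1 := e r₂ hr₂ h₂
  rw [div_self hr₂.ne'] at e1
  have e2 := e r₁ h₁ (h₁₂.trans h₂)
  rw [e1, e2] at h
  exact le_of_mul_le_mul_left h (by positivity)

/-- In the area theorem the two leading terms already account for everything when
`|β 0| = |β 1| = 1`. -/
lemma coeff_eq_zero_of_area {c : ℕ → ℝ} (hc0 : ∀ n, 0 ≤ c n)
    (hs : ∀ r ∈ Ioo (0 : ℝ) 1, Summable fun n => c n * r ^ (2 * n))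
    (h : ∀ r₁ r₂ : ℝ, 0 < r₁ → r₁ < r₂ → r₂ < 1 →
      r₂⁻¹ * ∑' n, c n * r₂ ^ (2 * n) ≤ r₁⁻¹ * ∑' n, c n * r₁ ^ (2 * n))
    (h0 : c 0 = 1) (h1 : c 1 = 1) (n : ℕ) : c (n + 2) = 0 := by
  -- the tail `∑ c (n + 2) r ^ (2 n + 3)`, and the comparison of tails at two radii
  have split : ∀ r ∈ Ioo (0 : ℝ) 1, r⁻¹ * ∑' n, c n * r ^ (2 * n) =
      r⁻¹ + r + ∑' n, c (n + 2) * r ^ (2 * n + 3) := fun r hr => by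
    have hr0 := hr.1.ne'
    rw [← (hs r hr).sum_add_tsum_nat_add 2, Finset.sum_range_succ, Finset.sum_range_one, h0, h1,
      mul_add, ← tsum_mul_left]
    congr 1
    · field_simp
      ring
    · refine tsum_congr fun m => ?_
      rw [show 2 * (m + 2) = (2 * m + 3) + 1 by ring, pow_succ]
      field_simp
  have hsum : ∀ r ∈ Ioo (0 : ℝ) 1, Summable fun n => c (n + 2) * r ^ (2 * n + 3) := fun r hr => by
    have hr0 := hr.1.ne'
    refine (((summable_nat_add_iff 2).2 (hs r hr)).mul_left r⁻¹).congr fun m => ?_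
    rw [show 2 * (m + 2) = (2 * m + 3) + 1 by ring, pow_succ]
    field_simp
  have key : ∀ r₁ r₂ : ℝ, 0 < r₁ → r₁ < r₂ → r₂ < 1 →
      c (n + 2) * (r₂ ^ (2 * n + 3) - r₁ ^ (2 * n + 3)) ≤ r₁⁻¹ + r₁ - r₂⁻¹ - r₂ := by
    intro r₁ r₂ p₁ p₁₂ p₂
    have m₁ : r₁ ∈ Ioo (0 : ℝ) 1 := ⟨p₁, p₁₂.trans p₂⟩
    have m₂ : r₂ ∈ Ioo (0 : ℝ) 1 := ⟨p₁.trans p₁₂, p₂⟩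
    have h3 := h r₁ r₂ p₁ p₁₂ p₂
    rw [split r₁ m₁, split r₂ m₂] at h3
    have h4 := ((hsum r₂ m₂).sub (hsum r₁ m₁)).le_tsum n fun m _ => by
      rw [← mul_sub]
      exact mul_nonneg (hc0 _) (sub_nonneg.2 (pow_le_pow_left₀ p₁.le p₁₂.le _))
    rw [(hsum r₂ m₂).tsum_sub (hsum r₁ m₁)] at h4
    rw [mul_sub]
    linarith
  -- the limit `r₂ → 1`
  have key2 : ∀ r ∈ Ioo (0 : ℝ) 1, c (n + 2) ≤ (1 - r) / r := fun r hr => by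
    have hr0 := hr.1
    have ht : Tendsto (fun x : ℝ => c (n + 2) * (x ^ (2 * n + 3) - r ^ (2 * n + 3)))
        (𝓝[<] 1) (𝓝 (c (n + 2) * (1 - r ^ (2 * n + 3)))) := by
      have : Continuous fun x : ℝ => c (n + 2) * (x ^ (2 * n + 3) - r ^ (2 * n + 3)) := by fun_prop
      have h2 := this.tendsto 1
      rw [one_pow] at h2
      exact h2.mono_left nhdsWithin_le_nhds
    have ht2 : Tendsto (fun x : ℝ => r⁻¹ + r - x⁻¹ - x)
        (𝓝[<] 1) (𝓝 (r⁻¹ + r - 1 - 1)) := by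
      have : ContinuousAt (fun x : ℝ => r⁻¹ + r - x⁻¹ - x) 1 :=
        ((continuousAt_const.sub (continuousAt_inv₀ one_ne_zero)).sub continuousAt_id)
      have h2 := this.tendsto
      rw [inv_one] at h2
      exact h2.mono_left nhdsWithin_le_nhds
    have h3 := le_of_tendsto_of_tendsto ht ht2 (by
      filter_upwards [Ioo_mem_nhdsLT hr.2] with x hx using key r x hr.1 hx.1 hx.2)
    have h4 : r ^ (2 * n + 3) ≤ r := pow_le_of_le_one hr.1.le hr.2.le (by omega)
    have h5 : c (n + 2) * (1 - r) ≤ r⁻¹ + r - 1 - 1 :=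
      (mul_le_mul_of_nonneg_left (by linarith) (hc0 _)).trans h3
    have h6 : r⁻¹ + r - 1 - 1 = (1 - r) / r * (1 - r) := by field_simp; ring
    rw [h6] at h5
    exact le_of_mul_le_mul_right h5 (by linarith [hr.2])
  have ht : Tendsto (fun r : ℝ => (1 - r) / r) (𝓝[<] 1) (𝓝 0) := by
    have : ContinuousAt (fun r : ℝ => (1 - r) / r) 1 :=
      (continuousAt_const.sub continuousAt_id).div continuousAt_id one_ne_zero
    have h2 := this.tendsto
    rw [sub_self, zero_div] at h2
    exact h2.mono_left nhdsWithin_le_nhds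
  exact le_antisymm (ge_of_tendsto ht (by
    filter_upwards [Ioo_mem_nhdsLT one_pos] with r hr using key2 r hr)) (hc0 _)

/-- Equality in `|γ 1| ≤ 1` holds only for rotations of the Koebe function. -/
lemma eqOn_of_norm_eq_one (ha : AnalyticOnNhd ℂ f (ball 0 1))
    (hi : InjOn f (ball 0 1)) (h0 : f 0 = 0) (hd : deriv f 0 = 1)
    (hg : AnalyticOnNhd ℂ g (ball 0 1)) (hg0 : g 0 = 0)
    (hexp : ∀ z ∈ ball (0 : ℂ) 1, z ≠ 0 → cexp (g z) = f z / z)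
    {w : ℂ} (hw : deriv g 0 = 2 * w) (hw1 : ‖w‖ = 1) :
    EqOn f (fun z => z / (1 - w * z) ^ 2) (ball 0 1) := by
  have h0m : (0 : ℂ) ∈ ball (0 : ℂ) 1 := mem_ball_self one_pos
  set b : ℂ → ℂ := fun z => cexp (-(1 / 2) * g z) with hbdef
  have hb : AnalyticOnNhd ℂ b (ball 0 1) := fun z hz =>
    (analyticAt_const.fun_mul (hg z hz)).cexp
  have hβ := hasCoeffs_taylorCoeff hb
  have hbsq : ∀ z, b z ^ 2 * cexp (g z) = 1 := fun z => by
    have e : -(1 / 2) * g z + -(1 / 2) * g z + g z = 0 := by ring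
    rw [hbdef, sq, ← Complex.exp_add, ← Complex.exp_add, e, Complex.exp_zero]
  have hnorm : ∀ z ∈ ball (0 : ℂ) 1, z ≠ 0 → ‖b z‖ ^ 2 = ‖z‖ * ‖f z‖⁻¹ := fun z hz hz0 => by
    have h1 := congrArg norm (hbsq z)
    rw [norm_mul, norm_pow, norm_one, hexp z hz hz0, norm_div] at h1
    rw [eq_comm, ← div_eq_mul_inv, ← inv_div]
    exact (eq_inv_of_mul_eq_one_left h1).symm
  have hβ0 : taylorCoeff b 0 = 1 := by simp [taylorCoeff, hbdef, hg0]
  have hβ1 : taylorCoeff b 1 = -w := by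
    have h1 : HasDerivAt b (cexp (-(1 / 2) * g 0) * (-(1 / 2) * deriv g 0)) 0 :=
      ((hg 0 h0m).differentiableAt.hasDerivAt.const_mul (-(1 / 2) : ℂ)).cexp
    simp only [taylorCoeff, Nat.factorial_one, Nat.cast_one, inv_one, one_mul, iteratedDeriv_one]
    rw [h1.deriv, hg0, hw]
    simp
  have hz : ∀ n, taylorCoeff b (n + 2) = 0 := fun n => by
    have h1 := coeff_eq_zero_of_area (c := fun n => ‖taylorCoeff b n‖ ^ 2) (fun n => by positivity)
      (fun r hr => by
        have h2 := (hβ.hasSum_sq hb hr.1.le hr.2).summable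
        exact (summable_mul_left_iff (by positivity)).1 h2)
      (fun r₁ r₂ p₁ p₁₂ p₂ => area_le ha hi h0 hd hb hβ hnorm p₁ p₁₂ p₂)
      (by simp [hβ0]) (by simp [hβ1, hw1]) n
    simpa using h1
  intro z hzm
  have hbz : b z = 1 - w * z := by
    refine (hβ z hzm).unique ?_
    have h1 := hasSum_sum_of_ne_finset_zero (f := fun n => taylorCoeff b n * z ^ n)
      (s := Finset.range 2) (L := SummationFilter.unconditional ℕ) (fun n hn => by
        obtain ⟨m, rfl⟩ : ∃ m, n = m + 2 :=
          ⟨n - 2, by rw [Finset.mem_range, not_lt] at hn; omega⟩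
        rw [hz, zero_mul])
    have e : ∑ n ∈ Finset.range 2, taylorCoeff b n * z ^ n = 1 - w * z := by
      rw [Finset.sum_range_succ, Finset.sum_range_one, hβ0, hβ1]; ring
    rwa [e] at h1
  by_cases hz0 : z = 0
  · simp [hz0, h0]
  · have h1 := hbsq z
    rw [hexp z hzm hz0, hbz] at h1
    have h2 : (1 - w * z) ≠ 0 := by
      intro e
      rw [e] at h1
      simp at h1
    field_simp at h1 ⊢
    linear_combination h1

end

end

theorem logcoeff_one_over_n_add_one
    (f : ℂ → ℂ) (γ : ℕ → ℂ) (hf : InClassS f) (hγ : IsLogCoeffs f γ) :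
    (∑' n : ℕ, (1 / (((n : ℝ) + 1) + 1)) * ‖γ (n + 1)‖ ^ 2 ≤ Real.pi ^ 2 / 6 - 1) ∧
    (∑' n : ℕ, (1 / (((n : ℝ) + 1) + 1)) * ‖γ (n + 1)‖ ^ 2 = Real.pi ^ 2 / 6 - 1 → IsKoebeRotation f) := by
  obtain ⟨ha, hi, h0, hd⟩ := hf
  obtain ⟨g, hg, hg0, hexp, hcoeff⟩ := hγ
  have hc : ∀ n, taylorCoeff g (n + 1) = 2 * γ (n + 1) := fun n => by
    have hne : ((n + 1).factorial : ℂ) ≠ 0 := by exact_mod_cast (n + 1).factorial_ne_zero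
    rw [taylorCoeff, hcoeff (n + 1) (by omega), inv_mul_cancel_left₀ hne]
  have hle : ∀ s ∈ Set.Ioo (0 : ℝ) 1, ∀ N : ℕ,
      ∑ n ∈ Finset.range N, ‖γ (n + 1)‖ ^ 2 * s ^ (2 * (n + 1)) ≤ radialSum invSq s :=
    fun s hs N => sum_le_radialSum ha hi h0 hd hg hg0 hexp hc hs.1 hs.2 N
  have hsum : Summable fun n => ‖γ (n + 1)‖ ^ 2 := summable_of_sum_le_radialSum hle
  have hpos : ∀ n, 0 ≤ ‖γ (n + 1)‖ ^ 2 := fun n => by positivity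
  have hrad : ∀ s ∈ Set.Ioo (0 : ℝ) 1,
      radialSum (fun n => ‖γ (n + 1)‖ ^ 2) s ≤ radialSum invSq s := fun s hs =>
    Real.tsum_le_of_sum_range_le (fun n => mul_nonneg (hpos n) (pow_nonneg hs.1.le _)) (hle s hs)
  obtain ⟨h1, h2⟩ := tsum_le_of_radialSum_le hpos hsum hrad
  refine ⟨h1, fun heq => ?_⟩
  have hn : ‖γ 1‖ = 1 := by
    have h3 : ‖γ 1‖ ^ 2 = 1 := h2 heq
    exact (pow_eq_one_iff_of_nonneg (norm_nonneg _) two_ne_zero).1 h3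
  have hder : deriv g 0 = 2 * γ 1 := by
    rw [← iteratedDeriv_one, hcoeff 1 le_rfl]; simp
  obtain ⟨θ, hθ⟩ := (Complex.norm_eq_one_iff (γ 1)).1 hn
  refine ⟨θ, ?_⟩
  rw [hθ]
  exact eqOn_of_norm_eq_one ha hi h0 hd hg hg0 hexp hder hn
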